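/- arXiv:1909.04085 — 4 statements merged into one kernel-verified Lean document; each statement's English description precedes it below -/
import Mathlib

section
/- Let a₁, a₂, a₃ ∈ ℂ, let p(z,w) = a₃w³ + a₂zw² + a₁z²w, let S = {(z, p(z, z̄)) : z ∈ ℂ} ⊆ ℂ², and let Φ : ℂ² → ℂ² be defined by Φ(z,w) = (z, p(z,w)). Then Φ⁻¹(S) is the union of three totally-real planes (i.e., there exist three real-linear subspaces R₁, R₂, R₃ of ℂ², each of real dimension 2 and each satisfying Rⱼ ∩ iRⱼ = {0}, with Φ⁻¹(S) = R₁ ∪ R₂ ∪ R₃) if and only if a₂² = 3a₁a₃ and a₃ ≠ 0. -/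
open Complex ComplexConjugate

/-- A totally-real plane in `ℂ²`: a real-linear subspace of real dimension 2
with `R ∩ iR = {0}`. -/
def TotallyRealPlane2 (R : Submodule ℝ (ℂ × ℂ)) : Prop :=
  Module.finrank ℝ R = 2 ∧
    (R : Set (ℂ × ℂ)) ∩ ((fun v => Complex.I • v) '' (R : Set (ℂ × ℂ))) = {0}

lemma aux_line (R : Submodule ℝ (ℂ × ℂ)) (h : TotallyRealPlane2 R) (u v : ℂ)
    (hu : ((0 : ℂ), u) ∈ R) (hv : ((0 : ℂ), v) ∈ R) : u.re * v.im - u.im * v.re = 0 := by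
  have h2 := h.2
  have hm : ((u.re * u.re + u.im * u.im) • ((0 : ℂ), v) - (u.re * v.re + u.im * v.im) • ((0 : ℂ), u)) ∈ R :=
    R.sub_mem (R.smul_mem _ hv) (R.smul_mem _ hu)
  have hn : (u.re * v.im - u.im * v.re) • ((0 : ℂ), u) ∈ R := R.smul_mem _ hu
  have he : ((u.re * u.re + u.im * u.im) • ((0 : ℂ), v) - (u.re * v.re + u.im * v.im) • ((0 : ℂ), u))
      = Complex.I • ((u.re * v.im - u.im * v.re) • ((0 : ℂ), u)) := by
    apply Prod.ext
    · simp
    · apply Complex.ext <;> simp <;> ring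
  have h0 : Complex.I • ((u.re * v.im - u.im * v.re) • ((0 : ℂ), u)) ∈ ({0} : Set (ℂ × ℂ)) := by
    rw [← h2]
    exact ⟨by rw [← he]; exact hm, _, hn, rfl⟩
  simp only [Set.mem_singleton_iff, smul_eq_zero, Complex.I_ne_zero, false_or, Prod.mk_eq_zero, true_and] at h0
  rcases h0 with h0 | h0
  · exact h0
  · simp [h0]

lemma aux_graph (R : Submodule ℝ (ℂ × ℂ)) (h : Module.finrank ℝ R = 2)
    (h0 : ∀ w : ℂ, ((0 : ℂ), w) ∈ R → w = 0) :
    ∃ α β : ℂ, ∀ z w : ℂ, (z, w) ∈ R ↔ w = α * z + β * conj z := by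
  let f : R →ₗ[ℝ] ℂ := (LinearMap.fst ℝ ℂ ℂ).comp R.subtype
  have hinj : Function.Injective f := by
    rw [← LinearMap.ker_eq_bot, LinearMap.ker_eq_bot']
    rintro ⟨⟨z, w⟩, hm⟩ hz
    have hz' : z = 0 := hz
    subst hz'
    have := h0 w hm
    subst this
    rfl
  have hfr : Module.finrank ℝ R = Module.finrank ℝ ℂ := by
    rw [h, Complex.finrank_real_complex]
  have hsurj : Function.Surjective f :=
    (LinearMap.injective_iff_surjective_of_finrank_eq_finrank hfr).1 hinj
  obtain ⟨⟨⟨z1, g1⟩, hm1⟩, e1⟩ := hsurj 1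
  obtain ⟨⟨⟨z2, g2⟩, hm2⟩, e2⟩ := hsurj Complex.I
  have e1' : z1 = 1 := e1
  have e2' : z2 = Complex.I := e2
  subst e1' e2'
  have key : ∀ z : ℂ, (z, (g1 - I * g2) / 2 * z + (g1 + I * g2) / 2 * conj z) ∈ R := by
    intro z
    have : (z, (g1 - I * g2) / 2 * z + (g1 + I * g2) / 2 * conj z) =
        z.re • ((1 : ℂ), g1) + z.im • (Complex.I, g2) := by
      apply Prod.ext
      · simp
      · apply Complex.ext <;> simp <;> ring
    rw [this]
    exact R.add_mem (R.smul_mem _ hm1) (R.smul_mem _ hm2)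
  refine ⟨(g1 - I * g2) / 2, (g1 + I * g2) / 2, fun z w => ⟨fun hw => ?_, fun hw => hw ▸ key z⟩⟩
  have := R.sub_mem hw (key z)
  rw [Prod.mk_sub_mk, sub_self] at this
  exact sub_eq_zero.1 (h0 _ this)

lemma aux_cubic (c0 c1 c2 c3 : ℂ)
    (h : ∀ z : ℂ, c0 * z ^ 3 + c1 * z ^ 2 * conj z + c2 * z * conj z ^ 2 + c3 * conj z ^ 3 = 0) :
    c0 = 0 ∧ c1 = 0 ∧ c2 = 0 ∧ c3 = 0 := by
  have hI : I ^ 2 = -1 := Complex.I_sq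
  have h1 := h 1
  have h2 := h I
  have h3 := h (1 + I)
  have h4 := h (1 - I)
  simp only [map_one, map_add, map_sub, Complex.conj_I] at h1 h2 h3 h4
  have k2 : c0 - c1 + c2 - c3 = 0 := by
    linear_combination I * h2 + (-(c0 - c1 + c2 - c3) * (I^2 - 1)) * hI
  have k3 : c0 - I * c1 - c2 + I * c3 = 0 := by
    have : (1 + I) ^ 3 * (c0 - I * c1 - c2 + I * c3) = 0 := by
      have e : (1 + -I) = -I * (1 + I) := by linear_combination hI
      rw [e] at h3
      linear_combination h3 + (1 + I)^3 * (-c2 + c3 * I) * hI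
    rcases mul_eq_zero.1 this with h | h
    · exfalso
      have := congrArg Complex.re (pow_eq_zero_iff (by norm_num) |>.1 h)
      simp at this
    · exact h
  have k4 : c0 + I * c1 - c2 - I * c3 = 0 := by
    have : (1 - I) ^ 3 * (c0 + I * c1 - c2 - I * c3) = 0 := by
      have e : (1 - -I) = I * (1 - I) := by linear_combination hI
      rw [e] at h4
      linear_combination h4 + (1 - I)^3 * (-c2 - c3 * I) * hI
    rcases mul_eq_zero.1 this with h | h
    · exfalso
      have := congrArg Complex.re (pow_eq_zero_iff (by norm_num) |>.1 h)
      simp at this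
    · exact h
  have d1 : c1 = c3 := by
    have : I * (c1 - c3) = 0 := by linear_combination (k4 - k3) / 2
    rcases mul_eq_zero.1 this with h | h
    · exact absurd h Complex.I_ne_zero
    · exact sub_eq_zero.1 h
  have d0 : c0 = c2 := by linear_combination (k3 + k4) / 2
  subst d1 d0
  have x0 : c0 = 0 := by linear_combination (h1 + k2) / 4
  have x1 : c1 = 0 := by linear_combination (h1 - k2) / 4
  exact ⟨x0, x1, x0, x1⟩

lemma aux_fwd (a₁ a₂ a₃ α β : ℂ) (h3 : a₃ ≠ 0) (hne : ¬ (α = 0 ∧ β = 1))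
    (h : ∀ z : ℂ, a₃ * (α * z + β * conj z) ^ 3 + a₂ * z * (α * z + β * conj z) ^ 2
        + a₁ * z ^ 2 * (α * z + β * conj z)
      = a₃ * (conj z) ^ 3 + a₂ * z * (conj z) ^ 2 + a₁ * z ^ 2 * conj z) :
    a₂ ^ 2 = 3 * a₁ * a₃ := by
  -- A z² + B z z̄ + C z̄²
  obtain ⟨A, hA⟩ : ∃ A, A = a₃ * α ^ 2 + a₂ * α + a₁ := ⟨_, rfl⟩
  obtain ⟨B, hB⟩ : ∃ B, B = 2 * a₃ * α * β + a₃ * α + a₂ * β + a₂ := ⟨_, rfl⟩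
  obtain ⟨C, hC⟩ : ∃ C, C = a₃ * (β ^ 2 + β + 1) := ⟨_, rfl⟩
  obtain ⟨q0, q1, q2, q3⟩ := aux_cubic (α * A) (α * B + (β - 1) * A) (α * C + (β - 1) * B)
    ((β - 1) * C) (fun z => by
      rw [hA, hB, hC]
      linear_combination h z)
  have hABC : A = 0 ∧ B = 0 ∧ C = 0 := by
    by_cases hα : α = 0
    · have hβ : β - 1 ≠ 0 := fun hb => hne ⟨hα, sub_eq_zero.1 hb⟩
      subst hα
      simp only [zero_mul, zero_add, mul_eq_zero, hβ, false_or] at q1 q2 q3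
      exact ⟨q1, q2, q3⟩
    · have a0 : A = 0 := by simpa [hα] using q0
      have b0 : B = 0 := by simpa [hα, a0] using q1
      have c0 : C = 0 := by simpa [hα, b0] using q2
      exact ⟨a0, b0, c0⟩
  obtain ⟨rfl, rfl, rfl⟩ := hABC
  have hb : β ^ 2 + β + 1 = 0 := by
    simpa [h3] using hC.symm
  -- square of B-relation
  have e1 : a₃ * α * (2 * β + 1) = - a₂ * (β + 1) := by linear_combination -hB
  -- multiply by (2β+1): -3 a₃ α = -a₂ (β-1)
  have e2 : 3 * a₃ * α = a₂ * (β - 1) := by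
    linear_combination (-(2 * β + 1)) * e1 + (4 * a₃ * α + 2 * a₂) * hb
  have : 3 * (a₂ ^ 2 - 3 * a₁ * a₃) = 0 := by
    linear_combination 9 * a₃ * hA + (3 * a₃ * α + a₂ * (β - 1) + 3 * a₂) * e2 + a₂ ^ 2 * hb
  rcases mul_eq_zero.1 this with h | h
  · norm_num at h
  · exact sub_eq_zero.1 h

noncomputable def auxMap (α β : ℂ) : ℂ →ₗ[ℝ] ℂ × ℂ where
  toFun z := (z, α * z + β * conj z)
  map_add' x y := by ext <;> simp <;> ring
  map_smul' r x := by ext <;> simp <;> ring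

lemma mem_auxMap (α β z w : ℂ) :
    (z, w) ∈ LinearMap.range (auxMap α β) ↔ w = α * z + β * conj z := by
  simp only [LinearMap.mem_range]
  constructor
  · rintro ⟨y, hy⟩
    have hy' : (y, α * y + β * conj y) = (z, w) := hy
    obtain ⟨rfl, rfl⟩ := Prod.mk.inj hy'
    rfl
  · rintro rfl
    exact ⟨z, rfl⟩

lemma auxMap_plane (α β : ℂ) (hβ : β ≠ 0) :
    TotallyRealPlane2 (LinearMap.range (auxMap α β)) := by
  constructor
  · rw [LinearMap.finrank_range_of_inj, Complex.finrank_real_complex]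
    intro x y hxy
    exact congrArg Prod.fst hxy
  · ext ⟨z, w⟩
    simp only [Set.mem_inter_iff, SetLike.mem_coe, Set.mem_image, Set.mem_singleton_iff]
    constructor
    · rintro ⟨h1, ⟨z', w'⟩, h2, h3⟩
      rw [mem_auxMap] at h1 h2
      simp only [Prod.smul_mk, smul_eq_mul, Prod.mk.injEq] at h3
      obtain ⟨rfl, rfl⟩ := h3
      have : I * 2 * β * conj z' = 0 := by
        rw [map_mul, Complex.conj_I] at h1
        linear_combination h1 - I * h2
      have hz : z' = 0 := by simpa [hβ] using this
      subst hz
      simp at h2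
      simp [h2]
    · intro h
      rw [h]
      exact ⟨Submodule.zero_mem _, 0, Submodule.zero_mem _, by simp⟩

lemma aux_pigeon (A B C : Submodule ℝ (ℂ × ℂ)) (hA : TotallyRealPlane2 A)
    (hB : TotallyRealPlane2 B) (hC : TotallyRealPlane2 C)
    (h : ∀ w : ℂ, ((0 : ℂ), w) ∈ A ∨ ((0 : ℂ), w) ∈ B ∨ ((0 : ℂ), w) ∈ C) : False := by
  have kA := aux_line A hA
  have kB := aux_line B hB
  have kC := aux_line C hC
  have n12 : (1 : ℂ).re * I.im - (1 : ℂ).im * I.re ≠ 0 := by simp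
  have n13 : (1 : ℂ).re * (1 + I).im - (1 : ℂ).im * (1 + I).re ≠ 0 := by simp
  have n14 : (1 : ℂ).re * (1 - I).im - (1 : ℂ).im * (1 - I).re ≠ 0 := by simp
  have n23 : I.re * (1 + I).im - I.im * (1 + I).re ≠ 0 := by simp
  have n24 : I.re * (1 - I).im - I.im * (1 - I).re ≠ 0 := by simp
  have n34 : (1 + I).re * (1 - I).im - (1 + I).im * (1 - I).re ≠ 0 := by simp; norm_num
  have := kA 1 I
  have := kB 1 I
  have := kC 1 I
  have := kA 1 (1 + I)
  have := kB 1 (1 + I)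
  have := kC 1 (1 + I)
  have := kA 1 (1 - I)
  have := kB 1 (1 - I)
  have := kC 1 (1 - I)
  have := kA I (1 + I)
  have := kB I (1 + I)
  have := kC I (1 + I)
  have := kA I (1 - I)
  have := kB I (1 - I)
  have := kC I (1 - I)
  have := kA (1 + I) (1 - I)
  have := kB (1 + I) (1 - I)
  have := kC (1 + I) (1 - I)
  clear kA kB kC hA hB hC
  rcases h 1 with h1 | h1 | h1 <;> rcases h I with h2 | h2 | h2 <;>
  rcases h (1 + I) with h3 | h3 | h3 <;> rcases h (1 - I) with h4 | h4 | h4 <;>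
  clear h <;> simp_all only [not_true_eq_false, forall_const, ne_eq]

/-- With `p(z,w) = a₃w³ + a₂zw² + a₁z²w`, `S = {(z, p(z, z̄)) : z ∈ ℂ}` and
`Φ(z,w) = (z, p(z,w))`, the preimage `Φ⁻¹(S)` is a union of three totally-real planes
iff `a₂² = 3a₁a₃` and `a₃ ≠ 0`. -/
theorem stmt_0 (a₁ a₂ a₃ : ℂ) :
    (∃ R₁ R₂ R₃ : Submodule ℝ (ℂ × ℂ),
        TotallyRealPlane2 R₁ ∧ TotallyRealPlane2 R₂ ∧ TotallyRealPlane2 R₃ ∧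
        (fun zw : ℂ × ℂ =>
            (zw.1, a₃ * zw.2 ^ 3 + a₂ * zw.1 * zw.2 ^ 2 + a₁ * zw.1 ^ 2 * zw.2)) ⁻¹'
            {zw : ℂ × ℂ | ∃ z : ℂ,
              zw = (z, a₃ * (conj z) ^ 3 + a₂ * z * (conj z) ^ 2 + a₁ * z ^ 2 * conj z)} =
          (R₁ : Set (ℂ × ℂ)) ∪ (R₂ : Set (ℂ × ℂ)) ∪ (R₃ : Set (ℂ × ℂ))) ↔
      a₂ ^ 2 = 3 * a₁ * a₃ ∧ a₃ ≠ 0 := by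
  have hset : ∀ R₁ R₂ R₃ : Submodule ℝ (ℂ × ℂ),
      ((fun zw : ℂ × ℂ =>
            (zw.1, a₃ * zw.2 ^ 3 + a₂ * zw.1 * zw.2 ^ 2 + a₁ * zw.1 ^ 2 * zw.2)) ⁻¹'
            {zw : ℂ × ℂ | ∃ z : ℂ,
              zw = (z, a₃ * (conj z) ^ 3 + a₂ * z * (conj z) ^ 2 + a₁ * z ^ 2 * conj z)} =
          (R₁ : Set (ℂ × ℂ)) ∪ (R₂ : Set (ℂ × ℂ)) ∪ (R₃ : Set (ℂ × ℂ))) ↔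
      ∀ z w : ℂ, (a₃ * w ^ 3 + a₂ * z * w ^ 2 + a₁ * z ^ 2 * w =
        a₃ * (conj z) ^ 3 + a₂ * z * (conj z) ^ 2 + a₁ * z ^ 2 * conj z) ↔
        ((z, w) ∈ R₁ ∨ (z, w) ∈ R₂ ∨ (z, w) ∈ R₃) := by
    intro R₁ R₂ R₃
    rw [Set.ext_iff, Prod.forall]
    refine forall_congr' fun z => forall_congr' fun w => ?_
    simp only [Set.mem_preimage, Set.mem_setOf_eq, Prod.mk.injEq, Set.mem_union, SetLike.mem_coe,
      or_assoc, exists_eq_left']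
  constructor
  · rintro ⟨R₁, R₂, R₃, t1, t2, t3, hE⟩
    rw [hset] at hE
    have h3 : a₃ ≠ 0 := by
      intro h0
      refine aux_pigeon R₁ R₂ R₃ t1 t2 t3 fun w => (hE 0 w).1 ?_
      simp [h0]
    refine ⟨?_, h3⟩
    have hz : ∀ w : ℂ, (((0 : ℂ), w) ∈ R₁ ∨ ((0 : ℂ), w) ∈ R₂ ∨ ((0 : ℂ), w) ∈ R₃) → w = 0 := by
      intro w hw
      have := (hE 0 w).2 hw
      simpa [h3] using this
    obtain ⟨α1, β1, g1⟩ := aux_graph R₁ t1.1 fun w hw => hz w (Or.inl hw)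
    obtain ⟨α2, β2, g2⟩ := aux_graph R₂ t2.1 fun w hw => hz w (Or.inr (Or.inl hw))
    obtain ⟨α3, β3, g3⟩ := aux_graph R₃ t3.1 fun w hw => hz w (Or.inr (Or.inr hw))
    by_cases n1 : α1 = 0 ∧ β1 = 1
    · by_cases n2 : α2 = 0 ∧ β2 = 1
      · by_cases n3 : α3 = 0 ∧ β3 = 1
        · exfalso
          obtain ⟨rfl, rfl⟩ := n1
          obtain ⟨rfl, rfl⟩ := n2
          obtain ⟨rfl, rfl⟩ := n3
          have hroot : ∀ z w : ℂ, a₃ * (w ^ 2 + w * conj z + conj z ^ 2) + a₂ * z * (w + conj z)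
              + a₁ * z ^ 2 = 0 → w = conj z := by
            intro z w hw
            have := (hE z w).1 (by linear_combination (w - conj z) * hw)
            simpa [g1, g2, g3] using this
          have hsum : ∀ z : ℂ, 3 * a₃ * conj z + a₂ * z = 0 := by
            intro z
            obtain ⟨s, hs⟩ := IsAlgClosed.exists_pow_nat_eq
              ((a₃ * conj z + a₂ * z) ^ 2 - 4 * a₃ *
                (a₃ * conj z ^ 2 + a₂ * z * conj z + a₁ * z ^ 2)) (n := 2) (by norm_num)
            have r1 := hroot z ((-(a₃ * conj z + a₂ * z) + s) / (2 * a₃)) (by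
              field_simp
              linear_combination hs)
            have r2 := hroot z ((-(a₃ * conj z + a₂ * z) - s) / (2 * a₃)) (by
              field_simp
              linear_combination hs)
            rw [div_eq_iff (by simpa using h3)] at r1 r2
            linear_combination -(r1 + r2) / 2
          have x1 := hsum 1
          have x2 := hsum I
          simp only [map_one, Complex.conj_I] at x1 x2
          apply h3
          linear_combination (x1 + I * x2) / 6 + (3 * a₃ - a₂) / 6 * Complex.I_sq
        · exact aux_fwd a₁ a₂ a₃ α3 β3 h3 n3 fun z =>
            (hE z _).2 (Or.inr (Or.inr ((g3 z _).2 rfl)))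
      · exact aux_fwd a₁ a₂ a₃ α2 β2 h3 n2 fun z =>
          (hE z _).2 (Or.inr (Or.inl ((g2 z _).2 rfl)))
    · exact aux_fwd a₁ a₂ a₃ α1 β1 h3 n1 fun z => (hE z _).2 (Or.inl ((g1 z _).2 rfl))
  · rintro ⟨h, h3⟩
    obtain ⟨s, hs⟩ := IsAlgClosed.exists_pow_nat_eq (-3 : ℂ) (n := 2) (by norm_num)
    obtain ⟨ω, hω⟩ : ∃ ω : ℂ, ω ^ 2 + ω + 1 = 0 := ⟨(-1 + s) / 2, by linear_combination hs / 4⟩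
    have hω0 : ω ≠ 0 := by
      rintro rfl
      simp at hω
    obtain ⟨t, ht⟩ : ∃ t : ℂ, a₂ = 3 * a₃ * t := ⟨a₂ / (3 * a₃), by field_simp⟩
    have h1 : a₁ = 3 * a₃ * t ^ 2 := by
      have : (3 * a₃) * (a₁ - 3 * a₃ * t ^ 2) = 0 := by
        rw [ht] at h
        linear_combination -h
      rcases mul_eq_zero.1 this with h | h
      · simp [h3] at h
      · exact sub_eq_zero.1 h
    refine ⟨_, _, _, auxMap_plane 0 1 one_ne_zero, auxMap_plane ((ω - 1) * t) ω hω0,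
      auxMap_plane ((ω ^ 2 - 1) * t) (ω ^ 2) (pow_ne_zero 2 hω0), ?_⟩
    rw [hset]
    intro z w
    rw [mem_auxMap, mem_auxMap, mem_auxMap, ht, h1]
    have fac : a₃ * w ^ 3 + 3 * a₃ * t * z * w ^ 2 + 3 * a₃ * t ^ 2 * z ^ 2 * w -
        (a₃ * (conj z) ^ 3 + 3 * a₃ * t * z * (conj z) ^ 2 + 3 * a₃ * t ^ 2 * z ^ 2 * conj z) =
        a₃ * ((w - (0 * z + 1 * conj z)) * ((w - ((ω - 1) * t * z + ω * conj z)) *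
          (w - ((ω ^ 2 - 1) * t * z + ω ^ 2 * conj z)))) := by
      obtain ⟨x, hx⟩ : ∃ x, x = w + t * z := ⟨_, rfl⟩
      obtain ⟨y, hy⟩ : ∃ y, y = conj z + t * z := ⟨_, rfl⟩
      have hw : w = x - t * z := by rw [hx]; ring
      have hc : conj z = y - t * z := by rw [hy]; ring
      rw [hc, hw]
      linear_combination (a₃ * (x - y) * (x * y - (ω - 1) * y ^ 2)) * hω
    rw [← sub_eq_zero, fac]
    simp only [mul_eq_zero, h3, false_or, sub_eq_zero]
end

section
/- Let a₁, a₂, a₃ ∈ ℂ with a₃ ≠ 0 and a₂² = 3a₁a₃, let p(z,w) = a₃w³ + a₂zw² + a₁z²w, let S = {(z, p(z, z̄)) : z ∈ ℂ} ⊆ ℂ², and let Φ(z,w) = (z, p(z,w)). Suppose Ψ : ℂ² → ℂ² is a proper holomorphic map of the form Ψ(z,w) = (z, Q(z,w)) with Q a homogeneous holomorphic polynomial, and suppose Ψ⁻¹(S) can be written as the union of three pairwise transverse totally-real planes (three real-linear subspaces R₁, R₂, R₃ of ℂ² of real dimension 2 with Rⱼ ∩ iRⱼ = {0} for each j and Rⱼ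 ∩ Rₖ = {0} for j ≠ k). Then there is an invertible ℂ-linear map L : ℂ² → ℂ² such that Ψ = Φ ∘ L. -/
open Complex ComplexConjugate

/-- uniqueness of the proper holomorphic map pulling `S` back to a union of
three pairwise transverse totally-real planes: any such `Ψ(z,w) = (z, Q(z,w))` with `Q`
a homogeneous holomorphic polynomial equals `Φ` composed with an invertible `ℂ`-linear map. -/
theorem stmt_1 (a₁ a₂ a₃ : ℂ) (ha₃ : a₃ ≠ 0) (ha : a₂ ^ 2 = 3 * a₁ * a₃)
    (Q : MvPolynomial (Fin 2) ℂ) (d : ℕ) (hQ : Q.IsHomogeneous d)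
    (Ψ : ℂ × ℂ → ℂ × ℂ)
    (hΨ : ∀ zw : ℂ × ℂ,
      Ψ zw = (zw.1, MvPolynomial.eval (fun i => if i = 0 then zw.1 else zw.2) Q))
    (hproper : IsProperMap Ψ)
    (R₁ R₂ R₃ : Submodule ℝ (ℂ × ℂ))
    (hR₁ : TotallyRealPlane2 R₁) (hR₂ : TotallyRealPlane2 R₂) (hR₃ : TotallyRealPlane2 R₃)
    (htrans12 : (R₁ : Set (ℂ × ℂ)) ∩ (R₂ : Set (ℂ × ℂ)) = {0})
    (htrans13 : (R₁ : Set (ℂ × ℂ)) ∩ (R₃ : Set (ℂ × ℂ)) = {0})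
    (htrans23 : (R₂ : Set (ℂ × ℂ)) ∩ (R₃ : Set (ℂ × ℂ)) = {0})
    (hpre : Ψ ⁻¹' {zw : ℂ × ℂ | ∃ z : ℂ,
        zw = (z, a₃ * (conj z) ^ 3 + a₂ * z * (conj z) ^ 2 + a₁ * z ^ 2 * conj z)} =
      (R₁ : Set (ℂ × ℂ)) ∪ (R₂ : Set (ℂ × ℂ)) ∪ (R₃ : Set (ℂ × ℂ))) :
    ∃ L : (ℂ × ℂ) ≃ₗ[ℂ] ℂ × ℂ,
      Ψ = (fun zw : ℂ × ℂ =>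
        (zw.1, a₃ * zw.2 ^ 3 + a₂ * zw.1 * zw.2 ^ 2 + a₁ * zw.1 ^ 2 * zw.2)) ∘ ⇑L := by
  have hsub : ∀ v ∈ R₁, MvPolynomial.eval (fun i => if i = 0 then v.1 else v.2) Q =
      a₃ * (conj v.1) ^ 3 + a₂ * v.1 * (conj v.1) ^ 2 + a₁ * v.1 ^ 2 * conj v.1 := by
    intro v hv
    have h1 : v ∈ Ψ ⁻¹' {zw : ℂ × ℂ | ∃ z : ℂ,
        zw = (z, a₃ * (conj z) ^ 3 + a₂ * z * (conj z) ^ 2 + a₁ * z ^ 2 * conj z)} := by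
      rw [hpre]; exact Or.inl (Or.inl hv)
    obtain ⟨z, hz⟩ := h1
    rw [hΨ] at hz
    have h2 := congrArg Prod.fst hz
    have h3 := congrArg Prod.snd hz
    simp only at h2 h3
    rw [h3, h2]
  have hvert : ∀ v ∈ R₁, v.1 = 0 → v = 0 := by
    intro v hv h0
    by_contra hne
    have hc : IsCompact (Ψ ⁻¹' {0}) := hproper.isCompact_preimage isCompact_singleton
    obtain ⟨M, hM⟩ := hc.isBounded.exists_norm_le
    have hpos : 0 < ‖v‖ := norm_pos_iff.mpr hne
    have hmem : ((|M| + 1) / ‖v‖) • v ∈ Ψ ⁻¹' {0} := by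
      have h1 := hsub _ (R₁.smul_mem ((|M| + 1) / ‖v‖) hv)
      simp only [Set.mem_preimage, Set.mem_singleton_iff]
      rw [hΨ, h1]
      simp [h0]
    have h2 := hM _ hmem
    rw [norm_smul, Real.norm_of_nonneg (by positivity), div_mul_cancel₀ _ hpos.ne'] at h2
    linarith [le_abs_self M]
  let π : R₁ →ₗ[ℝ] ℂ := (LinearMap.fst ℝ ℂ ℂ).comp R₁.subtype
  have hπinj : Function.Injective π := by
    rw [injective_iff_map_eq_zero]
    intro v hv
    exact Subtype.ext (hvert v.1 v.2 hv)
  have : FiniteDimensional ℝ R₁ := inferInstance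
  have hπsurj : Function.Surjective π :=
    (LinearMap.injective_iff_surjective_of_finrank_eq_finrank
      (by rw [hR₁.1, Complex.finrank_real_complex])).1 hπinj
  obtain ⟨u, hu⟩ := hπsurj 1
  obtain ⟨v, hv⟩ := hπsurj Complex.I
  obtain ⟨⟨u1, b⟩, huR⟩ := u
  obtain ⟨⟨v1, c⟩, hvR⟩ := v
  change u1 = 1 at hu
  change v1 = Complex.I at hv
  subst hu hv
  obtain ⟨α, hα⟩ : ∃ α, α = (b - I * c) / 2 := ⟨_, rfl⟩
  obtain ⟨β, hβ⟩ : ∃ β, β = (b + I * c) / 2 := ⟨_, rfl⟩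
  have hb : b = α + β := by rw [hα, hβ]; ring
  have hcc : c = I * (α - β) := by
    rw [hα, hβ]; linear_combination c * I_mul_I
  have hβ0 : β ≠ 0 := by
    intro h0
    have hmem : ((I, c) : ℂ × ℂ) ∈
        (R₁ : Set (ℂ × ℂ)) ∩ ((fun v => Complex.I • v) '' (R₁ : Set (ℂ × ℂ))) := by
      refine ⟨hvR, (1, b), huR, ?_⟩
      simp [hb, hcc, h0]
    rw [hR₁.2] at hmem
    simp at hmem
  have hgraph : ∀ x y : ℝ, ((x + y * I : ℂ), α * (x + y * I) + β * (x - y * I)) ∈ R₁ := by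
    intro x y
    have h := R₁.add_mem (R₁.smul_mem x huR) (R₁.smul_mem y hvR)
    convert h using 1
    ext1
    · simp
    · simp [hb, hcc]; ring
  have hpoly : (MvPolynomial.bind₁ (fun i : Fin 2 => if i = 0 then
        (MvPolynomial.X 0 + MvPolynomial.X 1 * MvPolynomial.C I : MvPolynomial (Fin 2) ℂ)
        else MvPolynomial.C α * (MvPolynomial.X 0 + MvPolynomial.X 1 * MvPolynomial.C I) +
          MvPolynomial.C β * (MvPolynomial.X 0 - MvPolynomial.X 1 * MvPolynomial.C I))) Q =
      MvPolynomial.C a₃ * (MvPolynomial.X 0 - MvPolynomial.X 1 * MvPolynomial.C I) ^ 3 +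
      MvPolynomial.C a₂ * (MvPolynomial.X 0 + MvPolynomial.X 1 * MvPolynomial.C I) *
        (MvPolynomial.X 0 - MvPolynomial.X 1 * MvPolynomial.C I) ^ 2 +
      MvPolynomial.C a₁ * (MvPolynomial.X 0 + MvPolynomial.X 1 * MvPolynomial.C I) ^ 2 *
        (MvPolynomial.X 0 - MvPolynomial.X 1 * MvPolynomial.C I) := by
    apply MvPolynomial.funext_set (fun _ => Set.range (fun x : ℝ => (x : ℂ)))
      (fun _ => Set.infinite_range_of_injective Complex.ofReal_injective)
    intro t ht
    obtain ⟨x, hx⟩ := ht 0 (Set.mem_univ _)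
    obtain ⟨y, hy⟩ := ht 1 (Set.mem_univ _)
    have h := hsub _ (hgraph x y)
    simp only at hx hy
    simp only [map_add, map_mul, conj_ofReal, conj_I, mul_neg, ← sub_eq_add_neg] at h
    simp only [MvPolynomial.eval, MvPolynomial.eval₂Hom_bind₁] at h ⊢
    simp only [map_add, map_sub, map_mul, map_pow, MvPolynomial.eval₂Hom_X',
      MvPolynomial.eval₂Hom_C, RingHom.id_apply, ← hx, ← hy]
    rw [← h]
    congr 2
    funext i
    split_ifs <;> simp [← hx, ← hy]
  have hkey : ∀ z w : ℂ,
      MvPolynomial.eval (fun i : Fin 2 => if i = 0 then z else α * z + β * w) Q =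
      a₃ * w ^ 3 + a₂ * z * w ^ 2 + a₁ * z ^ 2 * w := by
    intro z w
    have h := congrArg (MvPolynomial.eval
      (fun i : Fin 2 => if i = 0 then (z + w) / 2 else (w - z) * I / 2)) hpoly
    have e1 : (z + w) / 2 + (w - z) * I / 2 * I = z := by
      linear_combination ((w - z) / 2) * I_mul_I
    have e2 : (z + w) / 2 - (w - z) * I / 2 * I = w := by
      linear_combination ((z - w) / 2) * I_mul_I
    simp only [MvPolynomial.eval, MvPolynomial.eval₂Hom_bind₁] at h ⊢
    simp only [map_add, map_sub, map_mul, map_pow, MvPolynomial.eval₂Hom_X',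
      MvPolynomial.eval₂Hom_C, RingHom.id_apply, if_true, one_ne_zero, if_false, e1, e2] at h
    rw [← h]
    congr 2
    funext i
    split_ifs <;> simp [e1, e2]
  refine ⟨{ toFun := fun v => (v.1, (v.2 - α * v.1) / β)
            invFun := fun v => (v.1, α * v.1 + β * v.2)
            map_add' := ?_
            map_smul' := ?_
            left_inv := ?_
            right_inv := ?_ }, ?_⟩
  · intro v w; ext1 <;> simp; ring
  · intro r v; ext1 <;> simp; ring
  · intro v; ext1 <;> simp; field_simp; ring
  · intro v; ext1 <;> simp; field_simp
  · funext v
    rw [hΨ]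
    have h := hkey v.1 ((v.2 - α * v.1) / β)
    rw [mul_div_cancel₀ _ hβ0, add_sub_cancel] at h
    rw [h]
    rfl
end

section
/- For every t > √(15 − √33)/(2√2), the set P₀ᵗ ∪ P₁ᵗ ∪ P₂ᵗ is locally polynomially convex at the origin, i.e., there exists r > 0 such that (P₀ᵗ ∪ P₁ᵗ ∪ P₂ᵗ) ∩ B̄(0;r) is polynomially convex. -/
open Complex ComplexConjugate

/-- The polynomially convex hull of a set `K ⊆ ℂ²`. -/
def polyHull2 (K : Set (ℂ × ℂ)) : Set (ℂ × ℂ) :=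
  { z | ∀ p : MvPolynomial (Fin 2) ℂ,
      ‖MvPolynomial.eval (fun i => if i = 0 then z.1 else z.2) p‖ ≤
        sSup ((fun w : ℂ × ℂ =>
          ‖MvPolynomial.eval (fun i => if i = 0 then w.1 else w.2) p‖) '' K) }

/-- A set `K ⊆ ℂ²` is polynomially convex if it equals its polynomially convex hull. -/
def PolyConvex2 (K : Set (ℂ × ℂ)) : Prop := polyHull2 K = K

/-- The closed Euclidean ball of radius `r` centred at the origin in `ℂ²`. -/
def eClosedBall (r : ℝ) : Set (ℂ × ℂ) := { z | ‖z.1‖ ^ 2 + ‖z.2‖ ^ 2 ≤ r ^ 2 }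

/-- The open Euclidean ball of radius `r` centred at the origin in `ℂ²`. -/
def eOpenBall (r : ℝ) : Set (ℂ × ℂ) := { z | ‖z.1‖ ^ 2 + ‖z.2‖ ^ 2 < r ^ 2 }

/-- The plane `P₀ᵗ = {w = z̄}`. -/
def P0 : Set (ℂ × ℂ) := { zw | zw.2 = conj zw.1 }

/-- The plane `P₁ᵗ = {w = −(√3(√3−i)/(2t)) z − ((1−i√3)/2) z̄}`. -/
noncomputable def P1 (t : ℝ) : Set (ℂ × ℂ) :=
  { zw | zw.2 = -((Real.sqrt 3 : ℂ) * ((Real.sqrt 3 : ℂ) - Complex.I) / (2 * (t : ℂ))) * zw.1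
      - ((1 - Complex.I * (Real.sqrt 3 : ℂ)) / 2) * conj zw.1 }

/-- The plane `P₂ᵗ = {w = −(√3(√3+i)/(2t)) z − ((1+i√3)/2) z̄}`. -/
noncomputable def P2 (t : ℝ) : Set (ℂ × ℂ) :=
  { zw | zw.2 = -((Real.sqrt 3 : ℂ) * ((Real.sqrt 3 : ℂ) + Complex.I) / (2 * (t : ℂ))) * zw.1
      - ((1 + Complex.I * (Real.sqrt 3 : ℂ)) / 2) * conj zw.1 }


/-! ### Abstract uniform algebra part -/

set_option linter.unusedSectionVars false

section abstractPart

variable {𝔄 : Type*} [NormedRing 𝔄] [NormedAlgebra ℂ 𝔄] [CompleteSpace 𝔄] [NormOneClass 𝔄]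
variable {Y : Type*}

/-- The family of characters computes the norm. -/
def NormDet (ev : Y → 𝔄 →ₐ[ℂ] ℂ) : Prop :=
  ∀ f : 𝔄, ∀ C : ℝ, 0 ≤ C → (∀ y, ‖ev y f‖ ≤ C) → ‖f‖ ≤ C

theorem resolvent_unit (ev : Y → 𝔄 →ₐ[ℂ] ℂ) (hN : NormDet ev) (a : 𝔄) (c s0 : ℝ) (hc : 0 < c)
    (hs0 : 0 ≤ s0)
    (h : ∀ s : ℝ, s0 ≤ s → ∀ y, c ≤ ‖(s : ℂ) - ev y a‖) (s : ℝ) (hs : s0 ≤ s) :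
    IsUnit (algebraMap ℂ 𝔄 (s : ℂ) - a) := by
  have key : ∀ n : ℕ, ∀ s : ℝ, s0 ≤ s → ‖a‖ + 1 - n * (c / 2) ≤ s →
      IsUnit (algebraMap ℂ 𝔄 (s : ℂ) - a) := by
    intro n
    induction n with
    | zero =>
      intro s hs hs'
      have h1 : ‖a‖ < ‖(s : ℂ)‖ := by
        rw [Complex.norm_real, Real.norm_eq_abs, abs_of_nonneg (by linarith)]
        simp at hs'
        linarith
      exact spectrum.mem_resolventSet_of_norm_lt h1
    | succ n ih =>
      intro s hs hs'
      have h2 := ih (s + c / 2) (by linarith) (by push_cast at hs'; linarith)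
      obtain ⟨u, hu⟩ := h2
      have hinv : ‖((u⁻¹ : 𝔄ˣ) : 𝔄)‖ ≤ c⁻¹ := by
        apply hN _ _ (by positivity)
        intro y
        have h3 : ev y ((u⁻¹ : 𝔄ˣ) : 𝔄) * ev y (u : 𝔄) = 1 := by
          rw [← map_mul]; simp
        have h4 : ev y (u : 𝔄) = ((s + c / 2 : ℝ) : ℂ) - ev y a := by
          rw [hu, map_sub, AlgHom.commutes]; rfl
        have h5 := h (s + c / 2) (by linarith) y
        rw [← h4] at h5
        have h6 : ‖ev y ((u⁻¹ : 𝔄ˣ) : 𝔄)‖ * ‖ev y (u : 𝔄)‖ = 1 := by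
          rw [← norm_mul, h3, norm_one]
        rw [← one_div c, le_div_iff₀ hc]
        calc _ ≤ ‖ev y ((u⁻¹ : 𝔄ˣ) : 𝔄)‖ * ‖ev y (u : 𝔄)‖ := by gcongr
          _ = 1 := h6
      have hne : Nontrivial 𝔄 := NormOneClass.nontrivial
      have hpos : 0 < ‖((u⁻¹ : 𝔄ˣ) : 𝔄)‖ := norm_pos_iff.mpr (Units.ne_zero _)
      have hle : c ≤ ‖((u⁻¹ : 𝔄ˣ) : 𝔄)‖⁻¹ := by
        rw [le_inv_comm₀ hc hpos]; exact hinv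
      have hnear : ‖(algebraMap ℂ 𝔄 (s : ℂ) - a) - u‖ < ‖((u⁻¹ : 𝔄ˣ) : 𝔄)‖⁻¹ := by
        have : (algebraMap ℂ 𝔄 (s : ℂ) - a) - u = algebraMap ℂ 𝔄 ((-(c / 2) : ℝ) : ℂ) := by
          rw [hu, sub_sub_sub_cancel_right, ← map_sub]
          congr 1
          push_cast
          ring
        rw [this, norm_algebraMap', Complex.norm_real, norm_neg, Real.norm_eq_abs,
          abs_of_pos (by linarith)]
        linarith
      exact (u.ofNearby _ hnear).isUnit
  obtain ⟨n, hn⟩ := exists_nat_ge ((‖a‖ + 1) / (c / 2))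
  apply key n s hs
  rw [div_le_iff₀ (by linarith)] at hn
  linarith

/-- `a` stays conically away from the positive ray. -/
def RayFree (ev : Y → 𝔄 →ₐ[ℂ] ℂ) (a : 𝔄) (κ : ℝ) : Prop :=
  0 < κ ∧ ∀ y, ∀ s : ℝ, 0 ≤ s → κ * ‖ev y a‖ ≤ ‖(s : ℂ) - ev y a‖

theorem RayFree.slit {ev : Y → 𝔄 →ₐ[ℂ] ℂ} {a : 𝔄} {κ : ℝ} (h : RayFree ev a κ) (y : Y)
    (s : ℝ) (hs : 0 ≤ s) (h0 : 0 < s ∨ ev y a ≠ 0) : (s : ℂ) - ev y a ∈ Complex.slitPlane := by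
  rw [Complex.mem_slitPlane_iff]
  by_contra hcon
  push Not at hcon
  obtain ⟨h1, h2⟩ := hcon
  simp only [Complex.sub_re, Complex.ofReal_re, Complex.sub_im, Complex.ofReal_im] at h1 h2
  have h3 : ev y a = (((ev y a).re : ℝ) : ℂ) := by
    apply Complex.ext <;> simp
    linarith
  have h4 := h.2 y (ev y a).re (by linarith)
  rw [← h3, sub_self, norm_zero] at h4
  have h5 : ‖ev y a‖ = 0 := by
    have := norm_nonneg (ev y a)
    nlinarith [h.1]
  rw [norm_eq_zero] at h5
  rw [h5] at h1
  simp at h1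
  rcases h0 with h0 | h0
  · linarith
  · exact h0 h5

theorem RayFree.lower {ev : Y → 𝔄 →ₐ[ℂ] ℂ} {a : 𝔄} {κ : ℝ} (h : RayFree ev a κ) (y : Y)
    (s : ℝ) (hs : 0 ≤ s) : κ / (κ + 1) * s ≤ ‖(s : ℂ) - ev y a‖ := by
  have h1 := h.2 y s hs
  have h2 : s ≤ ‖(s : ℂ) - ev y a‖ + ‖ev y a‖ := by
    have := norm_add_le ((s : ℂ) - ev y a) (ev y a)
    rw [sub_add_cancel, Complex.norm_real, Real.norm_eq_abs, abs_of_nonneg hs] at this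
    exact this
  have hk := h.1
  rw [div_mul_eq_mul_div, div_le_iff₀ (by linarith)]
  nlinarith

theorem RayFree.unit {ev : Y → 𝔄 →ₐ[ℂ] ℂ} (hN : NormDet ev) {a : 𝔄} {κ : ℝ}
    (h : RayFree ev a κ) (s : ℝ) (hs : 0 < s) : IsUnit (algebraMap ℂ 𝔄 (s : ℂ) - a) := by
  have hk := h.1
  refine resolvent_unit ev hN a (κ / (κ + 1) * s) s (by positivity) hs.le ?_ s le_rfl
  intro s' hs' y
  refine le_trans ?_ (h.lower y s' (by linarith))
  gcongr

theorem ev_inverse (ev : 𝔄 →ₐ[ℂ] ℂ) {u : 𝔄} (hu : IsUnit u) :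
    ev (Ring.inverse u) = (ev u)⁻¹ := by
  have h1 : ev (Ring.inverse u) * ev u = 1 := by
    rw [← map_mul, Ring.inverse_mul_cancel u hu, map_one]
  exact eq_inv_of_mul_eq_one_left h1

theorem RayFree.deriv {ev : Y → 𝔄 →ₐ[ℂ] ℂ} {a : 𝔄} {κ : ℝ} (h : RayFree ev a κ) (y : Y)
    (s : ℝ) (hs : 0 ≤ s) (h0 : 0 < s ∨ ev y a ≠ 0) :
    HasDerivAt (fun s : ℝ => Complex.log ((s : ℂ) - ev y a)) (((s : ℂ) - ev y a)⁻¹) s := by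
  have h1 : HasDerivAt (fun s : ℝ => ((s : ℂ) - ev y a)) 1 s :=
    (Complex.ofRealCLM.hasDerivAt (x := s)).sub_const _
  have := h1.clog_real (h.slit y s hs h0)
  simpa using this

theorem RayFree.logInt {ev : Y → 𝔄 →ₐ[ℂ] ℂ} (hN : NormDet ev) {a : 𝔄} {κ : ℝ}
    (h : RayFree ev a κ) (δ S : ℝ) (hδ : 0 < δ) (hS : δ ≤ S) :
    ∃ l : 𝔄, ∀ y, ev y l = Complex.log ((S : ℂ) - ev y a) - Complex.log ((δ : ℂ) - ev y a) := by
  have hcont : ContinuousOn (fun s : ℝ => Ring.inverse (algebraMap ℂ 𝔄 (s : ℂ) - a))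
      (Set.uIcc δ S) := by
    intro s hs
    rw [Set.uIcc_of_le hS] at hs
    have hu := h.unit hN s (by linarith [hs.1])
    have h1 := NormedRing.inverse_continuousAt hu.unit
    have h2 : ContinuousAt (fun s : ℝ => algebraMap ℂ 𝔄 (s : ℂ) - a) s := by
      have : Continuous (fun s : ℝ => algebraMap ℂ 𝔄 (s : ℂ) - a) :=
        ((continuous_algebraMap ℂ 𝔄).comp Complex.continuous_ofReal).sub continuous_const
      exact this.continuousAt
    have h3 : ContinuousAt (Ring.inverse : 𝔄 → 𝔄) (algebraMap ℂ 𝔄 (s : ℂ) - a) := by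
      simpa using h1
    exact (ContinuousAt.comp (f := fun s : ℝ => algebraMap ℂ 𝔄 (s : ℂ) - a) h3 h2).continuousWithinAt
  refine ⟨∫ s in δ..S, Ring.inverse (algebraMap ℂ 𝔄 (s : ℂ) - a), fun y => ?_⟩
  have hI := hcont.intervalIntegrable (μ := MeasureTheory.volume)
  let L : 𝔄 →L[ℂ] ℂ := AlgHom.toContinuousLinearMap (ev y)
  have h1 := L.intervalIntegral_comp_comm hI
  have h2 : ev y (∫ s in δ..S, Ring.inverse (algebraMap ℂ 𝔄 (s : ℂ) - a))
      = ∫ s in δ..S, ev y (Ring.inverse (algebraMap ℂ 𝔄 (s : ℂ) - a)) := h1.symm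
  have h3 : ∀ s ∈ Set.uIcc δ S, ev y (Ring.inverse (algebraMap ℂ 𝔄 (s : ℂ) - a))
      = ((s : ℂ) - ev y a)⁻¹ := by
    intro s hs
    rw [Set.uIcc_of_le hS] at hs
    rw [ev_inverse _ (h.unit hN s (by linarith [hs.1])), map_sub, AlgHom.commutes]
    rfl
  rw [h2, intervalIntegral.integral_congr h3]
  apply intervalIntegral.integral_eq_sub_of_hasDerivAt
    (f := fun s : ℝ => Complex.log ((s : ℂ) - ev y a))
  · intro s hs
    rw [Set.uIcc_of_le hS] at hs
    exact h.deriv y s (by linarith [hs.1]) (Or.inl (by linarith [hs.1]))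
  · have : ContinuousOn (fun s : ℝ => ((s : ℂ) - ev y a)⁻¹) (Set.uIcc δ S) := by
      refine ContinuousOn.congr (f := fun s : ℝ => ev y (Ring.inverse (algebraMap ℂ 𝔄 (s : ℂ) - a)))
        (L.continuous.comp_continuousOn hcont) (fun s hs => (h3 s hs).symm)
    exact this.intervalIntegrable

theorem NormDet.limit {ev : Y → 𝔄 →ₐ[ℂ] ℂ} (hN : NormDet ev) (F : Y → ℂ)
    (h : ∀ η : ℝ, 0 < η → ∃ g : 𝔄, ∀ y, ‖ev y g - F y‖ ≤ η) : ∃ g : 𝔄, ∀ y, ev y g = F y := by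
  choose! G hG using h
  let u : ℕ → ℝ := fun n => 1 / ((n : ℝ) + 1)
  have hu : ∀ n, 0 < u n := fun n => Nat.one_div_pos_of_nat
  have hu0 : Filter.Tendsto u Filter.atTop (nhds 0) := tendsto_one_div_add_atTop_nhds_zero_nat
  have hC : CauchySeq (fun n => G (u n)) := by
    apply cauchySeq_of_le_tendsto_0 (fun n => 2 * u n)
    · intro n m N hn hm
      rw [dist_eq_norm]
      apply hN _ _ (by have := hu N; linarith)
      intro y
      have e1 := hG (u n) (hu n) y
      have e2 := hG (u m) (hu m) y
      have i1 : u n ≤ u N := Nat.one_div_le_one_div hn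
      have i2 : u m ≤ u N := Nat.one_div_le_one_div hm
      have : ev y (G (u n) - G (u m)) = (ev y (G (u n)) - F y) - (ev y (G (u m)) - F y) := by
        rw [map_sub]; ring
      rw [this]
      refine (norm_sub_le _ _).trans ?_
      linarith
    · simpa using hu0.const_mul 2
  obtain ⟨g, hg⟩ := cauchySeq_tendsto_of_complete hC
  refine ⟨g, fun y => ?_⟩
  have h1 : Filter.Tendsto (fun n => ev y (G (u n))) Filter.atTop (nhds (ev y g)) :=
    ((AlgHom.toContinuousLinearMap (ev y)).continuous.tendsto g).comp hg
  have h2 : Filter.Tendsto (fun n => ev y (G (u n))) Filter.atTop (nhds (F y)) := by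
    rw [tendsto_iff_norm_sub_tendsto_zero]
    exact squeeze_zero (fun _ => norm_nonneg _) (fun n => hG (u n) (hu n) y) hu0
  exact tendsto_nhds_unique h1 h2

theorem RayFree.near_zero {ev : Y → 𝔄 →ₐ[ℂ] ℂ} {a : 𝔄} {κ : ℝ} (h : RayFree ev a κ) (y : Y)
    (δ : ℝ) (hδ : 0 ≤ δ) :
    ‖ev y a‖ * ‖Complex.log ((δ : ℂ) - ev y a) - Complex.log (-ev y a)‖ ≤ δ / κ := by
  have hk := h.1
  by_cases h0 : ev y a = 0
  · rw [h0, norm_zero, zero_mul]; positivity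
  have hpos : 0 < ‖ev y a‖ := norm_pos_iff.mpr h0
  have := norm_image_sub_le_of_norm_deriv_le_segment'
    (f := fun s : ℝ => Complex.log ((s : ℂ) - ev y a)) (f' := fun s : ℝ => ((s : ℂ) - ev y a)⁻¹)
    (a := 0) (b := δ) (C := (κ * ‖ev y a‖)⁻¹)
    (fun s hs => (h.deriv y s hs.1 (Or.inr h0)).hasDerivWithinAt)
    (fun s hs => by
      rw [norm_inv]
      gcongr
      exact h.2 y s hs.1) δ ⟨hδ, le_rfl⟩
  simp only [Complex.ofReal_zero, zero_sub, sub_zero] at this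
  calc _ ≤ ‖ev y a‖ * ((κ * ‖ev y a‖)⁻¹ * δ) := by gcongr
    _ = δ / κ := by field_simp

theorem log_far (a : ℂ) (S : ℝ) (hS : 0 < S) (h : 2 * ‖a‖ ≤ S) :
    ‖Complex.log ((S : ℂ) - a) - Real.log S‖ ≤ 3 / 2 * (‖a‖ / S) := by
  have hS' : (S : ℂ) ≠ 0 := by exact_mod_cast hS.ne'
  have hn : ‖-(a / S)‖ = ‖a‖ / S := by
    rw [norm_neg, norm_div, Complex.norm_real, Real.norm_eq_abs, abs_of_pos hS]
  have hle : ‖-(a / S)‖ ≤ 1 / 2 := by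
    rw [hn, div_le_iff₀ hS]; linarith
  have hne : 1 + -(a / S) ≠ 0 := by
    intro h0
    have : -(a / S) = -1 := by linear_combination h0
    rw [this] at hle
    norm_num at hle
  have h1 : (S : ℂ) - a = (S : ℂ) * (1 + -(a / S)) := by field_simp; ring
  rw [h1, Complex.log_ofReal_mul hS hne, add_sub_cancel_left, ← hn]
  exact Complex.norm_log_one_add_half_le_self hle

theorem logLim {ev : Y → 𝔄 →ₐ[ℂ] ℂ} (hN : NormDet ev) {p a1 a2 : 𝔄} {κ : ℝ}
    (h1 : RayFree ev a1 κ) (h2 : RayFree ev a2 κ)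
    (n1 : ∀ y, ‖ev y a1‖ = ‖ev y p‖) (n2 : ∀ y, ‖ev y a2‖ = ‖ev y p‖) :
    ∃ g : 𝔄, ∀ y, ev y g
      = ev y p * (Complex.log (-ev y a2) - Complex.log (-ev y a1)) := by
  apply hN.limit
  intro η hη
  have hk := h1.1
  set M := ‖p‖ with hM
  have hM0 : 0 ≤ M := norm_nonneg _
  have hpM : ∀ y, ‖ev y p‖ ≤ M := fun y => AlgHom.norm_apply_le_self (ev y) p
  obtain ⟨δ, hδ, hδη⟩ : ∃ δ : ℝ, 0 < δ ∧ δ / κ ≤ η / 4 := by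
    refine ⟨κ * (η / 4), by positivity, ?_⟩
    rw [mul_div_cancel_left₀ _ hk.ne']
  obtain ⟨S, hS, hS1, hS2⟩ : ∃ S : ℝ, δ ≤ S ∧ 2 * M ≤ S ∧ M * (3 / 2 * (M / S)) ≤ η / 4 := by
    refine ⟨max δ (max (2 * M) (6 * M ^ 2 / η)), le_max_left _ _,
      (le_max_left _ _).trans (le_max_right _ _), ?_⟩
    set S := max δ (max (2 * M) (6 * M ^ 2 / η))
    have hS0 : 0 < S := lt_of_lt_of_le hδ (le_max_left _ _)
    have hS3 : 6 * M ^ 2 / η ≤ S := (le_max_right _ _).trans (le_max_right _ _)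
    rw [div_le_iff₀ hη] at hS3
    have : M * (3 / 2 * (M / S)) = (3 / 2 * M ^ 2) / S := by ring
    rw [this, div_le_iff₀ hS0]
    linarith
  have hS0 : 0 < S := by linarith
  obtain ⟨l1, hl1⟩ := h1.logInt hN δ S hδ hS
  obtain ⟨l2, hl2⟩ := h2.logInt hN δ S hδ hS
  refine ⟨p * (l1 - l2), fun y => ?_⟩
  have b1 := h1.near_zero y δ hδ.le
  have b2 := h2.near_zero y δ hδ.le
  rw [n1] at b1
  rw [n2] at b2
  have hy := hpM y
  have c1 := log_far (ev y a1) S hS0 (by rw [n1]; linarith)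
  have c2 := log_far (ev y a2) S hS0 (by rw [n2]; linarith)
  rw [n1] at c1
  rw [n2] at c2
  have far : ∀ z : ℂ, ‖z‖ ≤ 3 / 2 * (‖ev y p‖ / S) → ‖ev y p * z‖ ≤ η / 4 := by
    intro z hz
    rw [norm_mul]
    refine le_trans ?_ hS2
    gcongr
    refine hz.trans ?_
    gcongr
  have f1 := far _ c1
  have f2 := far _ c2
  rw [← norm_mul] at b1 b2
  have : ev y (p * (l1 - l2)) - ev y p * (Complex.log (-ev y a2) - Complex.log (-ev y a1))
      = ev y p * (Complex.log ((S : ℂ) - ev y a1) - Real.log S)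
        - ev y p * (Complex.log ((S : ℂ) - ev y a2) - Real.log S)
        - ev y p * (Complex.log ((δ : ℂ) - ev y a1) - Complex.log (-ev y a1))
        + ev y p * (Complex.log ((δ : ℂ) - ev y a2) - Complex.log (-ev y a2)) := by
    rw [map_mul, map_sub, hl1, hl2]; ring
  rw [this]
  refine (norm_add_le _ _).trans ?_
  have t1 := norm_sub_le (ev y p * (Complex.log ((S : ℂ) - ev y a1) - Real.log S)
        - ev y p * (Complex.log ((S : ℂ) - ev y a2) - Real.log S))
        (ev y p * (Complex.log ((δ : ℂ) - ev y a1) - Complex.log (-ev y a1)))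
  have t2 := norm_sub_le (ev y p * (Complex.log ((S : ℂ) - ev y a1) - Real.log S))
        (ev y p * (Complex.log ((S : ℂ) - ev y a2) - Real.log S))
  linarith

/-- The values of the difference of the two logarithms. -/
theorem logDiff (ξ l : ℂ) (hξ : ‖ξ‖ = 1) (him : 0 < (ξ ^ 2).im) (hl : l ≠ 0) :
    ((conj ξ * l).im < 0 → 0 < (ξ * l).im →
      Complex.log (-(ξ * l)) - Complex.log (-(conj ξ * l))
        = Complex.log (ξ ^ 2) - 2 * Real.pi * Complex.I) ∧
    ((0 < (conj ξ * l).im ∨ (ξ * l).im < 0) →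
      Complex.log (-(ξ * l)) - Complex.log (-(conj ξ * l)) = Complex.log (ξ ^ 2)) := by
  have hξ0 : ξ ≠ 0 := by
    intro h; rw [h, norm_zero] at hξ; norm_num at hξ
  have hcξ0 : conj ξ ≠ 0 := by simpa using hξ0
  have hcc : ξ * conj ξ = 1 := by
    rw [Complex.mul_conj, Complex.normSq_eq_norm_sq, hξ]; norm_num
  set A := Complex.log (-(ξ * l)) with hA
  set B := Complex.log (-(conj ξ * l)) with hB
  set E := Complex.log (ξ ^ 2) with hE
  have eA : Complex.exp A = -(ξ * l) := Complex.exp_log (neg_ne_zero.mpr (mul_ne_zero hξ0 hl))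
  have eB : Complex.exp B = -(conj ξ * l) :=
    Complex.exp_log (neg_ne_zero.mpr (mul_ne_zero hcξ0 hl))
  have eE : Complex.exp E = ξ ^ 2 := Complex.exp_log (pow_ne_zero _ hξ0)
  have hexp : Complex.exp A = Complex.exp (B + E) := by
    rw [Complex.exp_add, eA, eB, eE]
    linear_combination (ξ * l) * hcc
  obtain ⟨n, hn⟩ := Complex.exp_eq_exp_iff_exists_int.mp hexp
  have himn : A.im = B.im + E.im + n * (2 * Real.pi) := by
    rw [hn]; simp
  have hEarg : E.im = Complex.arg (ξ ^ 2) := Complex.log_im _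
  have hE0 : 0 < E.im := by
    have h1 : 0 ≤ Complex.arg (ξ ^ 2) := Complex.arg_nonneg_iff.mpr him.le
    have h2 : Complex.arg (ξ ^ 2) ≠ 0 := by
      intro h
      rw [Complex.arg_eq_zero_iff] at h
      rw [h.2] at him; exact lt_irrefl _ him
    rw [hEarg]; exact lt_of_le_of_ne h1 (Ne.symm h2)
  have hE1 : E.im < Real.pi := by
    rw [hEarg]
    refine lt_of_le_of_ne (Complex.arg_le_pi _) ?_
    intro h
    rw [Complex.arg_eq_pi_iff] at h
    rw [h.2] at him; exact lt_irrefl _ him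
  have hpi := Real.pi_pos
  have A1 : -Real.pi < A.im := Complex.neg_pi_lt_log_im _
  have A2 : A.im ≤ Real.pi := Complex.log_im_le_pi _
  have B1 : -Real.pi < B.im := Complex.neg_pi_lt_log_im _
  have B2 : B.im ≤ Real.pi := Complex.log_im_le_pi _
  constructor
  · intro i1 i2
    have hA' : A.im < 0 := by
      rw [hA, Complex.log_im, Complex.arg_neg_iff]; simp only [Complex.neg_im]; linarith [i2]
    have hB' : 0 ≤ B.im := by
      rw [hB, Complex.log_im, Complex.arg_nonneg_iff]; simp only [Complex.neg_im]; linarith [i1.le]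
    have hn1 : (n : ℝ) < 0 := by
      by_contra hc
      push Not at hc
      have := mul_nonneg hc (by positivity : (0 : ℝ) ≤ 2 * Real.pi)
      linarith
    have hn2 : (-2 : ℝ) < n := by
      by_contra hc
      push Not at hc
      have := mul_le_mul_of_nonneg_right hc (by positivity : (0 : ℝ) ≤ 2 * Real.pi)
      linarith
    have hn3 : n = -1 := by
      have a1 : n < 0 := by exact_mod_cast hn1
      have a2 : -2 < n := by exact_mod_cast hn2
      omega
    rw [hn, hn3]; push_cast; ring
  · intro i
    have hD : -Real.pi < A.im - B.im := by
      rcases i with i | i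
      · have hB' : B.im < 0 := by
          rw [hB, Complex.log_im, Complex.arg_neg_iff]; simp only [Complex.neg_im]; linarith [i]
        linarith
      · have hA' : 0 ≤ A.im := by
          rw [hA, Complex.log_im, Complex.arg_nonneg_iff]; simp only [Complex.neg_im]; linarith [i.le]
        by_contra hc
        push Not at hc
        have b : B.im = Real.pi := by linarith
        have a : A.im = 0 := by linarith
        rw [hA, Complex.log_im, Complex.arg_eq_zero_iff] at a
        have := a.2
        simp only [Complex.neg_im] at this
        linarith
    have hn1 : (-1 : ℝ) < n := by
      by_contra hc
      push Not at hc
      have := mul_le_mul_of_nonneg_right hc (by positivity : (0 : ℝ) ≤ 2 * Real.pi)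
      linarith
    have hn2 : (n : ℝ) < 1 := by
      by_contra hc
      push Not at hc
      have := mul_le_mul_of_nonneg_right hc (by positivity : (0 : ℝ) ≤ 2 * Real.pi)
      linarith
    have hn3 : n = 0 := by
      have a1 : n < 1 := by exact_mod_cast hn2
      have a2 : -1 < n := by exact_mod_cast hn1
      omega
    rw [hn, hn3]; push_cast; ring

theorem pow_compare (x C a M : ℝ) (hC : 0 ≤ C) (ha : 0 < a)
    (h : ∀ n : ℕ, x ^ n * a ≤ C ^ n * M) : x ≤ C := by
  by_contra hx
  push Not at hx
  have hM : a ≤ M := by simpa using h 0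
  rcases hC.eq_or_lt with h0 | h0
  · have := h 1
    rw [← h0] at this
    simp at this
    rw [← h0] at hx
    nlinarith
  · have h1 : 1 < x / C := by rw [lt_div_iff₀ h0]; linarith
    obtain ⟨n, hn⟩ := pow_unbounded_of_one_lt (M / a) h1
    have h2 := h n
    rw [div_pow, div_lt_div_iff₀ ha (by positivity)] at hn
    linarith

theorem kallin_abstract {ev : Y → 𝔄 →ₐ[ℂ] ℂ} (hN : NormDet ev) (p : 𝔄) (ξ : ℂ) (κ : ℝ)
    (hξ : ‖ξ‖ = 1) (him : 0 < (ξ ^ 2).im)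
    (h1 : RayFree ev (conj ξ • p) κ) (h2 : RayFree ev (ξ • p) κ) (Y0 : Set Y)
    (hY0 : ∀ y ∈ Y0, ev y p ≠ 0 → (conj ξ * ev y p).im < 0 ∧ 0 < (ξ * ev y p).im)
    (hY1 : ∀ y ∉ Y0, ev y p ≠ 0 → 0 < (conj ξ * ev y p).im ∨ (ξ * ev y p).im < 0)
    (φ : 𝔄 →ₐ[ℂ] ℂ) (hφ : φ p ≠ 0) :
    (∀ Q : 𝔄, ∀ C : ℝ, 0 ≤ C → (∀ y ∈ Y0, ‖ev y Q‖ ≤ C) → ‖φ Q‖ ≤ C) ∨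
    (∀ Q : 𝔄, ∀ C : ℝ, 0 ≤ C → (∀ y ∉ Y0, ‖ev y Q‖ ≤ C) → ‖φ Q‖ ≤ C) := by
  classical
  have hcξ : ‖conj ξ‖ = 1 := by rw [RCLike.norm_conj]; exact hξ
  obtain ⟨g, hg⟩ := logLim hN (p := p) h1 h2
    (fun y => by rw [map_smul, norm_smul, hcξ, one_mul])
    (fun y => by rw [map_smul, norm_smul, hξ, one_mul])
  have hpi : (2 * Real.pi * Complex.I : ℂ) ≠ 0 := Complex.two_pi_I_ne_zero
  let e : 𝔄 := (-(2 * Real.pi * Complex.I : ℂ))⁻¹ • (g - Complex.log (ξ ^ 2) • p)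
  have he : ∀ y, ev y e = if y ∈ Y0 then ev y p else 0 := by
    intro y
    simp only [e, map_smul, map_sub, hg, smul_eq_mul]
    by_cases hp : ev y p = 0
    · simp [hp]
    obtain ⟨d0, d1⟩ := logDiff ξ (ev y p) hξ him hp
    split_ifs with hy
    · rw [d0 (hY0 y hy hp).1 (hY0 y hy hp).2]
      field_simp
      ring
    · rw [d1 (hY1 y hy hp)]
      ring
  have hpM : ∀ y, ‖ev y p‖ ≤ ‖p‖ := fun y => AlgHom.norm_apply_le_self (ev y) p
  have hsq : e * (p - e) = 0 := by
    rw [← norm_le_zero_iff]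
    apply hN _ _ le_rfl
    intro y
    rw [map_mul, map_sub, he]
    split_ifs <;> simp
  have hsq' : φ e * (φ p - φ e) = 0 := by rw [← map_sub, ← map_mul, hsq, map_zero]
  have fin : ∀ (Z : Set Y) (f : 𝔄), (∀ y, ev y f = if y ∈ Z then ev y p else 0) → φ f = φ p →
      ∀ Q : 𝔄, ∀ C : ℝ, 0 ≤ C → (∀ y ∈ Z, ‖ev y Q‖ ≤ C) → ‖φ Q‖ ≤ C := by
    intro Z f hf hff Q C hC hQ
    apply pow_compare _ C ‖φ p‖ ‖p‖ hC (norm_pos_iff.mpr hφ)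
    intro n
    have : ‖φ (Q ^ n * f)‖ ≤ C ^ n * ‖p‖ := by
      refine (AlgHom.norm_apply_le_self φ _).trans (hN _ _ (by positivity) ?_)
      intro y
      rw [map_mul, map_pow, hf]
      split_ifs with hy
      · rw [norm_mul, norm_pow]
        have := hQ y hy
        have := hpM y
        gcongr
      · rw [mul_zero, norm_zero]; positivity
    rwa [map_mul, map_pow, hff, norm_mul, norm_pow] at this
  rcases mul_eq_zero.mp hsq' with h0 | h0
  · right
    refine fin Y0ᶜ (p - e) ?_ (by rw [map_sub, h0, sub_zero])
    intro y
    rw [map_sub, he]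
    by_cases hy : y ∈ Y0 <;> simp [hy]
  · left
    exact fin Y0 e he (sub_eq_zero.mp h0).symm

theorem zero_abstract {ev : Y → 𝔄 →ₐ[ℂ] ℂ} (hN : NormDet ev) (a : 𝔄) (κ : ℝ)
    (h : RayFree ev a κ) (φ : 𝔄 →ₐ[ℂ] ℂ) (hφ : φ a = 0) (Q : 𝔄) (C : ℝ) (hC : 0 ≤ C)
    (hQ : ∀ y, ‖ev y Q‖ ^ 2 ≤ C * ‖ev y a‖) : φ Q = 0 := by
  have hk := h.1
  have key : ∀ s : ℝ, 0 < s → ‖φ Q‖ ^ 2 ≤ C / κ * s := by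
    intro s hs
    have hu := h.unit hN s hs
    have hs' : (s : ℂ) ≠ 0 := by exact_mod_cast hs.ne'
    have e1 : φ (Q ^ 2 * ((s : ℂ) • Ring.inverse (algebraMap ℂ 𝔄 (s : ℂ) - a))) = φ Q ^ 2 := by
      rw [map_mul, map_pow, map_smul, ev_inverse φ hu, map_sub, hφ, AlgHom.commutes, sub_zero]
      simp [hs']
    rw [← norm_pow, ← e1]
    refine (AlgHom.norm_apply_le_self φ _).trans (hN _ _ (by positivity) ?_)
    intro y
    rw [map_mul, map_pow, map_smul, ev_inverse _ hu, map_sub, AlgHom.commutes, norm_mul,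
      norm_pow, norm_smul, norm_inv, Complex.norm_real, Real.norm_eq_abs, abs_of_pos hs]
    have b1 := hQ y
    have b2 := h.2 y s hs.le
    have b3 : 0 < ‖(s : ℂ) - ev y a‖ := by
      refine lt_of_lt_of_le ?_ (h.lower y s hs.le)
      positivity
    change ‖ev y Q‖ ^ 2 * (s * ‖(s : ℂ) - ev y a‖⁻¹) ≤ _
    have : ‖ev y a‖ ≤ ‖(s : ℂ) - ev y a‖ / κ := by
      rw [le_div_iff₀ hk]; linarith
    calc _ ≤ (C * (‖(s : ℂ) - ev y a‖ / κ)) * (s * ‖(s : ℂ) - ev y a‖⁻¹) := by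
          gcongr
          exact b1.trans (by gcongr)
      _ = C / κ * s := by field_simp
  have h0 : ‖φ Q‖ ^ 2 ≤ 0 := by
    apply le_of_forall_pos_le_add
    intro η hη
    have := key (η / (C / κ + 1)) (by positivity)
    refine this.trans ?_
    rw [zero_add, mul_div_assoc', div_le_iff₀ (by positivity)]
    have : 0 ≤ C / κ := by positivity
    nlinarith
  have : ‖φ Q‖ = 0 := by nlinarith [norm_nonneg (φ Q)]
  exact norm_eq_zero.mp this

end abstractPart

/-! ### Polynomials on `ℂ²` and hulls -/

/-- Polynomial functions on `ℂ²`. -/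
def IsPoly2 (f : ℂ × ℂ → ℂ) : Prop :=
  ∃ P : MvPolynomial (Fin 2) ℂ,
    ∀ z, f z = MvPolynomial.eval (fun i => if i = 0 then z.1 else z.2) P

theorem IsPoly2.const (c : ℂ) : IsPoly2 (fun _ => c) := ⟨MvPolynomial.C c, by simp⟩
theorem IsPoly2.fst : IsPoly2 (fun z => z.1) := ⟨MvPolynomial.X 0, by simp⟩
theorem IsPoly2.snd : IsPoly2 (fun z => z.2) := ⟨MvPolynomial.X 1, by simp⟩
theorem IsPoly2.add {f g : ℂ × ℂ → ℂ} (hf : IsPoly2 f) (hg : IsPoly2 g) :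
    IsPoly2 (fun z => f z + g z) := by
  obtain ⟨P, hP⟩ := hf
  obtain ⟨Q, hQ⟩ := hg
  exact ⟨P + Q, fun z => by simp only [hP, hQ, map_add]⟩
theorem IsPoly2.mul {f g : ℂ × ℂ → ℂ} (hf : IsPoly2 f) (hg : IsPoly2 g) :
    IsPoly2 (fun z => f z * g z) := by
  obtain ⟨P, hP⟩ := hf
  obtain ⟨Q, hQ⟩ := hg
  exact ⟨P * Q, fun z => by simp only [hP, hQ, map_mul]⟩

/-- Hull membership. -/
def InHull (X : Set (ℂ × ℂ)) (x : ℂ × ℂ) : Prop :=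
  ∀ f, IsPoly2 f → ∀ C : ℝ, 0 ≤ C → (∀ y ∈ X, ‖f y‖ ≤ C) → ‖f x‖ ≤ C

theorem InHull.mono {X X' : Set (ℂ × ℂ)} {x : ℂ × ℂ} (h : InHull X x) (hs : X ⊆ X') :
    InHull X' x := fun f hf C hC hX => h f hf C hC (fun y hy => hX y (hs hy))

/-- The coordinate functions. -/
def coordFn (X : Set (ℂ × ℂ)) (i : Fin 2) : C(X, ℂ) :=
  ⟨fun y => if i = 0 then y.1.1 else y.1.2, by
    by_cases h : i = 0
    · simp only [h, if_true]; fun_prop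
    · simp only [h, if_false]; fun_prop⟩

/-- Restriction of polynomials. -/
noncomputable def polyRes (X : Set (ℂ × ℂ)) : MvPolynomial (Fin 2) ℂ →ₐ[ℂ] C(X, ℂ) :=
  MvPolynomial.aeval (coordFn X)

theorem polyRes_apply (X : Set (ℂ × ℂ)) (P : MvPolynomial (Fin 2) ℂ) (y : X) :
    polyRes X P y = MvPolynomial.eval (fun i => if i = 0 then y.1.1 else y.1.2) P := by
  have h : (ContinuousMap.evalAlgHom ℂ ℂ y).comp (polyRes X)
      = MvPolynomial.aeval (fun i : Fin 2 => if i = 0 then y.1.1 else y.1.2) := by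
    apply MvPolynomial.algHom_ext
    intro i
    simp [polyRes, coordFn]
  have h2 := DFunLike.congr_fun h P
  simpa [MvPolynomial.aeval_eq_eval] using h2

/-- The uniform closure of the polynomials. -/
noncomputable def uAlg (X : Set (ℂ × ℂ)) [CompactSpace X] : Subalgebra ℂ C(X, ℂ) :=
  (polyRes X).range.topologicalClosure

/-- Evaluation. -/
noncomputable def uEv (X : Set (ℂ × ℂ)) [CompactSpace X] (y : X) : uAlg X →ₐ[ℂ] ℂ :=
  (ContinuousMap.evalAlgHom ℂ ℂ y).comp (uAlg X).val

theorem uEv_apply (X : Set (ℂ × ℂ)) [CompactSpace X] (y : X) (f : uAlg X) :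
    uEv X y f = (f : C(X, ℂ)) y := rfl

theorem kallin (K : Set (ℂ × ℂ)) (hK : IsCompact K) (p : ℂ × ℂ → ℂ) (hp : IsPoly2 p)
    (ξ : ℂ) (κ : ℝ) (hξ : ‖ξ‖ = 1) (him : 0 < (ξ ^ 2).im) (hκ : 0 < κ)
    (r1 : ∀ y ∈ K, ∀ s : ℝ, 0 ≤ s → κ * ‖p y‖ ≤ ‖(s : ℂ) - conj ξ * p y‖)
    (r2 : ∀ y ∈ K, ∀ s : ℝ, 0 ≤ s → κ * ‖p y‖ ≤ ‖(s : ℂ) - ξ * p y‖)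
    (Y0 : Set (ℂ × ℂ))
    (hY0 : ∀ y ∈ K, y ∈ Y0 → p y ≠ 0 → (conj ξ * p y).im < 0 ∧ 0 < (ξ * p y).im)
    (hY1 : ∀ y ∈ K, y ∉ Y0 → p y ≠ 0 → 0 < (conj ξ * p y).im ∨ (ξ * p y).im < 0)
    (C : ℝ) (hC : 0 ≤ C) (hC1 : ∀ y ∈ K, ‖y.1‖ ^ 2 ≤ C * ‖p y‖)
    (hC2 : ∀ y ∈ K, ‖y.2‖ ^ 2 ≤ C * ‖p y‖) (x : ℂ × ℂ) (hx : InHull K x) :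
    x = 0 ∨ InHull (K ∩ Y0) x ∨ InHull (K \ Y0) x := by
  set X : Set (ℂ × ℂ) := insert x K with hX
  have hXc : IsCompact X := hK.insert x
  have : CompactSpace X := isCompact_iff_compactSpace.mp hXc
  have hxX : x ∈ X := Set.mem_insert _ _
  have : Nonempty X := ⟨⟨x, hxX⟩⟩
  have hcl : IsClosed (uAlg X : Set C(X, ℂ)) := Subalgebra.isClosed_topologicalClosure _
  have : CompleteSpace (uAlg X) := hcl.completeSpace_coe
  have : NormOneClass (uAlg X) := ⟨by
    change ‖(1 : C(X, ℂ))‖ = 1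
    exact norm_one⟩
  let ev : K → uAlg X →ₐ[ℂ] ℂ := fun y => uEv X ⟨y.1, Set.mem_insert_of_mem _ y.2⟩
  let φ : uAlg X →ₐ[ℂ] ℂ := uEv X ⟨x, hxX⟩
  have hφle : ∀ f : uAlg X, ∀ C : ℝ, 0 ≤ C → (∀ y, ‖ev y f‖ ≤ C) → ‖φ f‖ ≤ C := by
    intro f C hC hf
    apply le_of_forall_pos_le_add
    intro η hη
    have hmem : (f : C(X, ℂ)) ∈ closure ((polyRes X).range : Set C(X, ℂ)) := f.2
    obtain ⟨g, ⟨P, hP⟩, hg⟩ := Metric.mem_closure_iff.mp hmem (η / 2) (by positivity)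
    have hd : ∀ y : X, ‖(f : C(X, ℂ)) y - g y‖ ≤ η / 2 := by
      intro y
      rw [← dist_eq_norm]
      exact (ContinuousMap.dist_apply_le_dist y).trans hg.le
    have hgP : ∀ y : X, g y = MvPolynomial.eval (fun i => if i = 0 then y.1.1 else y.1.2) P := by
      intro y
      rw [← hP]; exact polyRes_apply X P y
    have h1 := hx (fun z => MvPolynomial.eval (fun i => if i = 0 then z.1 else z.2) P)
      ⟨P, fun _ => rfl⟩ (C + η / 2) (by positivity) (fun y hy => by
        have a := hd ⟨y, Set.mem_insert_of_mem _ hy⟩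
        have b : ‖(f : C(X, ℂ)) ⟨y, Set.mem_insert_of_mem _ hy⟩‖ ≤ C := hf ⟨y, hy⟩
        have c := hgP ⟨y, Set.mem_insert_of_mem _ hy⟩
        simp only at c
        rw [← c]
        have d := norm_sub_norm_le (g ⟨y, Set.mem_insert_of_mem _ hy⟩)
          ((f : C(X, ℂ)) ⟨y, Set.mem_insert_of_mem _ hy⟩)
        rw [norm_sub_rev] at d
        linarith)
    have a := hd ⟨x, hxX⟩
    have c := hgP ⟨x, hxX⟩
    simp only at c h1
    rw [← c] at h1
    have d := norm_sub_norm_le ((f : C(X, ℂ)) ⟨x, hxX⟩) (g ⟨x, hxX⟩)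
    change ‖(f : C(X, ℂ)) ⟨x, hxX⟩‖ ≤ C + η
    linarith
  have hN : NormDet ev := by
    intro f C hC hf
    change ‖(f : C(X, ℂ))‖ ≤ C
    rw [ContinuousMap.norm_le _ hC]
    rintro ⟨y, hy⟩
    rcases hy with hy | hy
    · subst hy; exact hφle f C hC hf
    · exact hf ⟨y, hy⟩
  have lift : ∀ f, IsPoly2 f → ∃ F : uAlg X, (∀ y, ev y F = f y.1) ∧ φ F = f x := by
    rintro f ⟨P, hP⟩
    refine ⟨⟨polyRes X P, Subalgebra.le_topologicalClosure _ ⟨P, rfl⟩⟩, fun y => ?_, ?_⟩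
    · rw [hP]; exact polyRes_apply X P _
    · rw [hP]; exact polyRes_apply X P _
  obtain ⟨p', hp1, hp2⟩ := lift p hp
  have R1 : RayFree ev (conj ξ • p') κ := ⟨hκ, fun y s hs => by
    rw [map_smul, smul_eq_mul, norm_mul, RCLike.norm_conj, hξ, one_mul, hp1]
    exact r1 y y.2 s hs⟩
  have R2 : RayFree ev (ξ • p') κ := ⟨hκ, fun y s hs => by
    rw [map_smul, smul_eq_mul, norm_mul, hξ, one_mul, hp1]
    exact r2 y y.2 s hs⟩
  by_cases h0 : p x = 0
  · left
    have hz : ∀ f, IsPoly2 f → (∀ y ∈ K, ‖f y‖ ^ 2 ≤ C * ‖p y‖) → f x = 0 := by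
      intro f hf hfC
      obtain ⟨F, hF1, hF2⟩ := lift f hf
      rw [← hF2]
      refine zero_abstract hN (ξ • p') κ R2 φ (by rw [map_smul, hp2, h0, smul_zero]) F C hC ?_
      intro y
      rw [map_smul, smul_eq_mul, norm_mul, hξ, one_mul, hp1, hF1]
      exact hfC y y.2
    exact Prod.ext (hz _ IsPoly2.fst hC1) (hz _ IsPoly2.snd hC2)
  · right
    have := kallin_abstract hN p' ξ κ hξ him R1 R2 {y | y.1 ∈ Y0}
      (fun y hy => by rw [hp1]; exact hY0 y y.2 hy) (fun y hy => by rw [hp1]; exact hY1 y y.2 hy)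
      φ (by rw [hp2]; exact h0)
    rcases this with h | h
    · left
      intro f hf C hC hfC
      obtain ⟨F, hF1, hF2⟩ := lift f hf
      rw [← hF2]
      refine h F C hC (fun y hy => ?_)
      rw [hF1]; exact hfC y ⟨y.2, hy⟩
    · right
      intro f hf C hC hfC
      obtain ⟨F, hF1, hF2⟩ := lift f hf
      rw [← hF2]
      refine h F C hC (fun y hy => ?_)
      rw [hF1]; exact hfC y ⟨y.2, hy⟩

/-! ### The quadratic forms -/

/-- The primitive cube root of unity. -/
noncomputable def om : ℂ := ⟨-1 / 2, Real.sqrt 3 / 2⟩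

/-- The quadratic form. -/
noncomputable def qf (α γ ε : ℝ) (ν z : ℂ) : ℂ :=
  α * z ^ 2 + ν * z * (conj z + ε * z) + γ * ν ^ 2 * (conj z + ε * z) ^ 2

theorem qf_conj (α γ ε : ℝ) (ν z : ℂ) : qf α γ ε (conj ν) (conj z) = conj (qf α γ ε ν z) := by
  simp [qf]

theorem quad_lower (η b d c : ℂ) (hD : 0 < (η * d).re)
    (hv : Complex.normSq (η * b + conj (η * c)) < (η * d).re ^ 2) :
    ∃ m > 0, ∀ z : ℂ, m * ‖z‖ ^ 2 ≤
      (η * (b * z ^ 2 + d * (z * conj z) + c * (conj z) ^ 2)).re := by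
  rw [Complex.normSq_eq_norm_sq] at hv
  have h1 : ‖η * b + conj (η * c)‖ < (η * d).re := lt_of_pow_lt_pow_left₀ 2 hD.le hv
  refine ⟨_, sub_pos.mpr h1, fun z => ?_⟩
  have h2 : (η * (b * z ^ 2 + d * (z * conj z) + c * (conj z) ^ 2)).re
      = ((η * b + conj (η * c)) * z ^ 2).re + (η * d).re * ‖z‖ ^ 2 := by
    rw [Complex.mul_conj, Complex.normSq_eq_norm_sq]
    have h3 : (η * (b * z ^ 2 + d * ((‖z‖ ^ 2 : ℝ) : ℂ) + c * (conj z) ^ 2)).re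
      = (η * b * z ^ 2).re + ((η * d) * ((‖z‖ ^ 2 : ℝ) : ℂ)).re + (conj (η * c) * z ^ 2).re := by
      rw [← Complex.conj_re (conj (η * c) * z ^ 2), ← Complex.add_re, ← Complex.add_re]
      simp only [map_mul, map_pow, Complex.conj_conj]
      congr 1; ring
    rw [h3, Complex.re_mul_ofReal, add_mul, Complex.add_re]; ring
  rw [h2]
  have h4 : -(‖η * b + conj (η * c)‖ * ‖z‖ ^ 2) ≤ ((η * b + conj (η * c)) * z ^ 2).re := by
    have := Complex.abs_re_le_norm ((η * b + conj (η * c)) * z ^ 2)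
    rw [norm_mul, norm_pow] at this
    exact (abs_le.mp this).1
  nlinarith

theorem qf_expand (α γ ε : ℝ) (ν z : ℂ) : qf α γ ε ν z =
    (α + ν * ε + γ * ν ^ 2 * ε ^ 2) * z ^ 2 + (ν + 2 * γ * ε * ν ^ 2) * (z * conj z)
      + (γ * ν ^ 2) * (conj z) ^ 2 := by
  simp only [qf]; ring

theorem om_sq : om ^ 2 = conj om := by
  have h3 : Real.sqrt 3 * Real.sqrt 3 = 3 := Real.mul_self_sqrt (by norm_num)
  apply Complex.ext
  · simp [om, pow_two]; linarith
  · simp [om, pow_two]; ring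

theorem om_mul_conj : om * conj om = 1 := by
  have h3 : Real.sqrt 3 * Real.sqrt 3 = 3 := Real.mul_self_sqrt (by norm_num)
  apply Complex.ext
  · simp [om]; linarith
  · simp [om]; ring

theorem delta_exists (ε : ℝ) (h0 : 0 < ε) (hb : 12 * ε ^ 4 - 15 * ε ^ 2 + 4 < 0) :
    ∃ δ > 0, 0 < 1 / 2 + (1 / ε - δ) * ε ∧
      (3 * ε - 2 * δ * ε ^ 2 - (1 / ε - δ)) ^ 2 + (1 / ε - δ) ^ 2
        - (3 * ε - 2 * δ * ε ^ 2 - (1 / ε - δ)) * (1 / ε - δ)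
        < (1 / 2 + (1 / ε - δ) * ε) ^ 2 := by
  have c1 : ContinuousAt (fun δ : ℝ => 1 / 2 + (1 / ε - δ) * ε) 0 := by fun_prop
  have c2 : ContinuousAt (fun δ : ℝ => (1 / 2 + (1 / ε - δ) * ε) ^ 2 -
      ((3 * ε - 2 * δ * ε ^ 2 - (1 / ε - δ)) ^ 2 + (1 / ε - δ) ^ 2
        - (3 * ε - 2 * δ * ε ^ 2 - (1 / ε - δ)) * (1 / ε - δ))) 0 := by fun_prop
  have e1 := c1.eventually (lt_mem_nhds (a := 0) (by simp; rw [inv_mul_cancel₀ h0.ne']; norm_num))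
  have e2 := c2.eventually (lt_mem_nhds (a := 0) (by
    have hid : (1 / 2 + (1 / ε - 0) * ε) ^ 2 -
      ((3 * ε - 2 * 0 * ε ^ 2 - (1 / ε - 0)) ^ 2 + (1 / ε - 0) ^ 2
        - (3 * ε - 2 * 0 * ε ^ 2 - (1 / ε - 0)) * (1 / ε - 0)) =
        -(3 / 4) * (12 * ε ^ 4 - 15 * ε ^ 2 + 4) / ε ^ 2 := by
      field_simp; ring
    beta_reduce
    rw [hid]
    apply div_pos _ (by positivity)
    linarith))
  have e3 := (e1.and e2).filter_mono (nhdsWithin_le_nhds (s := Set.Ioi (0:ℝ)))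
  obtain ⟨δ, ⟨h1, h2⟩, h3⟩ := (e3.and self_mem_nhdsWithin).exists
  exact ⟨δ, h3, h1, by linarith⟩

theorem quadratic_raw (ε : ℝ) (h0 : 0 < ε) (h1 : ε < 1)
    (h : ε ^ 2 < 3 / 4 ∨ 12 * ε ^ 4 - 15 * ε ^ 2 + 4 < 0) :
    ∃ α γ : ℝ, ∃ ξ : ℂ, ‖ξ‖ = 1 ∧ 0 < (ξ ^ 2).im ∧
      (∃ m > 0, ∀ z, (conj ξ * qf α γ ε 1 z).im ≤ - (m * ‖z‖ ^ 2)) ∧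
      (∃ m > 0, ∀ z, m * ‖z‖ ^ 2 ≤ (conj ξ * qf α γ ε om z).im) := by
  have h3 : Real.sqrt 3 * Real.sqrt 3 = 3 := Real.mul_self_sqrt (by norm_num)
  have h3' : Real.sqrt 3 ^ 2 = 3 := Real.sq_sqrt (by norm_num)
  have hs : 0 < Real.sqrt 3 := by positivity
  have key : ∀ α γ : ℝ, ∀ ξ : ℂ, ‖ξ‖ = 1 → 0 < (ξ ^ 2).im →
      0 < ((I * conj ξ) * ((1 : ℂ) + 2 * γ * ε * 1 ^ 2)).re →
      Complex.normSq ((I * conj ξ) * (α + 1 * ε + γ * 1 ^ 2 * ε ^ 2)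
        + conj ((I * conj ξ) * (γ * 1 ^ 2))) <
        ((I * conj ξ) * ((1 : ℂ) + 2 * γ * ε * 1 ^ 2)).re ^ 2 →
      0 < ((-I * conj ξ) * (om + 2 * γ * ε * om ^ 2)).re →
      Complex.normSq ((-I * conj ξ) * (α + om * ε + γ * om ^ 2 * ε ^ 2)
        + conj ((-I * conj ξ) * (γ * om ^ 2))) <
        ((-I * conj ξ) * (om + 2 * γ * ε * om ^ 2)).re ^ 2 →
      ∃ α γ : ℝ, ∃ ξ : ℂ, ‖ξ‖ = 1 ∧ 0 < (ξ ^ 2).im ∧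
      (∃ m > 0, ∀ z, (conj ξ * qf α γ ε 1 z).im ≤ - (m * ‖z‖ ^ 2)) ∧
      (∃ m > 0, ∀ z, m * ‖z‖ ^ 2 ≤ (conj ξ * qf α γ ε om z).im) := by
    intro α γ ξ a1 a2 a3 a4 a5 a6
    obtain ⟨m, hm, H⟩ := quad_lower _ _ _ _ a3 a4
    obtain ⟨m', hm', H'⟩ := quad_lower _ _ _ _ a5 a6
    refine ⟨α, γ, ξ, a1, a2, ⟨m, hm, fun z => ?_⟩, ⟨m', hm', fun z => ?_⟩⟩
    · have := H z
      rw [← qf_expand, mul_assoc, Complex.I_mul_re] at this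
      linarith
    · have := H' z
      rw [← qf_expand, mul_assoc, neg_mul, Complex.neg_re, Complex.I_mul_re] at this
      linarith
  rcases h with h | h
  · apply key 0 0 ⟨1 / 2, Real.sqrt 3 / 2⟩
    · rw [← sq_eq_sq₀ (norm_nonneg _) zero_le_one, ← Complex.normSq_eq_norm_sq, Complex.normSq_mk]
      nlinarith
    · simp [pow_two]; linarith
    · simp
    · simp [Complex.normSq_apply, om]; nlinarith
    · simp [om]; nlinarith
    · simp [Complex.normSq_apply, om]; nlinarith
  · obtain ⟨δ, hδ, g1, g2⟩ := delta_exists ε h0 h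
    have hg : (1 / ε - δ) * ε = 1 - δ * ε := by field_simp
    set γ := 1 / ε - δ with hγ
    have hgg : γ * ε ^ 2 = ε - δ * ε ^ 2 := by rw [pow_two, ← mul_assoc, hg]; ring
    apply key (ε - δ * ε ^ 2 - γ) γ ⟨Real.sqrt 3 / 2, 1 / 2⟩
    · rw [← sq_eq_sq₀ (norm_nonneg _) zero_le_one, ← Complex.normSq_eq_norm_sq, Complex.normSq_mk]
      nlinarith
    · simp [pow_two]; linarith
    · simp; linarith
    · have hE : ∀ a : ℝ, ((I * conj (⟨Real.sqrt 3 / 2, 1 / 2⟩ : ℂ)) * (a : ℂ)).re = a / 2 := by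
        intro a; simp; ring
      have e1 : ((1 : ℂ) + 2 * γ * ε * 1 ^ 2) = ((1 + 2 * γ * ε : ℝ) : ℂ) := by push_cast; ring
      have e2 : (((ε - δ * ε ^ 2 - γ : ℝ) : ℂ) + 1 * ε + γ * 1 ^ 2 * ε ^ 2)
          = ((3 * ε - 2 * δ * ε ^ 2 - γ : ℝ) : ℂ) := by
        have : ((γ * ε ^ 2 : ℝ) : ℂ) = ((ε - δ * ε ^ 2 : ℝ) : ℂ) := by rw [hgg]
        push_cast at this ⊢
        linear_combination this
      rw [e1, e2, hE]
      have e3 : ((1 + 2 * γ * ε) / 2) ^ 2 = (1 / 2 + γ * ε) ^ 2 := by ring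
      rw [e3]
      refine lt_of_eq_of_lt ?_ g2
      generalize 3 * ε - 2 * δ * ε ^ 2 - γ = X
      simp [Complex.normSq_apply]
      linear_combination (X / 2 - γ / 2) ^ 2 * h3
    · have : ((-I * conj (⟨Real.sqrt 3 / 2, 1 / 2⟩ : ℂ)) * (om + 2 * γ * ε * om ^ 2)).re
          = δ * ε := by
        rw [om_sq]; simp [om]
        linear_combination (1/4 + γ * ε/2 * (-1)) * h3 - hg
      rw [this]; positivity
    · have : ((-I * conj (⟨Real.sqrt 3 / 2, 1 / 2⟩ : ℂ)) * (om + 2 * γ * ε * om ^ 2)).re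
          = δ * ε := by
        rw [om_sq]; simp [om]
        linear_combination (1/4 + γ * ε/2 * (-1)) * h3 - hg
      rw [this]
      have hv : ((-I * conj (⟨Real.sqrt 3 / 2, 1 / 2⟩ : ℂ)) * (((ε - δ * ε ^ 2 - γ : ℝ) : ℂ) + om * ε + γ * om ^ 2 * ε ^ 2)
        + conj ((-I * conj (⟨Real.sqrt 3 / 2, 1 / 2⟩ : ℂ)) * (γ * om ^ 2))) = ((δ * ε ^ 2 : ℝ) : ℂ) := by
        have eη : (-I * conj (⟨Real.sqrt 3 / 2, 1 / 2⟩ : ℂ)) = om ^ 2 := by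
          rw [om_sq]; apply Complex.ext <;> simp [om] <;> ring
        have s1 : om ^ 2 * om = 1 := by rw [om_sq, mul_comm, om_mul_conj]
        have s2 : om ^ 2 * om ^ 2 = om := by linear_combination om * s1
        have s3 : 1 + om + om ^ 2 = 0 := by
          rw [om_sq]; apply Complex.ext <;> simp [om] <;> ring
        have s4 : conj (om ^ 2 * (γ * om ^ 2)) = γ * om ^ 2 := by
          rw [mul_left_comm, s2, map_mul, Complex.conj_ofReal, ← om_sq]
        rw [eη, s4]
        have : ((γ * ε ^ 2 : ℝ) : ℂ) = ((ε - δ * ε ^ 2 : ℝ) : ℂ) := by rw [hgg]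
        push_cast at this ⊢
        linear_combination (ε : ℂ) * s1 + (γ : ℂ) * ε ^ 2 * s2 + om * this + (ε - δ * ε ^ 2 : ℂ) * s3
      rw [hv, Complex.normSq_ofReal]
      have : δ * ε ^ 2 < δ * ε := by
        apply mul_lt_mul_of_pos_left _ hδ; nlinarith
      have p : 0 < δ * ε ^ 2 := by positivity
      rw [← pow_two]
      exact pow_lt_pow_left₀ this p.le two_ne_zero

theorem quadratic (ε : ℝ) (h0 : 0 < ε) (h1 : ε < 1)
    (h : ε ^ 2 < 3 / 4 ∨ 12 * ε ^ 4 - 15 * ε ^ 2 + 4 < 0) :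
    ∃ α γ : ℝ, ∃ ξ : ℂ, ∃ m : ℝ, 0 < m ∧ ‖ξ‖ = 1 ∧ 0 < (ξ ^ 2).im ∧
      (∀ z, (conj ξ * qf α γ ε 1 z).im ≤ - (m * ‖z‖ ^ 2)) ∧
      (∀ z, m * ‖z‖ ^ 2 ≤ (ξ * qf α γ ε 1 z).im) ∧
      (∀ z, m * ‖z‖ ^ 2 ≤ (conj ξ * qf α γ ε om z).im) ∧
      (∀ z, (ξ * qf α γ ε (conj om) z).im ≤ - (m * ‖z‖ ^ 2)) := by
  obtain ⟨α, γ, ξ, hξ, hi, ⟨m1, hm1, H1⟩, ⟨m2, hm2, H2⟩⟩ := quadratic_raw ε h0 h1 h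
  have A1 : ∀ z, (conj ξ * qf α γ ε 1 z).im ≤ - (min m1 m2 * ‖z‖ ^ 2) := fun z => by
    have := H1 z
    have := mul_le_mul_of_nonneg_right (min_le_left m1 m2) (sq_nonneg ‖z‖)
    linarith
  have A2 : ∀ z, min m1 m2 * ‖z‖ ^ 2 ≤ (conj ξ * qf α γ ε om z).im := fun z => by
    have := H2 z
    have := mul_le_mul_of_nonneg_right (min_le_right m1 m2) (sq_nonneg ‖z‖)
    linarith
  refine ⟨α, γ, ξ, min m1 m2, lt_min hm1 hm2, hξ, hi, A1, fun z => ?_, A2, fun z => ?_⟩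
  · have := A1 (conj z)
    have e : conj ξ * qf α γ ε 1 (conj z) = conj (ξ * qf α γ ε 1 z) := by
      rw [map_mul, ← qf_conj, map_one]
    rw [e, Complex.conj_im, Complex.norm_conj] at this
    linarith
  · have := A2 (conj z)
    have e : conj ξ * qf α γ ε om (conj z) = conj (ξ * qf α γ ε (conj om) z) := by
      rw [map_mul, ← qf_conj, Complex.conj_conj]
    rw [e, Complex.conj_im, Complex.norm_conj] at this
    linarith

theorem qf_upper (α γ ε : ℝ) (h0 : 0 < ε) (ν z : ℂ) (hν : ‖ν‖ = 1) :
    ‖qf α γ ε ν z‖ ≤ (|α| + (1 + ε) + |γ| * (1 + ε) ^ 2) * ‖z‖ ^ 2 := by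
  have hu : ‖conj z + ε * z‖ ≤ (1 + ε) * ‖z‖ := by
    refine (norm_add_le _ _).trans ?_
    rw [norm_mul, Complex.norm_conj, Complex.norm_real, Real.norm_of_nonneg h0.le]; linarith
  unfold qf
  refine (norm_add₃_le).trans ?_
  simp only [norm_mul, norm_pow, hν, Complex.norm_real, Real.norm_eq_abs, one_pow, mul_one, one_mul]
  have hz := norm_nonneg z
  have b1 := mul_le_mul_of_nonneg_left hu hz
  have b2 := mul_le_mul_of_nonneg_left (pow_le_pow_left₀ (norm_nonneg _) hu 2) (abs_nonneg γ)
  nlinarith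

theorem norm_sub_ge_im (s : ℝ) (a : ℂ) : |a.im| ≤ ‖(s : ℂ) - a‖ := by
  have := Complex.abs_im_le_norm ((s : ℂ) - a)
  simpa using this

theorem norm_sub_ge_rot (s : ℝ) (hs : 0 ≤ s) (ξ a : ℂ) (hξ : ‖ξ‖ = 1) (hi : 0 < (ξ ^ 2).im) :
    -(ξ * a).im ≤ ‖(s : ℂ) - conj ξ * a‖ := by
  have hc : ξ * conj ξ = 1 := by
    rw [Complex.mul_conj, Complex.normSq_eq_norm_sq, hξ]; simp
  have h1 : ‖(s : ℂ) - conj ξ * a‖ = ‖(s : ℂ) * ξ ^ 2 - ξ * a‖ := by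
    have : (s : ℂ) * ξ ^ 2 - ξ * a = ξ ^ 2 * ((s : ℂ) - conj ξ * a) := by
      linear_combination ξ * a * hc
    rw [this, norm_mul, norm_pow, hξ]; simp
  rw [h1]
  have h2 := (abs_le.mp (Complex.abs_im_le_norm ((s : ℂ) * ξ ^ 2 - ξ * a))).2
  rw [Complex.sub_im, Complex.im_ofReal_mul] at h2
  have := mul_nonneg hs hi.le
  linarith

theorem norm_sub_ge_rot2 (s : ℝ) (hs : 0 ≤ s) (ξ a : ℂ) (hξ : ‖ξ‖ = 1) (hi : 0 < (ξ ^ 2).im) :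
    (conj ξ * a).im ≤ ‖(s : ℂ) - ξ * a‖ := by
  have h := norm_sub_ge_rot s hs ξ (conj a) hξ hi
  have e1 : ξ * conj a = conj (conj ξ * a) := by simp
  have e2 : (s : ℂ) - conj ξ * conj a = conj ((s : ℂ) - ξ * a) := by simp
  rw [e1, e2, Complex.conj_im, Complex.norm_conj] at h
  linarith

theorem kallin_planes (α γ ε : ℝ) (ξ : ℂ) (m : ℝ) (h0 : 0 < ε) (hm : 0 < m) (hξ : ‖ξ‖ = 1)
    (hi : 0 < (ξ ^ 2).im)
    (A1 : ∀ z, (conj ξ * qf α γ ε 1 z).im ≤ - (m * ‖z‖ ^ 2))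
    (A2 : ∀ z, m * ‖z‖ ^ 2 ≤ (ξ * qf α γ ε 1 z).im)
    (A3 : ∀ z, m * ‖z‖ ^ 2 ≤ (conj ξ * qf α γ ε om z).im)
    (A4 : ∀ z, (ξ * qf α γ ε (conj om) z).im ≤ - (m * ‖z‖ ^ 2))
    (K : Set (ℂ × ℂ)) (hK : IsCompact K) (p : ℂ × ℂ → ℂ) (hp : IsPoly2 p) (Y0 : Set (ℂ × ℂ))
    (h3 : ∀ y ∈ K, ‖y.2‖ ≤ 3 * ‖y.1‖)
    (hY0 : ∀ y ∈ K, y ∈ Y0 → p y = qf α γ ε 1 y.1)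
    (hY1 : ∀ y ∈ K, y ∉ Y0 → p y = qf α γ ε om y.1 ∨ p y = qf α γ ε (conj om) y.1)
    (x : ℂ × ℂ) (hx : InHull K x) :
    x = 0 ∨ InHull (K ∩ Y0) x ∨ InHull (K \ Y0) x := by
  have hom : ‖om‖ = 1 := by
    have := om_mul_conj
    rw [Complex.mul_conj, Complex.normSq_eq_norm_sq] at this
    have h' : ‖om‖ ^ 2 = 1 := by exact_mod_cast this
    exact (sq_eq_sq₀ (norm_nonneg _) zero_le_one).mp (by rw [h', one_pow])
  have hom' : ‖conj om‖ = 1 := by rw [Complex.norm_conj, hom]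
  have trich : ∀ y ∈ K, p y = qf α γ ε 1 y.1 ∨ p y = qf α γ ε om y.1 ∨
      p y = qf α γ ε (conj om) y.1 := fun y hy => by
    by_cases h : y ∈ Y0
    · exact Or.inl (hY0 y hy h)
    · exact Or.inr (hY1 y hy h)
  set M : ℝ := |α| + (1 + ε) + |γ| * (1 + ε) ^ 2 with hM
  have hMpos : 0 < M := by positivity
  have hup : ∀ y ∈ K, ‖p y‖ ≤ M * ‖y.1‖ ^ 2 := fun y hy => by
    rcases trich y hy with h | h | h <;> rw [h]
    · exact qf_upper α γ ε h0 _ _ norm_one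
    · exact qf_upper α γ ε h0 _ _ hom
    · exact qf_upper α γ ε h0 _ _ hom'
  have hκ : ∀ y ∈ K, m / M * ‖p y‖ ≤ m * ‖y.1‖ ^ 2 := fun y hy => by
    have := mul_le_mul_of_nonneg_left (hup y hy) (div_pos hm hMpos).le
    refine this.trans (le_of_eq ?_)
    field_simp
  have R1 : ∀ y ∈ K, ∀ s : ℝ, 0 ≤ s → m * ‖y.1‖ ^ 2 ≤ ‖(s : ℂ) - conj ξ * p y‖ := by
    intro y hy s hs
    rcases trich y hy with h | h | h <;> rw [h]
    · have := A1 y.1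
      have h2 := norm_sub_ge_im s (conj ξ * qf α γ ε 1 y.1)
      have := (abs_le.mp h2).1
      linarith
    · exact (A3 _).trans ((le_abs_self _).trans (norm_sub_ge_im s _))
    · have := A4 y.1
      have := norm_sub_ge_rot s hs ξ (qf α γ ε (conj om) y.1) hξ hi
      linarith
  have R2 : ∀ y ∈ K, ∀ s : ℝ, 0 ≤ s → m * ‖y.1‖ ^ 2 ≤ ‖(s : ℂ) - ξ * p y‖ := by
    intro y hy s hs
    rcases trich y hy with h | h | h <;> rw [h]
    · exact (A2 _).trans ((le_abs_self _).trans (norm_sub_ge_im s _))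
    · exact (A3 _).trans (norm_sub_ge_rot2 s hs ξ _ hξ hi)
    · have := A4 y.1
      have h2 := norm_sub_ge_im s (ξ * qf α γ ε (conj om) y.1)
      have := (abs_le.mp h2).1
      linarith
  have hlow : ∀ y ∈ K, m * ‖y.1‖ ^ 2 ≤ ‖p y‖ := fun y hy => by
    have := R1 y hy 0 le_rfl
    simpa [hξ] using this
  have hpos : ∀ y ∈ K, p y ≠ 0 → 0 < m * ‖y.1‖ ^ 2 := fun y hy hne => by
    by_contra hcon
    have h1 : ‖y.1‖ ^ 2 ≤ 0 := by
      by_contra h2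
      exact hcon (mul_pos hm (not_le.mp h2))
    have h2 := hup y hy
    have h3 := norm_pos_iff.mpr hne
    nlinarith
  refine kallin K hK p hp ξ (m / M) hξ hi (div_pos hm hMpos)
    (fun y hy s hs => (hκ y hy).trans (R1 y hy s hs))
    (fun y hy s hs => (hκ y hy).trans (R2 y hy s hs)) Y0 ?_ ?_ (9 / m) (by positivity) ?_ ?_ x hx
  · intro y hy hy0 hne
    have := hpos y hy hne
    rw [hY0 y hy hy0]
    exact ⟨by linarith [A1 y.1], by linarith [A2 y.1]⟩
  · intro y hy hy0 hne
    have := hpos y hy hne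
    rcases hY1 y hy hy0 with h | h <;> rw [h]
    · left; linarith [A3 y.1]
    · right; linarith [A4 y.1]
  · intro y hy
    have := hlow y hy
    rw [div_mul_eq_mul_div, le_div_iff₀ hm]
    nlinarith [norm_nonneg (p y)]
  · intro y hy
    have := hlow y hy
    have h2 := pow_le_pow_left₀ (norm_nonneg _) (h3 y hy) 2
    rw [div_mul_eq_mul_div, le_div_iff₀ hm]
    nlinarith [norm_nonneg (p y)]

/-! ### The planes -/

/-- A normalized totally real plane. -/
def Pl (ε : ℝ) (ν : ℂ) : Set (ℂ × ℂ) := {y | y.2 + ε * y.1 = ν * (conj y.1 + ε * y.1)}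

theorem P0_eq (ε : ℝ) : P0 = Pl ε 1 := by
  ext y; simp [P0, Pl]

theorem P1_eq (t : ℝ) (ht : 0 < t) : P1 t = Pl t⁻¹ om := by
  have h3 : (Real.sqrt 3 : ℂ) * (Real.sqrt 3 : ℂ) = 3 := by
    rw [← Complex.ofReal_mul, Real.mul_self_sqrt (by norm_num)]; norm_num
  have hom : om = (-1 + I * Real.sqrt 3) / 2 := by
    apply Complex.ext <;> simp [om]
  have ht' : (t : ℂ) ≠ 0 := by exact_mod_cast ht.ne'
  ext y
  simp only [P1, Pl, Set.mem_setOf_eq, hom]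
  have e : -((Real.sqrt 3 : ℂ) * ((Real.sqrt 3 : ℂ) - Complex.I) / (2 * (t : ℂ))) =
    -(3 - I * Real.sqrt 3) / 2 * (t : ℂ)⁻¹ := by
    rw [mul_sub, h3]; field_simp
  rw [e, Complex.ofReal_inv]
  constructor
  · intro h; linear_combination h
  · intro h; linear_combination h

theorem P2_eq (t : ℝ) (ht : 0 < t) : P2 t = Pl t⁻¹ (conj om) := by
  have h3 : (Real.sqrt 3 : ℂ) * (Real.sqrt 3 : ℂ) = 3 := by
    rw [← Complex.ofReal_mul, Real.mul_self_sqrt (by norm_num)]; norm_num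
  have hom : conj om = (-1 - I * Real.sqrt 3) / 2 := by
    apply Complex.ext <;> simp [om] <;> ring
  have ht' : (t : ℂ) ≠ 0 := by exact_mod_cast ht.ne'
  ext y
  simp only [P2, Pl, Set.mem_setOf_eq, hom]
  have e : -((Real.sqrt 3 : ℂ) * ((Real.sqrt 3 : ℂ) + Complex.I) / (2 * (t : ℂ))) =
    -(3 + I * Real.sqrt 3) / 2 * (t : ℂ)⁻¹ := by
    rw [mul_add, h3]; field_simp
  rw [e, Complex.ofReal_inv]
  constructor
  · intro h; linear_combination h
  · intro h; linear_combination h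

theorem Pl_norm (ε : ℝ) (h0 : 0 < ε) (h1 : ε < 1) (ν : ℂ) (hν : ‖ν‖ = 1) (y : ℂ × ℂ)
    (hy : y ∈ Pl ε ν) : ‖y.2‖ ≤ 3 * ‖y.1‖ := by
  have e : y.2 = ν * (conj y.1 + ε * y.1) - ε * y.1 := by
    have : y.2 + ε * y.1 = ν * (conj y.1 + ε * y.1) := hy
    linear_combination this
  have a1 : ‖(ε : ℂ) * y.1‖ = ε * ‖y.1‖ := by
    rw [norm_mul, Complex.norm_real, Real.norm_of_nonneg h0.le]
  have a2 := norm_add_le (conj y.1) (ε * y.1)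
  have a3 := norm_sub_le (ν * (conj y.1 + ε * y.1)) (ε * y.1)
  rw [norm_mul, hν, ← e] at a3
  rw [Complex.norm_conj] at a2
  nlinarith [norm_nonneg y.1]

theorem Pl_closed (ε : ℝ) (ν : ℂ) : IsClosed (Pl ε ν) := by
  apply isClosed_eq
  · fun_prop
  · have : Continuous (fun y : ℂ × ℂ => conj y.1) := Complex.continuous_conj.comp continuous_fst
    fun_prop

/-- The Kallin polynomial. -/
noncomputable def pj (α γ ε : ℝ) (ρ : ℂ) (y : ℂ × ℂ) : ℂ :=
  α * (y.1 * y.1) + (ρ * (y.1 * (y.2 + ε * y.1))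
    + (γ * ρ ^ 2) * ((y.2 + ε * y.1) * (y.2 + ε * y.1)))

theorem pj_poly (α γ ε : ℝ) (ρ : ℂ) : IsPoly2 (pj α γ ε ρ) := by
  have hw : IsPoly2 (fun y => y.2 + ε * y.1) := IsPoly2.snd.add ((IsPoly2.const _).mul IsPoly2.fst)
  exact ((IsPoly2.const _).mul (IsPoly2.fst.mul IsPoly2.fst)).add
    (((IsPoly2.const _).mul (IsPoly2.fst.mul hw)).add ((IsPoly2.const _).mul (hw.mul hw)))

theorem pj_on (α γ ε : ℝ) (ρ ν : ℂ) (y : ℂ × ℂ) (hy : y ∈ Pl ε ν) :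
    pj α γ ε ρ y = qf α γ ε (ρ * ν) y.1 := by
  have : y.2 + ε * y.1 = ν * (conj y.1 + ε * y.1) := hy
  simp only [pj, qf, this]; ring

theorem hull_real (X : Set (ℂ × ℂ)) (l : ℂ × ℂ → ℂ) (hl : IsPoly2 l) (M : ℝ)
    (hX : ∀ y ∈ X, (l y).im = 0 ∧ ‖l y‖ ≤ M) (hM : 0 ≤ M) (x : ℂ × ℂ) (hx : InHull X x) :
    (l x).im = 0 := by
  by_contra hb
  set b := (l x).im with hbdef
  set N : ℝ := (M ^ 2 + 1) / b with hN
  have h1 := hx (fun y => l y + ((N : ℂ) * I)) (hl.add (IsPoly2.const _)) (Real.sqrt (M ^ 2 + N ^ 2))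
    (Real.sqrt_nonneg _) (fun y hy => by
      apply Real.le_sqrt_of_sq_le
      obtain ⟨h2, h3⟩ := hX y hy
      rw [← Complex.normSq_eq_norm_sq, Complex.normSq_apply]
      simp [h2]
      have h4 := Complex.abs_re_le_norm (l y)
      have h5 : |(l y).re| ≤ |M| := (h4.trans h3).trans (le_abs_self _)
      have := sq_le_sq.mpr h5
      nlinarith)
  have h2 := pow_le_pow_left₀ (norm_nonneg _) h1 2
  rw [Real.sq_sqrt (by positivity), ← Complex.normSq_eq_norm_sq, Complex.normSq_apply] at h2
  simp at h2
  rw [← hbdef] at h2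
  have h3 : b * N = M ^ 2 + 1 := by rw [hN]; field_simp
  nlinarith [sq_nonneg (l x).re, sq_nonneg b, sq_nonneg M]

theorem eball_norms {y : ℂ × ℂ} (hy : y ∈ eClosedBall 1) : ‖y.1‖ ≤ 1 ∧ ‖y.2‖ ≤ 1 := by
  have : ‖y.1‖ ^ 2 + ‖y.2‖ ^ 2 ≤ 1 ^ 2 := hy
  constructor <;> nlinarith [norm_nonneg y.1, norm_nonneg y.2]

theorem hull_plane (ε : ℝ) (h0 : 0 < ε) (h1 : ε < 1) (ν : ℂ) (hν : ‖ν‖ = 1) (x : ℂ × ℂ)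
    (hx : InHull (Pl ε ν ∩ eClosedBall 1) x) : x ∈ Pl ε ν := by
  have hc : ν * conj ν = 1 := by
    rw [Complex.mul_conj, Complex.normSq_eq_norm_sq, hν]; simp
  have hw : IsPoly2 (fun y => conj ν * (y.2 + ε * y.1) + (-(ε : ℂ)) * y.1) :=
    ((IsPoly2.const _).mul (IsPoly2.snd.add ((IsPoly2.const _).mul IsPoly2.fst))).add
      ((IsPoly2.const _).mul IsPoly2.fst)
  set g : ℂ × ℂ → ℂ := fun y => conj ν * (y.2 + ε * y.1) + (-(ε : ℂ)) * y.1 with hg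
  have hgon : ∀ y ∈ Pl ε ν, g y = conj y.1 := fun y hy => by
    have : y.2 + ε * y.1 = ν * (conj y.1 + ε * y.1) := hy
    simp only [hg, this]
    linear_combination (conj y.1 + ε * y.1) * hc
  have r1 := hull_real _ (fun y => y.1 + g y) (IsPoly2.fst.add hw) 2 (fun y hy => by
    have e := hgon y hy.1
    have hn := (eball_norms hy.2).1
    beta_reduce
    rw [e]
    refine ⟨by simp, (norm_add_le _ _).trans ?_⟩
    rw [Complex.norm_conj]; linarith) (by norm_num) x hx
  have r2 := hull_real _ (fun y => I * (y.1 + (-1) * g y))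
    ((IsPoly2.const _).mul (IsPoly2.fst.add ((IsPoly2.const _).mul hw))) 2 (fun y hy => by
    have e := hgon y hy.1
    have hn := (eball_norms hy.2).1
    beta_reduce
    rw [e]
    refine ⟨by simp, ?_⟩
    rw [norm_mul, Complex.norm_I, one_mul]
    refine (norm_add_le _ _).trans ?_
    rw [norm_mul, Complex.norm_conj]; simp; linarith) (by norm_num) x hx
  have e : g x = conj x.1 := by
    simp only [Complex.I_mul_im] at r2
    apply Complex.ext
    · simp at r2 ⊢; linarith
    · simp at r1 ⊢; linarith
  simp only [hg] at e
  change x.2 + ε * x.1 = ν * (conj x.1 + ε * x.1)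
  linear_combination ν * e - (x.2 + ε * x.1) * hc

theorem hull_ball (X : Set (ℂ × ℂ)) (hX : X ⊆ eClosedBall 1) (x : ℂ × ℂ) (hx : InHull X x) :
    x ∈ eClosedBall 1 := by
  set A : ℝ := ‖x.1‖ ^ 2 + ‖x.2‖ ^ 2 with hA
  have hA0 : 0 ≤ A := by positivity
  have h := hx (fun y => conj x.1 * y.1 + conj x.2 * y.2)
    (((IsPoly2.const _).mul IsPoly2.fst).add ((IsPoly2.const _).mul IsPoly2.snd))
    (Real.sqrt A) (Real.sqrt_nonneg _) (fun y hy => by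
      apply Real.le_sqrt_of_sq_le
      have hb : ‖y.1‖ ^ 2 + ‖y.2‖ ^ 2 ≤ 1 ^ 2 := hX hy
      have h1 := norm_add_le (conj x.1 * y.1) (conj x.2 * y.2)
      rw [norm_mul, norm_mul, Complex.norm_conj, Complex.norm_conj] at h1
      have h2 := pow_le_pow_left₀ (norm_nonneg _) h1 2
      have h3 : (‖x.1‖ * ‖y.1‖ + ‖x.2‖ * ‖y.2‖) ^ 2 ≤ A * (‖y.1‖ ^ 2 + ‖y.2‖ ^ 2) := by
        rw [hA]; nlinarith [sq_nonneg (‖x.1‖ * ‖y.2‖ - ‖x.2‖ * ‖y.1‖)]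
      have h4 := mul_le_mul_of_nonneg_left hb hA0
      linarith)
  have e : conj x.1 * x.1 + conj x.2 * x.2 = (A : ℂ) := by
    rw [mul_comm, Complex.mul_conj, mul_comm, Complex.mul_conj, Complex.normSq_eq_norm_sq,
      Complex.normSq_eq_norm_sq, hA]; push_cast; ring
  beta_reduce at h
  rw [e, Complex.norm_real, Real.norm_of_nonneg hA0] at h
  have h2 := pow_le_pow_left₀ hA0 h 2
  rw [Real.sq_sqrt hA0] at h2
  change A ≤ 1 ^ 2
  nlinarith

theorem eball_compact : IsCompact (eClosedBall 1) := by
  apply Metric.isCompact_of_isClosed_isBounded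
  · exact isClosed_le (by fun_prop) (by fun_prop)
  · apply (Metric.isBounded_closedBall (x := (0 : ℂ × ℂ)) (r := 1)).subset
    intro y hy
    have := eball_norms hy
    rw [mem_closedBall_zero_iff, Prod.norm_def]
    exact max_le this.1 this.2

theorem polyConvex_of (K : Set (ℂ × ℂ)) (hK : IsCompact K) (hne : K.Nonempty)
    (h : ∀ x, InHull K x → x ∈ K) : PolyConvex2 K := by
  apply Set.Subset.antisymm
  · intro x hx
    apply h
    rintro f ⟨P, hP⟩ C hC hb
    rw [hP]
    refine (hx P).trans (csSup_le (hne.image _) ?_)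
    rintro _ ⟨y, hy, rfl⟩
    beta_reduce
    rw [← hP]; exact hb y hy
  · intro x hx P
    apply le_csSup
    · apply (hK.image_of_continuousOn _).bddAbove
      apply Continuous.continuousOn
      apply Continuous.norm
      have hc : Continuous (fun w : ℂ × ℂ => (fun i : Fin 2 => if i = 0 then w.1 else w.2)) := by
        apply continuous_pi
        intro i
        by_cases hi : i = 0
        · simp only [hi, if_true]; fun_prop
        · simp only [hi, if_false]; fun_prop
      exact (MvPolynomial.continuous_eval P).comp hc
    · exact ⟨x, hx, rfl⟩

theorem main_planes (ε : ℝ) (h0 : 0 < ε) (h1 : ε < 1)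
    (h : ε ^ 2 < 3 / 4 ∨ 12 * ε ^ 4 - 15 * ε ^ 2 + 4 < 0) :
    PolyConvex2 ((Pl ε 1 ∪ Pl ε om ∪ Pl ε (conj om)) ∩ eClosedBall 1) := by
  obtain ⟨α, γ, ξ, m, hm, hξ, hi, A1, A2, A3, A4⟩ := quadratic ε h0 h1 h
  have hoc := om_mul_conj
  have hom : ‖om‖ = 1 := by
    have := om_mul_conj
    rw [Complex.mul_conj, Complex.normSq_eq_norm_sq] at this
    have h' : ‖om‖ ^ 2 = 1 := by exact_mod_cast this
    exact (sq_eq_sq₀ (norm_nonneg _) zero_le_one).mp (by rw [h', one_pow])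
  have hom' : ‖conj om‖ = 1 := by rw [Complex.norm_conj, hom]
  have hcc : conj om * conj om = om := by
    rw [← pow_two, ← map_pow, om_sq, Complex.conj_conj]
  have hK : IsCompact ((Pl ε 1 ∪ Pl ε om ∪ Pl ε (conj om)) ∩ eClosedBall 1) :=
    eball_compact.inter_left (((Pl_closed _ _).union (Pl_closed _ _)).union (Pl_closed _ _))
  have hK2 : IsCompact ((Pl ε om ∪ Pl ε (conj om)) ∩ eClosedBall 1) :=
    eball_compact.inter_left ((Pl_closed _ _).union (Pl_closed _ _))
  have hz : (0 : ℂ × ℂ) ∈ (Pl ε 1 ∪ Pl ε om ∪ Pl ε (conj om)) ∩ eClosedBall 1 := by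
    refine ⟨Or.inr ?_, ?_⟩
    · simp [Pl]
    · simp [eClosedBall]
  refine polyConvex_of _ hK ⟨0, hz⟩ (fun x hx => ?_)
  have hball := hull_ball _ Set.inter_subset_right x hx
  refine ⟨?_, hball⟩
  have first := kallin_planes α γ ε ξ m h0 hm hξ hi A1 A2 A3 A4 _ hK (pj α γ ε 1)
    (pj_poly _ _ _ _) (Pl ε 1)
    (by
      rintro y ⟨(hy | hy) | hy, -⟩
      · exact Pl_norm ε h0 h1 _ norm_one y hy
      · exact Pl_norm ε h0 h1 _ hom y hy
      · exact Pl_norm ε h0 h1 _ hom' y hy)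
    (fun y _ hy => by rw [pj_on _ _ _ _ _ _ hy, one_mul])
    (by
      rintro y ⟨(hy | hy) | hy, -⟩ hn
      · exact absurd hy hn
      · left; rw [pj_on _ _ _ _ _ _ hy, one_mul]
      · right; rw [pj_on _ _ _ _ _ _ hy, one_mul]) x hx
  rcases first with rfl | h2 | h2
  · exact hz.1
  · left; left
    exact hull_plane ε h0 h1 1 norm_one x (h2.mono (fun y hy => ⟨hy.2, hy.1.2⟩))
  · have hx2 : InHull ((Pl ε om ∪ Pl ε (conj om)) ∩ eClosedBall 1) x := h2.mono (by
      rintro y ⟨⟨(hy | hy) | hy, hb⟩, hn⟩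
      · exact absurd hy hn
      · exact ⟨Or.inl hy, hb⟩
      · exact ⟨Or.inr hy, hb⟩)
    have second := kallin_planes α γ ε ξ m h0 hm hξ hi A1 A2 A3 A4 _ hK2 (pj α γ ε (conj om))
      (pj_poly _ _ _ _) (Pl ε om)
      (by
        rintro y ⟨hy | hy, -⟩
        · exact Pl_norm ε h0 h1 _ hom y hy
        · exact Pl_norm ε h0 h1 _ hom' y hy)
      (fun y _ hy => by rw [pj_on _ _ _ _ _ _ hy, mul_comm, hoc])
      (by
        rintro y ⟨hy | hy, -⟩ hn
        · exact absurd hy hn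
        · left; rw [pj_on _ _ _ _ _ _ hy, hcc]) x hx2
    rcases second with rfl | h3 | h3
    · exact hz.1
    · left; right
      exact hull_plane ε h0 h1 om hom x (h3.mono (fun y hy => ⟨hy.2, hy.1.2⟩))
    · right
      refine hull_plane ε h0 h1 (conj om) hom' x (h3.mono ?_)
      rintro y ⟨⟨hy | hy, hb⟩, hn⟩
      · exact absurd hy hn
      · exact ⟨hy, hb⟩

/-- for `t > √(15 − √33)/(2√2)`, `P₀ᵗ ∪ P₁ᵗ ∪ P₂ᵗ` is locally polynomially
convex at the origin. -/
theorem stmt_2 (t : ℝ) (ht : Real.sqrt (15 - Real.sqrt 33) / (2 * Real.sqrt 2) < t) :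
    ∃ r > (0 : ℝ), PolyConvex2 ((P0 ∪ P1 t ∪ P2 t) ∩ eClosedBall r) := by
  have h33 : Real.sqrt 33 ^ 2 = 33 := Real.sq_sqrt (by norm_num)
  have h33p : 0 ≤ Real.sqrt 33 := Real.sqrt_nonneg _
  have hlt : Real.sqrt 33 < 6 := by nlinarith
  have hgt : 5 < Real.sqrt 33 := by nlinarith
  have hs : 0 < Real.sqrt (15 - Real.sqrt 33) := Real.sqrt_pos.mpr (by linarith)
  have ht0 : 0 < t := lt_trans (by positivity) ht
  have hsq : (15 - Real.sqrt 33) / 8 < t ^ 2 := by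
    have := pow_lt_pow_left₀ ht (by positivity) two_ne_zero
    rw [div_pow, mul_pow, Real.sq_sqrt (by linarith), Real.sq_sqrt (by norm_num)] at this
    linarith
  have ht1 : 1 < t := by nlinarith
  refine ⟨1, one_pos, ?_⟩
  rw [P0_eq t⁻¹, P1_eq t ht0, P2_eq t ht0]
  apply main_planes _ (inv_pos.mpr ht0) (inv_lt_one_of_one_lt₀ ht1)
  by_cases hc : 4 / 3 < t ^ 2
  · left
    rw [inv_pow, inv_lt_comm₀ (by positivity) (by norm_num)]
    linarith
  · right
    have hc' := not_lt.mp hc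
    have e : 12 * t⁻¹ ^ 4 - 15 * t⁻¹ ^ 2 + 4 = (4 * (t ^ 2) ^ 2 - 15 * t ^ 2 + 12) / t ^ 4 := by
      field_simp
      ring
    rw [e]
    apply div_neg_of_neg_of_pos _ (by positivity)
    nlinarith
end

section
/- For every t with 0 < t < 1 and every r > 0, the compact set (P₀ᵗ ∪ P₁ᵗ ∪ P₂ᵗ) ∩ B̄(0;r) is not polynomially convex; in particular P₀ᵗ ∪ P₁ᵗ ∪ P₂ᵗ is not locally polynomially convex at the origin. -/
open Complex ComplexConjugate

open MeasureTheory Filter Topology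

lemma aux_norm_cosh (w : ℂ) : ‖Complex.cosh w‖ ≤ Real.exp |w.re| := by
  rw [Complex.cosh, norm_div]
  have h1 : ‖Complex.exp w‖ ≤ Real.exp |w.re| := by
    rw [Complex.norm_exp]; exact Real.exp_le_exp.2 (le_abs_self _)
  have h2 : ‖Complex.exp (-w)‖ ≤ Real.exp |w.re| := by
    rw [Complex.norm_exp]; exact Real.exp_le_exp.2 (by simpa using neg_le_abs w.re)
  have := norm_add_le (Complex.exp w) (Complex.exp (-w))
  simp only [Complex.norm_ofNat]
  linarith

lemma aux_norm_sinh (w : ℂ) : ‖Complex.sinh w‖ ≤ Real.exp |w.re| := by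
  rw [Complex.sinh, norm_div]
  have h1 : ‖Complex.exp w‖ ≤ Real.exp |w.re| := by
    rw [Complex.norm_exp]; exact Real.exp_le_exp.2 (le_abs_self _)
  have h2 : ‖Complex.exp (-w)‖ ≤ Real.exp |w.re| := by
    rw [Complex.norm_exp]; exact Real.exp_le_exp.2 (by simpa using neg_le_abs w.re)
  have := norm_sub_le (Complex.exp w) (Complex.exp (-w))
  simp only [Complex.norm_ofNat]
  linarith

lemma aux_re_dx (d : ℂ) (x : ℝ) : |(d * x).re| = |d.re| * |x| := by
  simp [abs_mul]

lemma aux_cosh_ge (x : ℝ) : Real.exp |x| / 2 ≤ Real.cosh x := by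
  rw [← Real.cosh_abs, Real.cosh_eq]
  have := Real.exp_pos (-|x|)
  linarith

lemma aux_cosh_le (x : ℝ) : Real.cosh x ≤ Real.exp |x| := by
  rw [← Real.cosh_abs, Real.cosh_eq]
  have := Real.exp_le_exp.2 (show -|x| ≤ |x| by have := abs_nonneg x; linarith)
  linarith

lemma aux_s_re {y : ℂ} (hy : -(1/2) ≤ y.re) (x : ℝ) :
    Real.exp |x| / 4 ≤ (y + (Real.cosh x : ℂ)).re := by
  have h1 := aux_cosh_ge x
  have h2 := Real.one_le_cosh x
  simp only [Complex.add_re, Complex.ofReal_re]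
  linarith

lemma aux_s_pos {y : ℂ} (hy : -(1/2) ≤ y.re) (x : ℝ) :
    0 < (y + (Real.cosh x : ℂ)).re := by
  have := aux_s_re hy x
  have := Real.exp_pos |x|
  linarith

lemma aux_s_slit {y : ℂ} (hy : -(1/2) ≤ y.re) (x : ℝ) :
    (y + (Real.cosh x : ℂ)) ∈ Complex.slitPlane := Or.inl (aux_s_pos hy x)

lemma aux_s_norm {y : ℂ} (hy : -(1/2) ≤ y.re) (x : ℝ) :
    Real.exp |x| / 4 ≤ ‖y + (Real.cosh x : ℂ)‖ :=
  (aux_s_re hy x).trans (Complex.re_le_norm _)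

lemma aux_pow_norm {y : ℂ} (hy : -(1/2) ≤ y.re) (x : ℝ) {a : ℝ} (ha : 0 ≤ a) :
    ‖(y + (Real.cosh x : ℂ)) ^ (-(a : ℂ))‖ ≤ 4 ^ a * Real.exp (-a * |x|) := by
  rw [← Complex.ofReal_neg, Complex.norm_cpow_real]
  have h : (Real.exp |x| / 4) ^ (-a) = 4 ^ a * Real.exp (-a * |x|) := by
    rw [Real.div_rpow (Real.exp_pos _).le (by norm_num), ← Real.exp_mul,
      Real.rpow_neg (by norm_num : (0:ℝ) ≤ 4), div_inv_eq_mul]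
    ring_nf
  rw [← h]
  exact Real.rpow_le_rpow_of_nonpos (by positivity) (aux_s_norm hy x) (by linarith)

lemma aux_int_exp {b : ℝ} (hb : 0 < b) : Integrable (fun x : ℝ => Real.exp (-b * |x|)) := by
  have h : IntegrableOn (fun x : ℝ => Real.exp (-b * |x|)) (Set.Ioi 0) := by
    refine (integrableOn_exp_mul_Ioi (a := -b) (by linarith) 0).congr_fun ?_ measurableSet_Ioi
    intro x hx
    simp only [abs_of_pos (Set.mem_Ioi.1 hx)]
  have h' : IntegrableOn (fun x : ℝ => Real.exp (-b * |x|)) (Set.Iic 0) := by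
    have h2 := (Measure.measurePreserving_neg (volume : Measure ℝ)).integrableOn_comp_preimage
      (Homeomorph.neg ℝ).measurableEmbedding (f := fun x : ℝ => Real.exp (-b * |x|))
      (s := Set.Ioi 0)
    have h3 := h2.2 h
    rw [integrableOn_Iic_iff_integrableOn_Iio]
    simpa [Function.comp_def] using h3
  rw [← integrableOn_univ, ← Set.Iic_union_Ioi (a := (0:ℝ))]
  exact h'.union h

/-- integrand -/
noncomputable def FF (d : ℂ) (a : ℝ) (y : ℂ) (x : ℝ) : ℂ :=
  Complex.cosh (d * x) * (y + (Real.cosh x : ℂ)) ^ (-(a : ℂ))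

noncomputable def II (d : ℂ) (a : ℝ) (y : ℂ) : ℂ := ∫ x : ℝ, FF d a y x

lemma FF_norm (d : ℂ) {a : ℝ} (ha : 0 ≤ a) {y : ℂ} (hy : -(1/2) ≤ y.re) (x : ℝ) :
    ‖FF d a y x‖ ≤ 4 ^ a * Real.exp (-(a - |d.re|) * |x|) := by
  rw [FF, norm_mul]
  have h1 := aux_norm_cosh (d * x)
  rw [aux_re_dx] at h1
  have h2 := aux_pow_norm hy x ha
  calc _ ≤ Real.exp (|d.re| * |x|) * (4 ^ a * Real.exp (-a * |x|)) := by gcongr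
    _ = 4 ^ a * (Real.exp (|d.re| * |x|) * Real.exp (-a * |x|)) := by ring
    _ = _ := by rw [← Real.exp_add]; ring_nf

lemma FF_cont (d : ℂ) (a : ℝ) {y : ℂ} (hy : -(1/2) ≤ y.re) : Continuous (FF d a y) := by
  unfold FF
  refine Continuous.mul (by fun_prop) ?_
  refine Continuous.cpow ?_ continuous_const (fun x => aux_s_slit hy x)
  exact continuous_const.add (Complex.continuous_ofReal.comp Real.continuous_cosh)

lemma FF_int {d : ℂ} {a : ℝ} (ha : |d.re| < a) {y : ℂ} (hy : -(1/2) ≤ y.re) :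
    Integrable (FF d a y) := by
  have ha0 : 0 ≤ a := (abs_nonneg _).trans ha.le
  refine Integrable.mono' ((aux_int_exp (b := a - |d.re|) (by linarith)).const_mul (4 ^ a))
    (FF_cont d a hy).aestronglyMeasurable (ae_of_all _ fun x => FF_norm d ha0 hy x)

lemma II_hasDerivAt {d : ℂ} {a : ℝ} (ha : |d.re| < a) {y : ℂ} (hy : -(1/2) < y.re) :
    HasDerivAt (II d a) (-(a : ℂ) * II d (a + 1) y) y := by
  have ha0 : 0 ≤ a := (abs_nonneg _).trans ha.le
  have hs : {z : ℂ | -(1/2) < z.re} ∈ 𝓝 y :=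
    (isOpen_lt continuous_const Complex.continuous_re).mem_nhds hy
  have key := hasDerivAt_integral_of_dominated_loc_of_deriv_le (μ := volume) (F := FF d a)
    (F' := fun y x => -(a : ℂ) * FF d (a + 1) y x) (x₀ := y)
    (bound := fun x => a * (4 ^ (a+1) * Real.exp (-((a+1) - |d.re|) * |x|))) hs ?_ ?_ ?_ ?_ ?_ ?_
  · have := key.2
    rw [integral_const_mul] at this
    exact this
  · filter_upwards [hs] with z hz
    exact (FF_cont d a (le_of_lt hz)).aestronglyMeasurable
  · exact FF_int ha hy.le
  · exact ((FF_cont d (a+1) hy.le).aestronglyMeasurable).const_mul _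
  · refine ae_of_all _ fun x z hz => ?_
    rw [norm_mul, norm_neg, Complex.norm_of_nonneg ha0]
    gcongr
    exact FF_norm d (by linarith) (le_of_lt hz) x
  · exact ((aux_int_exp (b := a + 1 - |d.re|) (by linarith)).const_mul _).const_mul _
  · refine ae_of_all _ fun x z hz => ?_
    have h1 : HasDerivAt (fun z : ℂ => z + (Real.cosh x : ℂ)) 1 z :=
      (hasDerivAt_id z).add_const _
    have h2 := (h1.cpow_const (c := -(a : ℂ)) (aux_s_slit (le_of_lt hz) x)).const_mul
      (Complex.cosh (d * x))
    refine h2.congr_deriv ?_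
    simp only [FF]
    push_cast
    rw [show -(a : ℂ) - 1 = -((a : ℂ) + 1) by ring]
    ring

lemma II_norm {d : ℂ} {a : ℝ} (ha : |d.re| < a) :
    ∃ C : ℝ, 0 ≤ C ∧ ∀ y : ℂ, -(1/2) ≤ y.re → ‖II d a y‖ ≤ C := by
  have ha0 : 0 ≤ a := (abs_nonneg _).trans ha.le
  refine ⟨∫ x : ℝ, 4 ^ a * Real.exp (-(a - |d.re|) * |x|), integral_nonneg fun x => by positivity, ?_⟩
  intro y hy
  exact norm_integral_le_of_norm_le ((aux_int_exp (b := a - |d.re|) (by linarith)).const_mul (4 ^ a))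
    (ae_of_all _ fun x => FF_norm d ha0 hy x)

lemma II_norm' {d : ℂ} {a b : ℝ} (ha : |d.re| < a) (hb : 0 ≤ b) :
    ∃ C : ℝ, 0 ≤ C ∧ ∀ y : ℂ, 0 ≤ y.re → y ≠ 0 → ‖II d (a + b) y‖ ≤ C * ‖y‖ ^ (-b) := by
  have ha0 : 0 ≤ a := (abs_nonneg _).trans ha.le
  refine ⟨∫ x : ℝ, 4 ^ a * Real.exp (-(a - |d.re|) * |x|), integral_nonneg fun x => by positivity, ?_⟩
  intro y hy hy0
  rw [← integral_mul_const]
  refine norm_integral_le_of_norm_le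
    (((aux_int_exp (b := a - |d.re|) (by linarith)).const_mul (4 ^ a)).mul_const _)
    (ae_of_all _ fun x => ?_)
  have hy' : -(1/2) ≤ y.re := by linarith
  have hs : y + (Real.cosh x : ℂ) ≠ 0 := Complex.slitPlane_ne_zero (aux_s_slit hy' x)
  have h1 : FF d (a + b) y x = FF d a y x * (y + (Real.cosh x : ℂ)) ^ (-(b : ℂ)) := by
    simp only [FF, Complex.ofReal_add]
    rw [neg_add, Complex.cpow_add _ _ hs, mul_assoc]
  rw [h1, norm_mul]
  have h2 : ‖y‖ ≤ ‖y + (Real.cosh x : ℂ)‖ := by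
    rw [Complex.norm_def, Complex.norm_def]
    apply Real.sqrt_le_sqrt
    simp only [Complex.normSq_apply, Complex.add_re, Complex.add_im, Complex.ofReal_re,
      Complex.ofReal_im]
    have := Real.one_le_cosh x
    nlinarith
  have h3 : ‖(y + (Real.cosh x : ℂ)) ^ (-(b : ℂ))‖ ≤ ‖y‖ ^ (-b) := by
    rw [← Complex.ofReal_neg, Complex.norm_cpow_real]
    exact Real.rpow_le_rpow_of_nonpos (norm_pos_iff.2 hy0) h2 (by linarith)
  exact mul_le_mul (FF_norm d ha0 hy' x) h3 (norm_nonneg _) (by positivity)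

lemma II_conj {d : ℂ} (hd : conj d = d ∨ conj d = -d) (a : ℝ) {y : ℂ} (hy : -(1/2) ≤ y.re) :
    conj (II d a y) = II d a (conj y) := by
  rw [II, II, ← integral_conj]
  congr 1
  ext x
  simp only [FF, map_mul]
  have h1 : conj (Complex.cosh (d * x)) = Complex.cosh (d * x) := by
    rw [← Complex.cosh_conj, map_mul, Complex.conj_ofReal]
    rcases hd with h | h <;> simp [h]
  have h2 : conj ((y + (Real.cosh x : ℂ)) ^ (-(a : ℂ))) = (conj y + (Real.cosh x : ℂ)) ^ (-(a : ℂ)) := by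
    have hne : (y + (Real.cosh x : ℂ)).arg ≠ Real.pi :=
      (Complex.mem_slitPlane_iff_arg.1 (aux_s_slit hy x)).1
    have := Complex.conj_cpow (y + (Real.cosh x : ℂ)) (-(a : ℂ)) hne
    rw [map_add, Complex.conj_ofReal] at this
    rw [this]
    simp
  rw [h1, h2]

lemma II_rec {d : ℂ} {a : ℝ} (ha : |d.re| < a) {y : ℂ} (hy : -(1/2) ≤ y.re) :
    (d ^ 2 - (a : ℂ) ^ 2) * II d a y + (a : ℂ) * (2 * a + 1) * y * II d (a + 1) y
      + (a : ℂ) * (a + 1) * (1 - y ^ 2) * II d (a + 1 + 1) y = 0 := by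
  have ha0 : 0 ≤ a := (abs_nonneg _).trans ha.le
  have i0 := FF_int ha hy
  have i1 := FF_int (a := a + 1) (by linarith) hy (d := d)
  have i2 := FF_int (a := a + 1 + 1) (by linarith) hy (d := d)
  have key := integral_eq_zero_of_hasDerivAt_of_integrable
    (f := fun x : ℝ => d * Complex.sinh (d * x) * (y + (Real.cosh x : ℂ)) ^ (-(a : ℂ))
      + a * (Real.sinh x : ℂ) * FF d (a + 1) y x)
    (f' := fun x => (d ^ 2 - (a : ℂ) ^ 2) * FF d a y x + (a : ℂ) * (2 * a + 1) * y * FF d (a + 1) y x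
      + (a : ℂ) * (a + 1) * (1 - y ^ 2) * FF d (a + 1 + 1) y x) ?_ ?_ ?_
  · rw [integral_add, integral_add, integral_const_mul, integral_const_mul, integral_const_mul] at key
    · exact key
    · exact i0.const_mul _
    · exact i1.const_mul _
    · exact (i0.const_mul _).add (i1.const_mul _)
    · exact i2.const_mul _
  · intro x
    have hsl := aux_s_slit hy x
    have hs : y + (Real.cosh x : ℂ) ≠ 0 := Complex.slitPlane_ne_zero hsl
    have hid : HasDerivAt (fun x : ℝ => d * (x : ℂ)) d x := by
      simpa using (Complex.ofRealCLM.hasDerivAt (x := x)).const_mul d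
    have hc : HasDerivAt (fun x : ℝ => y + (Real.cosh x : ℂ)) (Real.sinh x : ℂ) x :=
      ((Real.hasDerivAt_cosh x).ofReal_comp).const_add y
    have hsh : HasDerivAt (fun x : ℝ => (Real.sinh x : ℂ)) (Real.cosh x : ℂ) x :=
      (Real.hasDerivAt_sinh x).ofReal_comp
    have hch := (Complex.hasDerivAt_cosh (d * x)).comp x hid
    have hshd := (Complex.hasDerivAt_sinh (d * x)).comp x hid
    have hp : ∀ c : ℂ, HasDerivAt (fun x : ℝ => (y + (Real.cosh x : ℂ)) ^ c)
        (c * (y + (Real.cosh x : ℂ)) ^ (c - 1) * (Real.sinh x : ℂ)) x := by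
      intro c
      have := (hasDerivAt_id (y + (Real.cosh x : ℂ))).cpow_const (c := c) hsl
      have h2 := HasDerivAt.comp x (h₂ := fun z : ℂ => z ^ c) (h := fun x : ℝ => y + (Real.cosh x : ℂ)) this hc
      refine h2.congr_deriv ?_
      simp
    have hT := ((hshd.const_mul d).mul (hp (-(a:ℂ)))).add
      ((hsh.const_mul (a : ℂ)).mul (hch.mul (hp (-((a + 1 : ℝ) : ℂ)))))
    have hT' := hT
    refine (hT.congr_deriv ?_)
    simp only [FF, Function.comp_apply, Pi.mul_apply]
    push_cast
    set s := y + Complex.cosh x with hsdef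
    have hsne : s ≠ 0 := by simpa [hsdef] using hs
    have hcs : Complex.cosh x = s - y := by rw [hsdef]; ring
    have hsq : Complex.sinh x ^ 2 = (s - y) ^ 2 - 1 := by
      rw [← hcs, Complex.cosh_sq]; ring
    rw [show -(a : ℂ) - 1 = -((a : ℂ) + 1) by ring,
      show -((a : ℂ) + 1) - 1 = -((a : ℂ) + 1 + 1) by ring]
    have e1 : s ^ (-((a : ℂ) + 1)) = s * s ^ (-((a : ℂ) + 1 + 1)) := by
      rw [show -((a : ℂ) + 1) = 1 + -((a : ℂ) + 1 + 1) by ring, Complex.cpow_add _ _ hsne,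
        Complex.cpow_one]
    have e0 : s ^ (-(a : ℂ)) = s * (s * s ^ (-((a : ℂ) + 1 + 1))) := by
      rw [← e1, show -(a : ℂ) = 1 + -((a : ℂ) + 1) by ring, Complex.cpow_add _ _ hsne,
        Complex.cpow_one]
    rw [e1, e0, hcs]
    generalize s ^ (-((a : ℂ) + 1 + 1)) = q
    linear_combination (-(a : ℂ) * (a + 1) * Complex.cosh (d * x) * q) * hsq
  · exact ((i0.const_mul _).add (i1.const_mul _)).add (i2.const_mul _)
  · refine Integrable.mono' ((aux_int_exp (b := a - |d.re|) (by linarith)).const_mul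
      (‖d‖ * 4 ^ a + a * 4 ^ (a + 1))) ?_ (ae_of_all _ fun x => ?_)
    · apply Continuous.aestronglyMeasurable
      refine Continuous.add (Continuous.mul (by fun_prop) ?_)
        (Continuous.mul ?_ (FF_cont d (a+1) hy))
      · refine Continuous.cpow ?_ continuous_const (fun x => aux_s_slit hy x)
        exact continuous_const.add (Complex.continuous_ofReal.comp Real.continuous_cosh)
      · exact continuous_const.mul (Complex.continuous_ofReal.comp Real.continuous_sinh)
    · refine (norm_add_le _ _).trans ?_
      rw [norm_mul, norm_mul, norm_mul, norm_mul, Complex.norm_of_nonneg ha0, Complex.norm_real]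
      have h1 := aux_norm_sinh (d * x)
      rw [aux_re_dx] at h1
      have h2 := aux_pow_norm hy x ha0
      have h3 : ‖Real.sinh x‖ ≤ Real.exp |x| := by
        have := aux_norm_sinh (x : ℂ)
        rw [← Complex.ofReal_sinh, Complex.norm_real] at this
        simpa using this
      have h4 := FF_norm d (a := a + 1) (by linarith) hy x
      calc _ ≤ ‖d‖ * Real.exp (|d.re| * |x|) * (4 ^ a * Real.exp (-a * |x|)) +
            a * Real.exp |x| * (4 ^ (a + 1) * Real.exp (-(a + 1 - |d.re|) * |x|)) := by gcongr
        _ = ‖d‖ * 4 ^ a * (Real.exp (|d.re| * |x|) * Real.exp (-a * |x|)) +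
            a * 4 ^ (a + 1) * (Real.exp |x| * Real.exp (-(a + 1 - |d.re|) * |x|)) := by ring
        _ = _ := by
          rw [← Real.exp_add, ← Real.exp_add]
          ring_nf

lemma sig_eq (x : ℝ) : Real.sigmoid (2 * x) = Real.exp x / (2 * Real.cosh x) := by
  rw [Real.sigmoid_def, Real.cosh_eq, inv_eq_one_div, div_eq_div_iff (by positivity) (by positivity)]
  have h : Real.exp (-(2 * x)) * Real.exp x = Real.exp (-x) := by rw [← Real.exp_add]; ring_nf
  linear_combination -h

lemma sig_eq' (x : ℝ) : 1 - Real.sigmoid (2 * x) = Real.exp (-x) / (2 * Real.cosh x) := by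
  have h1 := Real.cosh_pos x
  rw [sig_eq, eq_div_iff (by positivity), sub_mul, div_mul_cancel₀ _ (by positivity), Real.cosh_eq]
  ring

lemma sig_img : (fun x : ℝ => Real.sigmoid (2 * x)) '' Set.univ = Set.Ioo 0 1 := by
  rw [Set.image_univ, ← Real.range_sigmoid]
  exact (mul_left_surjective₀ (two_ne_zero' ℝ)).range_comp Real.sigmoid

lemma beta_int (u v : ℂ) : Complex.betaIntegral u v =
    ∫ x : ℝ, 2 * (((Real.sigmoid (2 * x) : ℝ) : ℂ) ^ u * ((1 - Real.sigmoid (2 * x) : ℝ) : ℂ) ^ v) := by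
  have h := integral_image_eq_integral_abs_deriv_smul (s := Set.univ)
    (f := fun x : ℝ => Real.sigmoid (2 * x))
    (f' := fun x => 2 * (Real.sigmoid (2 * x) * (1 - Real.sigmoid (2 * x))))
    MeasurableSet.univ ?_ ?_ (fun x : ℝ => (x : ℂ) ^ (u - 1) * (1 - (x : ℂ)) ^ (v - 1))
  · rw [sig_img, Measure.restrict_univ] at h
    rw [Complex.betaIntegral, intervalIntegral.integral_of_le zero_le_one,
      integral_Ioc_eq_integral_Ioo, h]
    congr 1
    ext x
    have p1 : 0 < Real.sigmoid (2 * x) := Real.sigmoid_pos _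
    have p2 : 0 < 1 - Real.sigmoid (2 * x) := by have := Real.sigmoid_lt_one (2 * x); linarith
    rw [abs_of_pos (by positivity)]
    generalize Real.sigmoid (2 * x) = s at *
    have e1 : (s : ℂ) ^ u = s * (s : ℂ) ^ (u - 1) := by
      rw [Complex.cpow_sub _ _ (by exact_mod_cast p1.ne'), Complex.cpow_one,
        mul_div_cancel₀ _ (by exact_mod_cast p1.ne')]
    have e2 : ((1 - s : ℝ) : ℂ) ^ v = (1 - s : ℝ) * ((1 - s : ℝ) : ℂ) ^ (v - 1) := by
      rw [Complex.cpow_sub _ _ (by exact_mod_cast p2.ne'), Complex.cpow_one,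
        mul_div_cancel₀ _ (by exact_mod_cast p2.ne')]
    rw [e1, e2, Complex.real_smul]
    push_cast
    ring
  · intro x _
    have h1 : HasDerivAt (fun x : ℝ => 2 * x) 2 x := by simpa using (hasDerivAt_id x).const_mul (2:ℝ)
    have := (Real.hasDerivAt_sigmoid (2 * x)).comp x h1
    refine (this.congr_deriv ?_).hasDerivWithinAt
    ring
  · intro x _ y _ hxy
    have := Real.sigmoid_strictMono.injective hxy
    linarith

lemma beta_int' (a : ℝ) (d : ℂ) : Complex.betaIntegral ((a + d) / 2) ((a - d) / 2) =
    (2 : ℂ) ^ (1 - (a : ℂ)) * ∫ x : ℝ, Complex.exp (d * x) * (0 + (Real.cosh x : ℂ)) ^ (-(a : ℂ)) := by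
  rw [beta_int, ← integral_const_mul]
  congr 1
  ext x
  rw [sig_eq', sig_eq, zero_add]
  have hc := Real.cosh_pos x
  have hcne : ((Real.cosh x : ℝ) : ℂ) ≠ 0 := by exact_mod_cast hc.ne'
  have h2c : ((2 * Real.cosh x : ℝ) : ℂ) ≠ 0 := by exact_mod_cast (by positivity : (2 * Real.cosh x) ≠ 0)
  have key : ∀ (y : ℝ) (w : ℂ), ((Real.exp y / (2 * Real.cosh x) : ℝ) : ℂ) ^ w =
      Complex.exp (y * w) * ((2 * Real.cosh x : ℝ) : ℂ) ^ (-w) := by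
    intro y w
    rw [Complex.cpow_def_of_ne_zero (by exact_mod_cast (by positivity : Real.exp y / (2 * Real.cosh x) ≠ 0)),
      Complex.cpow_def_of_ne_zero h2c, ← Complex.ofReal_log (by positivity),
      ← Complex.ofReal_log (by positivity), Real.log_div (by positivity) (by positivity),
      Real.log_exp, ← Complex.exp_add]
    congr 1
    push_cast
    ring
  rw [key, key]
  have e1 : ((2 * Real.cosh x : ℝ) : ℂ) ^ (-(((a : ℂ) + d) / 2)) * ((2 * Real.cosh x : ℝ) : ℂ) ^ (-(((a : ℂ) - d) / 2))
      = (2 : ℂ) ^ (-(a : ℂ)) * (Real.cosh x : ℂ) ^ (-(a : ℂ)) := by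
    rw [← Complex.cpow_add _ _ h2c, Complex.ofReal_mul,
      show -(((a : ℂ) + d) / 2) + -(((a : ℂ) - d) / 2) = -(a : ℂ) by ring]
    exact Complex.mul_cpow_ofReal_nonneg (a := 2) (by norm_num) hc.le _
  have e2 : Complex.exp ((x : ℝ) * (((a : ℂ) + d) / 2)) * Complex.exp ((-x : ℝ) * (((a : ℂ) - d) / 2))
      = Complex.exp (d * x) := by
    rw [← Complex.exp_add]; congr 1; push_cast; ring
  have e3 : (2 : ℂ) ^ (1 - (a : ℂ)) = 2 * 2 ^ (-(a : ℂ)) := by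
    rw [sub_eq_add_neg, Complex.cpow_add _ _ two_ne_zero, Complex.cpow_one]
  rw [e3, ← e2]
  linear_combination 2 * Complex.exp ((x : ℝ) * (((a : ℂ) + d) / 2)) * Complex.exp ((-x : ℝ) * (((a : ℂ) - d) / 2)) * e1

lemma exp_int {a : ℝ} {d : ℂ} (ha : |d.re| < a) :
    Integrable fun x : ℝ => Complex.exp (d * x) * (0 + (Real.cosh x : ℂ)) ^ (-(a : ℂ)) := by
  have ha0 : 0 ≤ a := (abs_nonneg _).trans ha.le
  have hy : -(1/2) ≤ (0 : ℂ).re := by norm_num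
  refine Integrable.mono' ((aux_int_exp (b := a - |d.re|) (by linarith)).const_mul (4 ^ a)) ?_
    (ae_of_all _ fun x => ?_)
  · apply Continuous.aestronglyMeasurable
    refine Continuous.mul (by fun_prop) ?_
    refine Continuous.cpow ?_ continuous_const (fun x => aux_s_slit hy x)
    exact continuous_const.add (Complex.continuous_ofReal.comp Real.continuous_cosh)
  · rw [norm_mul]
    have h1 : ‖Complex.exp (d * x)‖ ≤ Real.exp (|d.re| * |x|) := by
      rw [Complex.norm_exp, ← aux_re_dx]; exact Real.exp_le_exp.2 (le_abs_self _)
    have h2 := aux_pow_norm hy x ha0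
    calc _ ≤ Real.exp (|d.re| * |x|) * (4 ^ a * Real.exp (-a * |x|)) := by gcongr
      _ = 4 ^ a * (Real.exp (|d.re| * |x|) * Real.exp (-a * |x|)) := by ring
      _ = _ := by rw [← Real.exp_add]; ring_nf

lemma II_zero {a : ℝ} {d : ℂ} (ha : |d.re| < a) :
    (2 : ℂ) ^ (1 - (a : ℂ)) * II d a 0 * Complex.Gamma a
      = Complex.Gamma ((a + d) / 2) * Complex.Gamma ((a - d) / 2) := by
  obtain ⟨h1, h2⟩ := abs_lt.1 ha
  rw [Complex.Gamma_mul_Gamma_eq_betaIntegral (by simp; linarith) (by simp; linarith),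
    show ((a : ℂ) + d) / 2 + (a - d) / 2 = a by ring, beta_int']
  have : II d a 0 = ∫ x : ℝ, Complex.exp (d * x) * (0 + (Real.cosh x : ℂ)) ^ (-(a : ℂ)) := by
    have i1 := exp_int ha
    have e := integral_neg_eq_self (fun x : ℝ => Complex.exp (d * x) * (0 + (Real.cosh x : ℂ)) ^ (-(a : ℂ))) volume
    have i2 := i1.comp_neg
    have : II d a 0 = ∫ x : ℝ, (1 / 2 : ℂ) * (Complex.exp (d * x) * (0 + (Real.cosh x : ℂ)) ^ (-(a : ℂ))
        + Complex.exp (d * (-x : ℝ)) * (0 + (Real.cosh (-x) : ℂ)) ^ (-(a : ℂ))) := by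
      unfold II FF
      congr 1
      ext x
      rw [Real.cosh_neg, Complex.cosh]
      push_cast
      rw [mul_neg]
      ring
    rw [this, integral_const_mul, integral_add i1 i2, e]
    ring
  rw [this]; ring

lemma II_zero_ne {a : ℝ} {d : ℂ} (ha : |d.re| < a) : II d a 0 ≠ 0 := by
  intro h
  have := II_zero ha
  rw [h] at this
  obtain ⟨h1, h2⟩ := abs_lt.1 ha
  have g1 := Complex.Gamma_ne_zero_of_re_pos (s := (a + d) / 2) (by simp; linarith)
  have g2 := Complex.Gamma_ne_zero_of_re_pos (s := (a - d) / 2) (by simp; linarith)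
  exact mul_ne_zero g1 g2 (by rw [← this]; ring)

lemma II_one_ne {a : ℝ} {d : ℂ} (ha : |d.re| < a) : II d a 1 ≠ 0 := by
  have h : II d a 1 = (2 : ℝ) • ((2 : ℂ) ^ (-(a : ℂ)) * II (2 * d) (2 * a) 0) := by
    unfold II
    have := Measure.integral_comp_div (fun x : ℝ => FF (2 * d) (2 * a) 0 x) 2
    rw [← integral_const_mul]
    have h2 := Measure.integral_comp_div (fun x : ℝ => (2:ℂ) ^ (-(a : ℂ)) * FF (2 * d) (2 * a) 0 x) 2
    rw [abs_of_pos (by norm_num)] at h2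
    rw [← h2]
    congr 1
    ext x
    unfold FF
    have hc := Real.cosh_pos (x / 2)
    have e : (1 : ℂ) + (Real.cosh x : ℂ) = ((2 : ℝ) : ℂ) * ((Real.cosh (x / 2) ^ 2 : ℝ) : ℂ) := by
      have h1 := Real.cosh_two_mul (x / 2)
      have h2 := Real.cosh_sq (x / 2)
      rw [show 2 * (x / 2) = x by ring] at h1
      exact_mod_cast (by rw [h1]; linarith : 1 + Real.cosh x = 2 * Real.cosh (x / 2) ^ 2)
    rw [e, Complex.mul_cpow_ofReal_nonneg (by norm_num) (by positivity)]
    have e2 : ((Real.cosh (x / 2) ^ 2 : ℝ) : ℂ) ^ (-(a : ℂ)) = (0 + (Real.cosh (x / 2) : ℂ)) ^ (-((2 * a : ℝ) : ℂ)) := by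
      have hc2 : ((Real.cosh (x / 2) : ℝ) : ℂ) ≠ 0 := by exact_mod_cast hc.ne'
      rw [zero_add, Complex.cpow_def_of_ne_zero hc2, Complex.cpow_def_of_ne_zero
        (by exact_mod_cast (by positivity : Real.cosh (x / 2) ^ 2 ≠ 0)), ← Complex.ofReal_log hc.le,
        ← Complex.ofReal_log (by positivity), Real.log_pow]
      congr 1
      push_cast
      ring
    rw [e2, show 2 * d * ((x / 2 : ℝ) : ℂ) = d * x by push_cast; ring]
    simp only [Complex.ofReal_ofNat]
    ring
  rw [h]
  refine smul_ne_zero two_ne_zero (mul_ne_zero ?_ (II_zero_ne ?_))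
  · rw [Complex.cpow_def_of_ne_zero two_ne_zero]; exact Complex.exp_ne_zero _
  · simp only [Complex.mul_re, Complex.re_ofNat, Complex.im_ofNat, zero_mul, sub_zero, abs_mul]
    norm_num
    exact ha

lemma exists_d {t : ℝ} (ht0 : 0 < t) (ht1 : t < 1) : ∃ d : ℂ, (conj d = d ∨ conj d = -d) ∧
    |d.re| < 1 / 6 ∧ Complex.cos (Real.pi * d) = (Real.sqrt 3 / (2 * t) : ℝ) := by
  have h3 : 0 < Real.sqrt 3 := by positivity
  have hpi := Real.pi_pos
  have hpi' : (Real.pi : ℂ) ≠ 0 := by exact_mod_cast hpi.ne'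
  have hs : Real.sqrt 3 / 2 < Real.sqrt 3 / (2 * t) := by
    apply div_lt_div_of_pos_left h3 (by positivity); linarith
  set s := Real.sqrt 3 / (2 * t) with hsdef
  have hs0 : 0 < s := by positivity
  rcases le_or_gt s 1 with h | h
  · refine ⟨((Real.arccos s / Real.pi : ℝ) : ℂ), Or.inl (Complex.conj_ofReal _), ?_, ?_⟩
    · rw [Complex.ofReal_re, abs_of_nonneg (div_nonneg (Real.arccos_nonneg _) hpi.le), div_lt_iff₀ hpi]
      have : Real.arccos s < Real.arccos (Real.sqrt 3 / 2) :=
        Real.arccos_lt_arccos (by linarith) hs h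
      rw [← Real.cos_pi_div_six, Real.arccos_cos (by positivity) (by linarith)] at this
      linarith
    · rw [← Complex.ofReal_mul, mul_div_cancel₀ _ hpi.ne', ← Complex.ofReal_cos,
        Real.cos_arccos (by linarith) h]
  · refine ⟨((Real.arcosh s / Real.pi : ℝ) : ℂ) * Complex.I, Or.inr ?_, ?_, ?_⟩
    · simp
    · simp
    · rw [← mul_assoc, ← Complex.ofReal_mul, mul_div_cancel₀ _ hpi.ne', Complex.cos_mul_I,
        ← Complex.ofReal_cosh, Real.cosh_arcosh h.le]

lemma gam_pair {a b : ℝ} {d : ℂ} (hab : a + b = 2) (ha : |d.re| < a) (hb : |d.re| < b) :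
    (II d a 0 * II d b 0) * (Complex.Gamma a * Complex.Gamma b) *
      (Complex.sin (Real.pi * ((a + d) / 2)) * Complex.sin (Real.pi * ((a - d) / 2))) = Real.pi ^ 2 := by
  have h1 := II_zero ha
  have h2 := II_zero hb
  have hbc : (b : ℂ) = 2 - a := by rw [← sub_eq_iff_eq_add'.2 hab.symm]; push_cast; ring
  have hp : (2 : ℂ) ^ (1 - (a : ℂ)) * 2 ^ (1 - (b : ℂ)) = 1 := by
    rw [← Complex.cpow_add _ _ two_ne_zero, hbc]; ring_nf; exact Complex.cpow_zero _
  have g1 := Complex.Gamma_mul_Gamma_one_sub ((a + d) / 2)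
  have g2 := Complex.Gamma_mul_Gamma_one_sub ((a - d) / 2)
  obtain ⟨l1, l2⟩ := abs_lt.1 ha
  obtain ⟨l3, l4⟩ := abs_lt.1 hb
  rw [show 1 - ((a : ℂ) + d) / 2 = (b - d) / 2 by rw [hbc]; ring] at g1
  rw [show 1 - ((a : ℂ) - d) / 2 = (b + d) / 2 by rw [hbc]; ring] at g2
  have n1 := Complex.Gamma_ne_zero_of_re_pos (s := (a + d) / 2) (by simp; linarith)
  have n2 := Complex.Gamma_ne_zero_of_re_pos (s := (a - d) / 2) (by simp; linarith)
  have n3 := Complex.Gamma_ne_zero_of_re_pos (s := (b + d) / 2) (by simp; linarith)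
  have n4 := Complex.Gamma_ne_zero_of_re_pos (s := (b - d) / 2) (by simp; linarith)
  have s1 : Complex.sin (Real.pi * ((a + d) / 2)) ≠ 0 := by
    intro h; rw [h, div_zero] at g1; exact mul_ne_zero n1 n4 g1
  have s2 : Complex.sin (Real.pi * ((a - d) / 2)) ≠ 0 := by
    intro h; rw [h, div_zero] at g2; exact mul_ne_zero n2 n3 g2
  rw [eq_div_iff s1] at g1
  rw [eq_div_iff s2] at g2
  calc _ = ((2 : ℂ) ^ (1 - (a : ℂ)) * 2 ^ (1 - (b : ℂ))) * ((II d a 0 * II d b 0) * (Complex.Gamma a * Complex.Gamma b) *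
      (Complex.sin (Real.pi * ((a + d) / 2)) * Complex.sin (Real.pi * ((a - d) / 2)))) := by
        rw [hp, one_mul]
    _ = ((2 : ℂ) ^ (1 - (a : ℂ)) * II d a 0 * Complex.Gamma a) * ((2 : ℂ) ^ (1 - (b : ℂ)) * II d b 0 * Complex.Gamma b) *
      (Complex.sin (Real.pi * ((a + d) / 2)) * Complex.sin (Real.pi * ((a - d) / 2))) := by ring
    _ = _ := by
      rw [h1, h2]
      linear_combination (Complex.Gamma ((↑a - d) / 2) * Complex.Gamma ((↑b + d) / 2) * Complex.sin (↑Real.pi * ((↑a - d) / 2))) * g1 + Real.pi * g2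

lemma sin_pair (a : ℝ) (d : ℂ) :
    Complex.sin (Real.pi * ((a + d) / 2)) * Complex.sin (Real.pi * ((a - d) / 2)) =
      (Complex.cos (Real.pi * d) - (Real.cos (Real.pi * a) : ℂ)) / 2 := by
  have h1 : (Real.pi : ℂ) * d = Real.pi * ((a + d) / 2) - Real.pi * ((a - d) / 2) := by ring
  have h2 : (Real.pi : ℂ) * a = Real.pi * ((a + d) / 2) + Real.pi * ((a - d) / 2) := by ring
  push_cast
  rw [h1, h2, Complex.cos_sub, Complex.cos_add]
  ring

lemma init_cond {t : ℝ} (ht0 : 0 < t) {d : ℂ} (hd : |d.re| < 1 / 6)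
    (hcos : Complex.cos (Real.pi * d) = (Real.sqrt 3 / (2 * t) : ℝ)) :
    (1 + t) * ((1 / 6 : ℂ) * II d (1 / 6 + 1) 0 * II d (5 / 6) 0) =
      (1 - t) * ((5 / 6 : ℂ) * II d (5 / 6 + 1) 0 * II d (1 / 6) 0) := by
  have A := gam_pair (a := 5 / 6) (b := 1 / 6 + 1) (d := d) (by norm_num) (by linarith) (by linarith)
  have B := gam_pair (a := 1 / 6) (b := 5 / 6 + 1) (d := d) (by norm_num) (by linarith) (by linarith)
  have c1 : Real.cos (Real.pi * (1 / 6)) = Real.sqrt 3 / 2 := by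
    rw [← Real.cos_pi_div_six]; ring_nf
  have c5 : Real.cos (Real.pi * (5 / 6)) = - (Real.sqrt 3 / 2) := by
    rw [← Real.cos_pi_div_six, ← Real.cos_pi_sub]; ring_nf
  rw [sin_pair, hcos, c5] at A
  rw [sin_pair, hcos, c1] at B
  have gA : Complex.Gamma ((1 / 6 + 1 : ℝ) : ℂ) = (1 / 6) * Complex.Gamma ((1 / 6 : ℝ) : ℂ) := by
    have := Complex.Gamma_add_one ((1 / 6 : ℝ) : ℂ) (by norm_num)
    push_cast at this ⊢
    exact this
  have gB : Complex.Gamma ((5 / 6 + 1 : ℝ) : ℂ) = (5 / 6) * Complex.Gamma ((5 / 6 : ℝ) : ℂ) := by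
    have := Complex.Gamma_add_one ((5 / 6 : ℝ) : ℂ) (by norm_num)
    push_cast at this ⊢
    exact this
  rw [gA] at A
  rw [gB] at B
  have n1 := Complex.Gamma_ne_zero_of_re_pos (s := ((1 / 6 : ℝ) : ℂ)) (by rw [Complex.ofReal_re]; norm_num)
  have n5 := Complex.Gamma_ne_zero_of_re_pos (s := ((5 / 6 : ℝ) : ℂ)) (by rw [Complex.ofReal_re]; norm_num)
  generalize Complex.Gamma ((1 / 6 : ℝ) : ℂ) = g1 at *
  generalize Complex.Gamma ((5 / 6 : ℝ) : ℂ) = g5 at *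
  have ht : (t : ℂ) ≠ 0 := by exact_mod_cast ht0.ne'
  have hs : ((Real.sqrt 3 : ℝ) : ℂ) ≠ 0 := by exact_mod_cast (by positivity : Real.sqrt 3 ≠ 0)
  push_cast at A B
  generalize ((Real.sqrt 3 : ℝ) : ℂ) = q at *
  have hn : g1 * g5 * (q / (4 * t)) ≠ 0 := by
    refine mul_ne_zero (mul_ne_zero n1 n5) (div_ne_zero hs (mul_ne_zero (by norm_num) ht))
  apply mul_left_cancel₀ hn
  have E := A.trans B.symm
  have k1 : (q / (2 * (t : ℂ)) - -(q / 2)) / 2 = (1 + t) * (q / (4 * t)) := by field_simp; ring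
  have k2 : (q / (2 * (t : ℂ)) - (q / 2)) / 2 = (1 - t) * (q / (4 * t)) := by field_simp; ring
  rw [k1, k2] at E
  linear_combination E

lemma axis_unique (κ : ℂ) (D E D' E' : ℝ → ℂ)
    (h1 : ∀ Y, HasDerivAt D (E Y) Y)
    (h2 : ∀ Y : ℝ, HasDerivAt E (-((4 / 3 : ℂ) * Y * E Y + κ * D Y) / (1 + (Y : ℂ) ^ 2)) Y)
    (h1' : ∀ Y, HasDerivAt D' (E' Y) Y)
    (h2' : ∀ Y : ℝ, HasDerivAt E' (-((4 / 3 : ℂ) * Y * E' Y + κ * D' Y) / (1 + (Y : ℂ) ^ 2)) Y)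
    (i1 : D 0 = D' 0) (i2 : E 0 = E' 0) : D = D' := by
  have key := ODE_solution_unique_univ
    (v := fun Y (p : ℂ × ℂ) => (p.2, -((4 / 3 : ℂ) * Y * p.2 + κ * p.1) / (1 + (Y : ℂ) ^ 2)))
    (s := fun _ => Set.univ) (K := 2 + ‖κ‖₊) (t₀ := 0) (f := fun Y => (D Y, E Y)) (g := fun Y => (D' Y, E' Y))
    ?_ (fun Y => ⟨(h1 Y).prodMk (h2 Y), trivial⟩) (fun Y => ⟨(h1' Y).prodMk (h2' Y), trivial⟩)
    (by simp only [i1, i2])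
  · funext Y
    exact congrArg Prod.fst (congrFun key Y)
  · intro Y
    refine LipschitzWith.lipschitzOnWith (LipschitzWith.of_dist_le_mul fun p q => ?_)
    rw [dist_eq_norm, dist_eq_norm]
    set N := ‖p - q‖ with hN
    have n1 : ‖p.1 - q.1‖ ≤ N := norm_fst_le (p - q)
    have n2 : ‖p.2 - q.2‖ ≤ N := norm_snd_le (p - q)
    have hN0 : 0 ≤ N := norm_nonneg _
    have hk : 0 ≤ ‖κ‖ := norm_nonneg _
    have hpos : (0 : ℝ) < 1 + Y ^ 2 := by positivity
    have hne : ‖(1 + (Y : ℂ) ^ 2)‖ = 1 + Y ^ 2 := by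
      rw [show (1 + (Y : ℂ) ^ 2) = ((1 + Y ^ 2 : ℝ) : ℂ) by push_cast; rfl, Complex.norm_of_nonneg hpos.le]
    have hY : |Y| ≤ 1 + Y ^ 2 := by
      have := sq_abs Y
      nlinarith [sq_nonneg (|Y| - 1), abs_nonneg Y]
    have hY2 : 1 ≤ 1 + Y ^ 2 := by nlinarith
    rw [Prod.norm_def]
    push_cast
    apply max_le
    · show ‖p.2 - q.2‖ ≤ _
      nlinarith
    · show ‖-((4 / 3 : ℂ) * Y * p.2 + κ * p.1) / (1 + (Y : ℂ) ^ 2) - -((4 / 3 : ℂ) * Y * q.2 + κ * q.1) / (1 + (Y : ℂ) ^ 2)‖ ≤ _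
      rw [← sub_div, norm_div, hne, div_le_iff₀ hpos]
      have e : -((4 / 3 : ℂ) * Y * p.2 + κ * p.1) - -((4 / 3 : ℂ) * Y * q.2 + κ * q.1)
          = -((4 / 3 : ℂ) * Y * (p.2 - q.2) + κ * (p.1 - q.1)) := by ring
      rw [e, norm_neg]
      refine (norm_add_le _ _).trans ?_
      rw [norm_mul, norm_mul, norm_mul, Complex.norm_real, Real.norm_eq_abs]
      have h43 : ‖(4 / 3 : ℂ)‖ = 4 / 3 := by norm_num
      rw [h43]
      have b1 : 4 / 3 * |Y| * ‖p.2 - q.2‖ ≤ 4 / 3 * (1 + Y ^ 2) * N := by gcongr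
      have b2 : ‖κ‖ * ‖p.1 - q.1‖ ≤ ‖κ‖ * N * (1 + Y ^ 2) := by
        calc _ ≤ ‖κ‖ * N := by gcongr
          _ ≤ _ := le_mul_of_one_le_right (by positivity) hY2
      have b3 : 0 ≤ (1 + Y ^ 2) * N := by positivity
      nlinarith

lemma II_axis_deriv {d : ℂ} {a : ℝ} (ha : |d.re| < a) (e : ℝ) (Y : ℝ) :
    HasDerivAt (fun Y : ℝ => II d a (e * Y * Complex.I))
      (-(a : ℂ) * (e * Complex.I) * II d (a + 1) (e * Y * Complex.I)) Y := by
  have h0 : HasDerivAt (fun Y : ℝ => (e : ℂ) * Y * Complex.I) (e * Complex.I) Y := by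
    have := ((Complex.ofRealCLM.hasDerivAt (x := Y)).const_mul (e : ℂ)).mul_const Complex.I
    simpa using this
  have h1 := II_hasDerivAt ha (y := (e : ℂ) * Y * Complex.I) (by
    simp)
  exact (HasDerivAt.comp (h₂ := II d a) Y h1 h0).congr_deriv (by ring)

noncomputable def sg (Y : ℝ) : ℝ := (1 + Y ^ 2) ^ (-(2 / 3) : ℝ)

lemma sg_cube (Y : ℝ) : sg Y ^ 3 * (1 + Y ^ 2) ^ 2 = 1 := by
  have hpos : (0 : ℝ) < 1 + Y ^ 2 := by positivity
  rw [sg, ← Real.rpow_natCast, ← Real.rpow_mul hpos.le, ← Real.rpow_natCast (1 + Y ^ 2) 2,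
    ← Real.rpow_add hpos]
  norm_num

lemma sg_deriv (Y : ℝ) : HasDerivAt (fun Y => (sg Y : ℂ)) (-(4 / 3 : ℂ) * Y * sg Y / (1 + (Y : ℂ) ^ 2)) Y := by
  have hpos : (0 : ℝ) < 1 + Y ^ 2 := by positivity
  have h0 : HasDerivAt (fun Y : ℝ => 1 + Y ^ 2) (2 * Y) Y := by
    simpa using (hasDerivAt_pow 2 Y).const_add 1
  have h1 := h0.rpow_const (p := -(2 / 3)) (Or.inl hpos.ne')
  have h2 : HasDerivAt sg (-(4 / 3) * Y * sg Y / (1 + Y ^ 2)) Y := by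
    refine h1.congr_deriv ?_
    rw [Real.rpow_sub hpos, Real.rpow_one, sg]
    ring
  refine h2.ofReal_comp.congr_deriv ?_
  push_cast
  rfl

lemma axis_identity {t : ℝ} (ht0 : 0 < t) {d : ℂ} (hd : |d.re| < 1 / 6)
    (hcos : Complex.cos (Real.pi * d) = (Real.sqrt 3 / (2 * t) : ℝ)) (Y : ℝ) :
    II d (1 / 6) (Y * Complex.I) - t * II d (1 / 6) (-(Y * Complex.I)) =
      ((1 - t) * II d (1 / 6) 0 / II d (5 / 6) 0) * ((1 + (Y : ℂ) ^ 2) * sg Y * II d (5 / 6) (Y * Complex.I)) := by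
  have hd5 : |d.re| < 5 / 6 := by linarith
  have hd7 : |d.re| < 1 / 6 + 1 := by linarith
  have hd11 : |d.re| < 5 / 6 + 1 := by linarith
  have hW0 := II_zero_ne hd5
  have hin := init_cond ht0 hd hcos
  set c : ℂ := (1 - t) * II d (1 / 6) 0 / II d (5 / 6) 0 with hc
  have hI : Complex.I ^ 2 = -1 := Complex.I_sq
  have key := axis_unique (1 / 36 - d ^ 2)
    (fun Y => II d (1 / 6) ((1 : ℝ) * Y * Complex.I) - t * II d (1 / 6) ((-1 : ℝ) * Y * Complex.I))
    (fun Y => -(Complex.I / 6) * (II d (1 / 6 + 1) ((1 : ℝ) * Y * Complex.I) + t * II d (1 / 6 + 1) ((-1 : ℝ) * Y * Complex.I)))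
    (fun Y => c * ((1 + (Y : ℂ) ^ 2) * sg Y * II d (5 / 6) ((1 : ℝ) * Y * Complex.I)))
    (fun Y => c * ((2 / 3 : ℂ) * Y * sg Y * II d (5 / 6) ((1 : ℝ) * Y * Complex.I) +
      (1 + (Y : ℂ) ^ 2) * sg Y * (-(5 / 6 : ℂ) * Complex.I * II d (5 / 6 + 1) ((1 : ℝ) * Y * Complex.I))))
    ?_ ?_ ?_ ?_ ?_ ?_
  · have := congrFun key Y
    simpa using this
  · intro Y
    refine ((II_axis_deriv hd 1 Y).sub ((II_axis_deriv hd (-1) Y).const_mul (t : ℂ))).congr_deriv ?_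
    push_cast
    ring
  · intro Y
    refine (((II_axis_deriv hd7 1 Y).add ((II_axis_deriv hd7 (-1) Y).const_mul (t : ℂ))).const_mul (-(Complex.I / 6))).congr_deriv ?_
    have hpos : (1 + (Y : ℂ) ^ 2) ≠ 0 := by
      exact_mod_cast (by positivity : (1 + Y ^ 2 : ℝ) ≠ 0)
    rw [eq_div_iff hpos]
    have r1 := II_rec hd (y := ((1 : ℝ) : ℂ) * Y * Complex.I) (by simp)
    have r2 := II_rec hd (y := ((-1 : ℝ) : ℂ) * Y * Complex.I) (by simp)
    generalize II d (1 / 6) (((1 : ℝ) : ℂ) * Y * Complex.I) = A0 at *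
    generalize II d (1 / 6 + 1) (((1 : ℝ) : ℂ) * Y * Complex.I) = A1 at *
    generalize II d (1 / 6 + 1 + 1) (((1 : ℝ) : ℂ) * Y * Complex.I) = A2 at *
    generalize II d (1 / 6) (((-1 : ℝ) : ℂ) * Y * Complex.I) = B0 at *
    generalize II d (1 / 6 + 1) (((-1 : ℝ) : ℂ) * Y * Complex.I) = B1 at *
    generalize II d (1 / 6 + 1 + 1) (((-1 : ℝ) : ℂ) * Y * Complex.I) = B2 at *
    push_cast at r1 r2 ⊢
    simp only [mul_pow, hI] at r1 r2
    ring_nf at r1 r2 ⊢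
    simp only [hI] at r1 r2 ⊢
    linear_combination -r1 + t * r2
  · intro Y
    have hq : HasDerivAt (fun Y : ℝ => 1 + (Y : ℂ) ^ 2) (2 * (Y : ℂ)) Y := by
      have := ((hasDerivAt_pow 2 Y).ofReal_comp).const_add (1 : ℂ)
      simpa using this
    have hpos : (1 + (Y : ℂ) ^ 2) ≠ 0 := by
      exact_mod_cast (by positivity : (1 + Y ^ 2 : ℝ) ≠ 0)
    refine (((hq.mul (sg_deriv Y)).mul (II_axis_deriv hd5 1 Y)).const_mul c).congr_deriv ?_
    push_cast
    simp only [Pi.mul_apply]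
    field_simp
    ring
  · intro Y
    have hq : HasDerivAt (fun Y : ℝ => 1 + (Y : ℂ) ^ 2) (2 * (Y : ℂ)) Y := by
      have := ((hasDerivAt_pow 2 Y).ofReal_comp).const_add (1 : ℂ)
      simpa using this
    have hl : HasDerivAt (fun Y : ℝ => (2 / 3 : ℂ) * Y) (2 / 3) Y := by
      have := (Complex.ofRealCLM.hasDerivAt (x := Y)).const_mul (2 / 3 : ℂ)
      simpa using this
    have hpos : (1 + (Y : ℂ) ^ 2) ≠ 0 := by
      exact_mod_cast (by positivity : (1 + Y ^ 2 : ℝ) ≠ 0)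
    refine ((((hl.mul (sg_deriv Y)).mul (II_axis_deriv hd5 1 Y)).add
      ((hq.mul (sg_deriv Y)).mul ((II_axis_deriv hd11 1 Y).const_mul (-(5 / 6 : ℂ) * Complex.I)))).const_mul c).congr_deriv ?_
    have r1 := II_rec hd5 (y := ((1 : ℝ) : ℂ) * Y * Complex.I) (by simp)
    simp only [Pi.mul_apply]
    generalize II d (5 / 6) (((1 : ℝ) : ℂ) * Y * Complex.I) = A0 at *
    generalize II d (5 / 6 + 1) (((1 : ℝ) : ℂ) * Y * Complex.I) = A1 at *
    generalize II d (5 / 6 + 1 + 1) (((1 : ℝ) : ℂ) * Y * Complex.I) = A2 at *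
    generalize (sg Y : ℂ) = σ at *
    push_cast at r1 ⊢
    simp only [mul_pow, hI] at r1
    rw [eq_div_iff hpos]
    have hinv : (1 + (Y : ℂ) ^ 2) * (1 + (Y : ℂ) ^ 2)⁻¹ = 1 := mul_inv_cancel₀ hpos
    simp only [div_eq_mul_inv] at *
    generalize (1 + (Y : ℂ) ^ 2)⁻¹ = v at *
    linear_combination (-c * σ * (1 + (Y : ℂ) ^ 2)) * r1 +
      (-(8 / 9 : ℂ) * c * Y ^ 2 * σ * A0 + (10 / 9 : ℂ) * c * Complex.I * Y * σ * A1 * (1 + (Y : ℂ) ^ 2)) * hinv +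
      (55 / 36 : ℂ) * c * (1 + (Y : ℂ) ^ 2) ^ 2 * σ * A2 * hI
  · simp only [sg]
    simp [hc, hW0]
    field_simp
    try ring
  · simp only [sg]
    simp [hc, -one_div]
    generalize II d (1 / 6 + 1) 0 = x1 at *
    generalize II d (5 / 6 + 1) 0 = x2 at *
    field_simp
    linear_combination 6 * hin

lemma poly_decomp {t : ℂ} (ht : t ≠ 0) (p : MvPolynomial (Fin 2) ℂ) :
    ∃ a0 a1 a2 : ℂ × ℂ → ℂ, Differentiable ℂ a0 ∧ Differentiable ℂ a1 ∧ Differentiable ℂ a2 ∧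
      ∀ z u : ℂ, MvPolynomial.eval (fun i => if i = 0 then z else (u - z) / t) p =
        a0 (z, u ^ 3) + u * a1 (z, u ^ 3) + u ^ 2 * a2 (z, u ^ 3) := by
  induction p using MvPolynomial.induction_on with
  | C c =>
    exact ⟨fun _ => c, fun _ => 0, fun _ => 0, by fun_prop, by fun_prop, by fun_prop, by simp⟩
  | add p q hp hq =>
    obtain ⟨a0, a1, a2, h0, h1, h2, h⟩ := hp
    obtain ⟨b0, b1, b2, g0, g1, g2, g⟩ := hq
    refine ⟨fun x => a0 x + b0 x, fun x => a1 x + b1 x, fun x => a2 x + b2 x,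
      by fun_prop, by fun_prop, by fun_prop, fun z u => ?_⟩
    rw [map_add, h, g]
    ring
  | mul_X p i hp =>
    obtain ⟨a0, a1, a2, h0, h1, h2, h⟩ := hp
    fin_cases i
    · refine ⟨fun x => a0 x * x.1, fun x => a1 x * x.1, fun x => a2 x * x.1,
        by fun_prop, by fun_prop, by fun_prop, fun z u => ?_⟩
      rw [map_mul, h]
      simp
      ring
    · refine ⟨fun x => (x.2 * a2 x - x.1 * a0 x) * t⁻¹, fun x => (a0 x - x.1 * a1 x) * t⁻¹,
        fun x => (a1 x - x.1 * a2 x) * t⁻¹,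
        by fun_prop, by fun_prop, by fun_prop, fun z u => ?_⟩
      rw [map_mul, h]
      simp
      field_simp
      ring

lemma K_bdd (S : Set (ℂ × ℂ)) (r : ℝ) (p : MvPolynomial (Fin 2) ℂ) :
    BddAbove ((fun w : ℂ × ℂ =>
          ‖MvPolynomial.eval (fun i => if i = 0 then w.1 else w.2) p‖) '' (S ∩ eClosedBall r)) := by
  have hc : Continuous (fun w : ℂ × ℂ => ‖MvPolynomial.eval (fun i => if i = 0 then w.1 else w.2) p‖) := by
    refine continuous_norm.comp ((MvPolynomial.continuous_eval p).comp (continuous_pi fun i => ?_))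
    by_cases h : i = 0 <;> simp only [h, if_true, if_false] <;> fun_prop
  refine ((isCompact_closedBall (0 : ℂ × ℂ) |r|).bddAbove_image hc.continuousOn).mono
    (Set.image_mono ?_)
  rintro w ⟨-, hw⟩
  rw [mem_closedBall_zero_iff, Prod.norm_def]
  have hw' : ‖w.1‖ ^ 2 + ‖w.2‖ ^ 2 ≤ r ^ 2 := hw
  apply max_le
  · have h := sq_le_sq.1 (show ‖w.1‖ ^ 2 ≤ r ^ 2 by nlinarith [sq_nonneg ‖w.2‖])
    rwa [abs_norm] at h
  · have h := sq_le_sq.1 (show ‖w.2‖ ^ 2 ≤ r ^ 2 by nlinarith [sq_nonneg ‖w.1‖])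
    rwa [abs_norm] at h

lemma mem_K {t r : ℝ} (ht0 : 0 < t) (ht1 : t < 1) {Z ζ w : ℂ} (hr : ‖Z‖ * (1 + 3 / t) ≤ r)
    (hζ : ζ = 1 ∨ ζ = (-1 + Complex.I * (Real.sqrt 3 : ℂ)) / 2 ∨ ζ = (-1 - Complex.I * (Real.sqrt 3 : ℂ)) / 2)
    (hζn : ‖ζ‖ = 1)
    (hw : w = (ζ * (Z + t * conj Z) - Z) / t) :
    (Z, w) ∈ (P0 ∪ P1 t ∪ P2 t) ∩ eClosedBall r := by
  have ht : (t : ℂ) ≠ 0 := by exact_mod_cast ht0.ne'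
  have h3 : ((Real.sqrt 3 : ℝ) : ℂ) ^ 2 = 3 := by
    exact_mod_cast (Real.sq_sqrt (by norm_num : (0:ℝ) ≤ 3))
  constructor
  · rcases hζ with h | h | h
    · refine Or.inl (Or.inl ?_)
      simp only [P0, Set.mem_ofPred_eq]
      rw [hw, h]; field_simp; ring
    · refine Or.inl (Or.inr ?_)
      simp only [P1, Set.mem_ofPred_eq]
      rw [hw, h]; field_simp
      linear_combination Z * h3
    · refine Or.inr ?_
      simp only [P2, Set.mem_ofPred_eq]
      rw [hw, h]; field_simp
      linear_combination Z * h3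
  · show ‖Z‖ ^ 2 + ‖w‖ ^ 2 ≤ r ^ 2
    have hwn : ‖w‖ ≤ 3 / t * ‖Z‖ := by
      rw [hw, norm_div, Complex.norm_of_nonneg ht0.le, div_le_iff₀ ht0]
      have : 3 / t * ‖Z‖ * t = 3 * ‖Z‖ := by field_simp
      rw [this]
      refine (norm_sub_le _ _).trans ?_
      rw [norm_mul, hζn, one_mul]
      have h1 := norm_add_le Z (t * conj Z)
      rw [norm_mul, Complex.norm_of_nonneg ht0.le, Complex.norm_conj] at h1
      have := norm_nonneg Z
      nlinarith
    have h0 : 0 ≤ ‖Z‖ := norm_nonneg _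
    have h0' : 0 ≤ ‖w‖ := norm_nonneg _
    have : ‖Z‖ + ‖w‖ ≤ r := by linarith
    nlinarith

lemma hull_of_disc {t r : ℝ} (ht0 : 0 < t) (ht1 : t < 1) {Z h : ℂ → ℂ}
    (hZ : ∀ y : ℂ, -(1/2) < y.re → DifferentiableAt ℂ Z y)
    (hh : ∀ y : ℂ, -(1/2) < y.re → DifferentiableAt ℂ h y)
    {R : ℝ} (hZR : ∀ y : ℂ, 0 ≤ y.re → ‖Z y‖ ≤ R) (hhR : ∀ y : ℂ, 0 ≤ y.re → ‖h y‖ ≤ R)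
    (hax : ∀ Y : ℝ, (Z (Y * Complex.I) + t * conj (Z (Y * Complex.I))) ^ 3 = h (Y * Complex.I))
    (hball : ∀ Y : ℝ, ‖Z (Y * Complex.I)‖ * (1 + 3 / t) ≤ r) (h1 : h 1 = 0) :
    (Z 1, -Z 1 / t) ∈ polyHull2 ((P0 ∪ P1 t ∪ P2 t) ∩ eClosedBall r) := by
  intro p
  have ht : (t : ℂ) ≠ 0 := by exact_mod_cast ht0.ne'
  obtain ⟨a0, a1, a2, d0, -, -, hp⟩ := poly_decomp ht p
  set S := sSup ((fun w : ℂ × ℂ =>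
          ‖MvPolynomial.eval (fun i => if i = 0 then w.1 else w.2) p‖) '' ((P0 ∪ P1 t ∪ P2 t) ∩ eClosedBall r)) with hS
  have hmem : ∀ Z w : ℂ, (Z, w) ∈ (P0 ∪ P1 t ∪ P2 t) ∩ eClosedBall r →
      ‖MvPolynomial.eval (fun i => if i = 0 then Z else w) p‖ ≤ S := fun Z w hz =>
    le_csSup (K_bdd _ r p) ⟨(Z, w), hz, rfl⟩
  have hgoal : MvPolynomial.eval (fun i => if i = 0 then (Z 1, -Z 1 / (t : ℂ)).1 else (Z 1, -Z 1 / (t : ℂ)).2) p = a0 (Z 1, h 1) := by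
    have := hp (Z 1) 0
    simp only [zero_sub] at this
    rw [h1]
    simpa using this
  rw [hgoal]
  have hbd : ∃ M : ℝ, ∀ y : ℂ, 0 ≤ y.re → ‖a0 (Z y, h y)‖ ≤ M := by
    obtain ⟨M, hM⟩ := (isCompact_closedBall (0 : ℂ × ℂ) R).exists_bound_of_continuousOn
      d0.continuous.continuousOn
    refine ⟨M, fun y hy => hM _ ?_⟩
    rw [mem_closedBall_zero_iff, Prod.norm_def]
    exact max_le (hZR y hy) (hhR y hy)
  obtain ⟨M, hM⟩ := hbd
  have hdf : ∀ y : ℂ, -(1/2) < y.re → DifferentiableAt ℂ (fun y => a0 (Z y, h y)) y := fun y hy =>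
    (d0 _).comp y ((hZ y hy).prodMk (hh y hy))
  refine PhragmenLindelof.right_half_plane_of_bounded_on_real (f := fun y => a0 (Z y, h y)) (C := S) (z := 1)
    ?_ ?_ ?_ ?_ (by norm_num)
  · refine ⟨fun y hy => (hdf y ?_).differentiableWithinAt, fun y hy => (hdf y ?_).continuousAt.continuousWithinAt⟩
    · have : 0 < y.re := hy
      linarith
    · rw [Complex.closure_setOfPred_lt_re] at hy
      have : 0 ≤ y.re := hy
      linarith
  · refine ⟨1, by norm_num, 0, ?_⟩
    simp only [zero_mul, Real.exp_zero]
    refine Asymptotics.IsBigO.of_bound M ?_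
    refine Filter.eventually_inf_principal.2 (Filter.Eventually.of_forall fun y hy => ?_)
    have : 0 < y.re := hy
    simpa using hM y this.le
  · refine ⟨M, ?_⟩
    rw [Filter.eventually_map]
    filter_upwards [Filter.eventually_ge_atTop 0] with x hx
    exact hM _ (by simpa using hx)
  · intro Y
    set z := Z (Y * Complex.I) with hz
    set U := z + t * conj z with hU
    have hax' : U ^ 3 = h (Y * Complex.I) := hax Y
    show ‖a0 (z, h (Y * Complex.I))‖ ≤ S
    rw [← hax']
    have h3 : ((Real.sqrt 3 : ℝ) : ℂ) ^ 2 = 3 := by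
      exact_mod_cast (Real.sq_sqrt (by norm_num : (0:ℝ) ≤ 3))
    have hI : Complex.I ^ 2 = -1 := Complex.I_sq
    obtain ⟨ζ, hζ⟩ : ∃ ζ : ℂ, ζ = (-1 + Complex.I * (Real.sqrt 3 : ℂ)) / 2 := ⟨_, rfl⟩
    obtain ⟨ξ, hξ⟩ : ∃ ξ : ℂ, ξ = (-1 - Complex.I * (Real.sqrt 3 : ℂ)) / 2 := ⟨_, rfl⟩
    have hsum : 1 + ζ + ξ = 0 := by rw [hζ, hξ]; ring
    have hprod : ζ * ξ = 1 := by
      rw [hζ, hξ]; linear_combination (-(Real.sqrt 3 : ℂ) ^ 2 / 4) * hI + (1 / 4) * h3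
    have hξ' : ξ = -1 - ζ := by linear_combination hsum
    have hq : ζ ^ 2 = -1 - ζ := by rw [hξ'] at hprod; linear_combination -hprod
    have hζ3 : ζ ^ 3 = 1 := by linear_combination (ζ - 1) * hq
    have hξ3 : ξ ^ 3 = 1 := by rw [hξ']; linear_combination (-2 - ζ) * hq
    have hn : ∀ w : ℂ, w ^ 3 = 1 → ‖w‖ = 1 := fun w hw => by
      have : ‖w‖ ^ 3 = 1 := by rw [← norm_pow, hw, norm_one]
      exact (pow_eq_one_iff_of_nonneg (norm_nonneg _) (by norm_num)).1 this
    have b0 := hmem z _ (mem_K ht0 ht1 (ζ := 1) (hball Y) (Or.inl rfl) (by simp) rfl)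
    have b1 := hmem z _ (mem_K ht0 ht1 (ζ := ζ) (hball Y) (Or.inr (Or.inl hζ)) (hn _ hζ3) rfl)
    have b2 := hmem z _ (mem_K ht0 ht1 (ζ := ξ) (hball Y) (Or.inr (Or.inr hξ)) (hn _ hξ3) rfl)
    rw [hp] at b0 b1 b2
    simp only [mul_pow, hζ3, hξ3, one_mul, one_pow] at b0 b1 b2
    rw [← hU] at b0 b1 b2
    have hs : 3 * a0 (z, U ^ 3) = (a0 (z, U ^ 3) + U * a1 (z, U ^ 3) + U ^ 2 * a2 (z, U ^ 3))
        + (a0 (z, U ^ 3) + ζ * U * a1 (z, U ^ 3) + ζ ^ 2 * U ^ 2 * a2 (z, U ^ 3))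
        + (a0 (z, U ^ 3) + ξ * U * a1 (z, U ^ 3) + ξ ^ 2 * U ^ 2 * a2 (z, U ^ 3)) := by
      rw [hξ']
      linear_combination (-2 * U ^ 2 * a2 (z, U ^ 3)) * hq
    have := norm_add₃_le (a := (a0 (z, U ^ 3) + U * a1 (z, U ^ 3) + U ^ 2 * a2 (z, U ^ 3)))
      (b := (a0 (z, U ^ 3) + ζ * U * a1 (z, U ^ 3) + ζ ^ 2 * U ^ 2 * a2 (z, U ^ 3)))
      (c := (a0 (z, U ^ 3) + ξ * U * a1 (z, U ^ 3) + ξ ^ 2 * U ^ 2 * a2 (z, U ^ 3)))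
    rw [← hs, norm_mul] at this
    have h33 : ‖(3 : ℂ)‖ = 3 := by norm_num
    rw [h33] at this
    linarith

lemma not_mem_union {t : ℝ} (ht0 : 0 < t) (ht1 : t < 1) {z : ℂ} (hz : z ≠ 0) :
    (z, -z / (t : ℂ)) ∉ P0 ∪ P1 t ∪ P2 t := by
  have ht : (t : ℂ) ≠ 0 := by exact_mod_cast ht0.ne'
  have h3 : ((Real.sqrt 3 : ℝ) : ℂ) ^ 2 = 3 := by
    exact_mod_cast (Real.sq_sqrt (by norm_num : (0:ℝ) ≤ 3))
  have hI : Complex.I ^ 2 = -1 := Complex.I_sq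
  have key : ¬ (z + t * conj z = 0) := by
    intro h
    have h1 : z = -(t * conj z) := by linear_combination h
    have h2 : ‖z‖ = t * ‖z‖ := by
      conv_lhs => rw [h1]
      rw [norm_neg, norm_mul, Complex.norm_of_nonneg ht0.le, Complex.norm_conj]
    have := norm_pos_iff.2 hz
    nlinarith
  rintro ((h | h) | h)
  · simp only [P0, Set.mem_ofPred_eq] at h
    rw [div_eq_iff ht] at h
    exact key (by linear_combination -h)
  · simp only [P1, Set.mem_ofPred_eq] at h
    field_simp at h
    have h' : (-1 + Complex.I * (Real.sqrt 3 : ℂ)) * (z + t * conj z) = 0 := by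
      linear_combination -h + z * h3
    rcases mul_eq_zero.1 h' with h0 | h0
    · have := congrArg Complex.re h0
      simp at this
    · exact key h0
  · simp only [P2, Set.mem_ofPred_eq] at h
    field_simp at h
    have h' : (-1 - Complex.I * (Real.sqrt 3 : ℂ)) * (z + t * conj z) = 0 := by
      linear_combination -h + z * h3
    rcases mul_eq_zero.1 h' with h0 | h0
    · have := congrArg Complex.re h0
      simp at this
    · exact key h0

lemma main_not {t : ℝ} (ht0 : 0 < t) (ht1 : t < 1) {r : ℝ} (hr : 0 < r) :
    ¬ PolyConvex2 ((P0 ∪ P1 t ∪ P2 t) ∩ eClosedBall r) := by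
  obtain ⟨d, hdc, hd, hcos⟩ := exists_d ht0 ht1
  have hd5 : |d.re| < 5 / 6 := by linarith
  obtain ⟨C1, hC1, hz⟩ := II_norm hd
  obtain ⟨C2, hC2, hw⟩ := II_norm hd5
  obtain ⟨C3, hC3, hw'⟩ := II_norm' (b := 2 / 3) hd (by norm_num)
  rw [show (1 / 6 + 2 / 3 : ℝ) = 5 / 6 by norm_num] at hw'
  set c : ℂ := (1 - t) * II d (1 / 6) 0 / II d (5 / 6) 0 with hc
  have hk : 0 < (C1 + 1) * (1 + 3 / t) := by positivity
  obtain ⟨l, hl, hlr⟩ : ∃ l : ℝ, 0 < l ∧ l * C1 * (1 + 3 / t) ≤ r := by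
    refine ⟨r / ((C1 + 1) * (1 + 3 / t)), by positivity, ?_⟩
    have : r / ((C1 + 1) * (1 + 3 / t)) * ((C1 + 1) * (1 + 3 / t)) = r := div_mul_cancel₀ _ hk.ne'
    have h2 : 0 ≤ r / ((C1 + 1) * (1 + 3 / t)) * (1 + 3 / t) := by positivity
    nlinarith
  have hI : Complex.I ^ 2 = -1 := Complex.I_sq
  have hlC : (l : ℂ) ≠ 0 := by exact_mod_cast hl.ne'
  have hZn : ∀ y : ℂ, 0 ≤ y.re → ‖(l : ℂ) * Complex.I * II d (1 / 6) y‖ ≤ l * C1 := by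
    intro y hy
    rw [norm_mul, norm_mul, Complex.norm_I, mul_one, Complex.norm_of_nonneg hl.le]
    have := hz y (by linarith)
    gcongr
  have hmem := hull_of_disc (r := r) ht0 ht1 (Z := fun y => (l : ℂ) * Complex.I * II d (1 / 6) y)
    (h := fun y => (-Complex.I * l ^ 3 * c ^ 3) * ((1 - y ^ 2) * II d (5 / 6) y ^ 3))
    (R := l * C1 + ‖-Complex.I * l ^ 3 * c ^ 3‖ * (C2 ^ 3 + C3 ^ 3)) ?_ ?_ ?_ ?_ ?_ ?_ ?_
  · intro hpc
    rw [hpc] at hmem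
    exact not_mem_union ht0 ht1 (mul_ne_zero (mul_ne_zero hlC Complex.I_ne_zero) (II_one_ne hd)) hmem.1
  · intro y hy
    exact (II_hasDerivAt hd hy).differentiableAt.const_mul _
  · intro y hy
    have := (II_hasDerivAt hd5 hy).differentiableAt
    fun_prop
  · intro y hy
    have := hZn y hy
    have : 0 ≤ ‖-Complex.I * l ^ 3 * c ^ 3‖ * (C2 ^ 3 + C3 ^ 3) := by positivity
    linarith
  · intro y hy
    rw [norm_mul]
    have hb : ‖(1 - y ^ 2) * II d (5 / 6) y ^ 3‖ ≤ C2 ^ 3 + C3 ^ 3 := by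
      rw [norm_mul, norm_pow]
      have e1 : ‖1 - y ^ 2‖ ≤ 1 + ‖y‖ ^ 2 := by
        refine (norm_sub_le _ _).trans ?_
        rw [norm_one, norm_pow]
      have e2 : ‖II d (5 / 6) y‖ ^ 3 ≤ C2 ^ 3 := by
        have := hw y (by linarith)
        gcongr
      have e3 : ‖y‖ ^ 2 * ‖II d (5 / 6) y‖ ^ 3 ≤ C3 ^ 3 := by
        by_cases h0 : y = 0
        · rw [h0]; simp; positivity
        · have h1 := hw' y hy h0
          have hp : 0 < ‖y‖ := norm_pos_iff.2 h0
          have h2 : ‖y‖ ^ 2 * (‖y‖ ^ (-(2 / 3) : ℝ)) ^ 3 = 1 := by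
            rw [← Real.rpow_natCast (‖y‖ ^ (-(2 / 3) : ℝ)) 3, ← Real.rpow_mul hp.le,
              ← Real.rpow_natCast ‖y‖ 2, ← Real.rpow_add hp]
            norm_num
          calc _ ≤ ‖y‖ ^ 2 * (C3 * ‖y‖ ^ (-(2 / 3) : ℝ)) ^ 3 := by gcongr
            _ = C3 ^ 3 * (‖y‖ ^ 2 * (‖y‖ ^ (-(2 / 3) : ℝ)) ^ 3) := by ring
            _ = _ := by rw [h2, mul_one]
      calc _ ≤ (1 + ‖y‖ ^ 2) * ‖II d (5 / 6) y‖ ^ 3 := by gcongr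
        _ = ‖II d (5 / 6) y‖ ^ 3 + ‖y‖ ^ 2 * ‖II d (5 / 6) y‖ ^ 3 := by ring
        _ ≤ _ := by linarith
    have h2 : ‖-Complex.I * l ^ 3 * c ^ 3‖ * ‖(1 - y ^ 2) * II d (5 / 6) y ^ 3‖
        ≤ ‖-Complex.I * l ^ 3 * c ^ 3‖ * (C2 ^ 3 + C3 ^ 3) := by gcongr
    have : 0 ≤ l * C1 := by positivity
    linarith
  · intro Y
    have hid := axis_identity ht0 hd hcos Y
    rw [← hc] at hid
    have hcj : conj (II d (1 / 6) (Y * Complex.I)) = II d (1 / 6) (-(Y * Complex.I)) := by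
      rw [II_conj hdc _ (by simp)]
      simp
    have e : (l : ℂ) * Complex.I * II d (1 / 6) (Y * Complex.I) + t * conj ((l : ℂ) * Complex.I * II d (1 / 6) (Y * Complex.I))
        = l * Complex.I * (c * ((1 + (Y : ℂ) ^ 2) * sg Y * II d (5 / 6) (Y * Complex.I))) := by
      rw [map_mul, map_mul, hcj, Complex.conj_ofReal, Complex.conj_I, ← hid]
      ring
    rw [e]
    have hs : (sg Y : ℂ) ^ 3 * (1 + (Y : ℂ) ^ 2) ^ 2 = 1 := by exact_mod_cast sg_cube Y
    have h3 : Complex.I ^ 3 = -Complex.I := by rw [pow_succ, hI]; ring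
    have e2 : (1 - ((Y : ℂ) * Complex.I) ^ 2) = 1 + (Y : ℂ) ^ 2 := by rw [mul_pow, hI]; ring
    rw [e2]
    simp only [mul_pow, h3]
    linear_combination (-Complex.I * l ^ 3 * c ^ 3 * (1 + (Y : ℂ) ^ 2) * II d (5 / 6) (Y * Complex.I) ^ 3) * hs
  · intro Y
    have := hZn (Y * Complex.I) (by simp)
    refine le_trans ?_ hlr
    gcongr
  · simp

theorem stmt_3 (t : ℝ) (ht0 : 0 < t) (ht1 : t < 1) :
    (∀ r > (0 : ℝ), ¬ PolyConvex2 ((P0 ∪ P1 t ∪ P2 t) ∩ eClosedBall r)) ∧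
      ¬ (∃ r > (0 : ℝ), PolyConvex2 ((P0 ∪ P1 t ∪ P2 t) ∩ eClosedBall r)) :=
  ⟨fun _ hr => main_not ht0 ht1 hr, fun ⟨_, hr, h⟩ => main_not ht0 ht1 hr h⟩
end
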